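/- arXiv:1802.04411 — 9 statements merged into one kernel-verified Lean document; each statement's English description precedes it below -/
import Mathlib

section
/- Let k ∈ ℕ, let n ∈ ℕ, and let f : C_n → ℝ have Fourier coefficients satisfying f̂(S) = 0 whenever |S| > k (i.e., f has degree at most k). Then ‖f‖₄ ≤ 3^{3k/2} ‖f‖₁. -/
open Finset MeasureTheory Real

noncomputable section

/-- Expectation on the Hamming cube `{-1,1}^n`, modeled as `Fin n → Bool`
(`true ↔ 1`, `false ↔ -1`), with the uniform probability measure. -/
def cubeE {n : ℕ} (f : (Fin n → Bool) → ℝ) : ℝ :=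
  (∑ x : Fin n → Bool, f x) / 2 ^ n

/-- The Walsh monomial `x^S = ∏_{i ∈ S} x_i`. -/
def walsh {n : ℕ} (S : Finset (Fin n)) (x : Fin n → Bool) : ℝ :=
  ∏ i ∈ S, (if x i then (1 : ℝ) else -1)

/-- Fourier coefficient `f̂(S) = E (f · x^S)`. -/
def cubeFourier {n : ℕ} (f : (Fin n → Bool) → ℝ) (S : Finset (Fin n)) : ℝ :=
  cubeE fun x => f x * walsh S x

/-- The heat semigroup `e^{tΔ} f = Σ_S e^{-t|S|} f̂(S) x^S`. -/
def heat1 {n : ℕ} (t : ℝ) (f : (Fin n → Bool) → ℝ) : (Fin n → Bool) → ℝ :=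
  fun x => ∑ S : Finset (Fin n), Real.exp (-t * (S.card : ℝ)) * cubeFourier f S * walsh S x

/-- The fractional heat semigroup `e^{tΔ_γ} f = Σ_S e^{-t|S|^γ} f̂(S) x^S`. -/
def heatFrac {n : ℕ} (γ t : ℝ) (f : (Fin n → Bool) → ℝ) : (Fin n → Bool) → ℝ :=
  fun x => ∑ S : Finset (Fin n), Real.exp (-t * (S.card : ℝ) ^ γ) * cubeFourier f S * walsh S x

/-- The Laplacian `Δf = -Σ_S |S| f̂(S) x^S`. -/
def lap {n : ℕ} (f : (Fin n → Bool) → ℝ) : (Fin n → Bool) → ℝ :=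
  fun x => -∑ S : Finset (Fin n), (S.card : ℝ) * cubeFourier f S * walsh S x

/-- The fractional Laplacian `Δ_γ f = -Σ_S |S|^γ f̂(S) x^S`. -/
def fracLap {n : ℕ} (γ : ℝ) (f : (Fin n → Bool) → ℝ) : (Fin n → Bool) → ℝ :=
  fun x => -∑ S : Finset (Fin n), (S.card : ℝ) ^ γ * cubeFourier f S * walsh S x

/-- The discrete partial derivative `∇_j f`. -/
def cubeGrad {n : ℕ} (j : Fin n) (f : (Fin n → Bool) → ℝ) (x : Fin n → Bool) : ℝ :=
  (f (Function.update x j true) - f (Function.update x j false)) / 2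

/-- The squared length of the discrete gradient, `|∇f|²(x) = Σ_j |∇_j f(x)|²`. -/
def gradSq {n : ℕ} (f : (Fin n → Bool) → ℝ) (x : Fin n → Bool) : ℝ :=
  ∑ j : Fin n, (cubeGrad j f x) ^ 2

/-- The `L^p` norm `‖f‖_p = (E|f|^p)^{1/p}` on the Hamming cube. -/
def pNorm {n : ℕ} (p : ℝ) (f : (Fin n → Bool) → ℝ) : ℝ :=
  (cubeE fun x => |f x| ^ p) ^ (1 / p)


lemma cubeE_succ {n : ℕ} (f : (Fin (n+1) → Bool) → ℝ) :
    cubeE f = (cubeE (fun y => f (Fin.cons true y)) + cubeE (fun y => f (Fin.cons false y))) / 2 := by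
  unfold cubeE
  rw [← (Fin.consEquiv (fun _ : Fin (n+1) => Bool)).sum_comp f, Fintype.sum_prod_type]
  simp only [Fintype.sum_bool, Fin.consEquiv, Equiv.coe_fn_mk]
  rw [pow_succ]
  ring

lemma cubeE_add {n : ℕ} (f g : (Fin n → Bool) → ℝ) :
    cubeE (fun x => f x + g x) = cubeE f + cubeE g := by
  unfold cubeE
  rw [Finset.sum_add_distrib]; ring

lemma cubeE_smul {n : ℕ} (c : ℝ) (f : (Fin n → Bool) → ℝ) :
    cubeE (fun x => c * f x) = c * cubeE f := by
  unfold cubeE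
  rw [← Finset.mul_sum]; ring

lemma cubeE_nonneg {n : ℕ} (f : (Fin n → Bool) → ℝ) (h : ∀ x, 0 ≤ f x) : 0 ≤ cubeE f := by
  unfold cubeE
  exact div_nonneg (Finset.sum_nonneg fun x _ => h x) (by positivity)

lemma cubeE_cs {n : ℕ} (f g : (Fin n → Bool) → ℝ) :
    (cubeE (fun x => f x * g x)) ^ 2 ≤ cubeE (fun x => f x ^ 2) * cubeE (fun x => g x ^ 2) := by
  unfold cubeE
  rw [div_pow, div_mul_div_comm, ← sq]
  gcongr
  exact Finset.sum_mul_sq_le_sq_mul_sq _ _ _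

def cubeG {n : ℕ} (f : (Fin (n+1) → Bool) → ℝ) : (Fin n → Bool) → ℝ :=
  fun y => (f (Fin.cons true y) + f (Fin.cons false y)) / 2

def cubeH {n : ℕ} (f : (Fin (n+1) → Bool) → ℝ) : (Fin n → Bool) → ℝ :=
  fun y => (f (Fin.cons true y) - f (Fin.cons false y)) / 2

lemma walsh_map {n : ℕ} (S : Finset (Fin n)) (b : Bool) (y : Fin n → Bool) :
    walsh (S.map (Fin.succEmb n)) (Fin.cons b y : Fin (n+1) → Bool) = walsh S y := by
  simp [walsh, Finset.prod_map]

lemma walsh_insert {n : ℕ} (S : Finset (Fin n)) (b : Bool) (y : Fin n → Bool) :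
    walsh (insert 0 (S.map (Fin.succEmb n))) (Fin.cons b y : Fin (n+1) → Bool)
      = (if b then (1:ℝ) else -1) * walsh S y := by
  rw [← walsh_map S b y]
  unfold walsh
  rw [Finset.prod_insert (by simp)]
  simp

lemma fourier_G {n : ℕ} (f : (Fin (n+1) → Bool) → ℝ) (S : Finset (Fin n)) :
    cubeFourier (cubeG f) S = cubeFourier f (S.map (Fin.succEmb n)) := by
  unfold cubeFourier
  rw [cubeE_succ, ← cubeE_add]
  simp only [walsh_map]
  rw [div_eq_inv_mul, ← cubeE_smul]
  congr 1; funext x; simp only [cubeG]; ring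

lemma fourier_H {n : ℕ} (f : (Fin (n+1) → Bool) → ℝ) (S : Finset (Fin n)) :
    cubeFourier (cubeH f) S = cubeFourier f (insert 0 (S.map (Fin.succEmb n))) := by
  unfold cubeFourier
  rw [cubeE_succ, ← cubeE_add]
  simp only [walsh_insert]
  rw [div_eq_inv_mul, ← cubeE_smul]
  congr 1; funext x; simp [cubeH]; ring

lemma deg_G {n m : ℕ} (f : (Fin (n+1) → Bool) → ℝ)
    (h : ∀ S : Finset (Fin (n+1)), m ≤ S.card → cubeFourier f S = 0) :
    ∀ S : Finset (Fin n), m ≤ S.card → cubeFourier (cubeG f) S = 0 := by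
  intro S hS
  rw [fourier_G]
  exact h _ (by simpa using hS)

lemma deg_H {n m : ℕ} (f : (Fin (n+1) → Bool) → ℝ)
    (h : ∀ S : Finset (Fin (n+1)), m ≤ S.card → cubeFourier f S = 0) :
    ∀ S : Finset (Fin n), m ≤ S.card + 1 → cubeFourier (cubeH f) S = 0 := by
  intro S hS
  rw [fourier_H]
  refine h _ ?_
  rw [Finset.card_insert_of_notMem (by simp), Finset.card_map]
  exact hS

lemma f_true {n : ℕ} (f : (Fin (n+1) → Bool) → ℝ) (y : Fin n → Bool) :
    f (Fin.cons true y) = cubeG f y + cubeH f y := by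
  simp only [cubeG, cubeH]; ring

lemma f_false {n : ℕ} (f : (Fin (n+1) → Bool) → ℝ) (y : Fin n → Bool) :
    f (Fin.cons false y) = cubeG f y - cubeH f y := by
  simp only [cubeG, cubeH]; ring

lemma deg_zero : ∀ (n : ℕ) (f : (Fin n → Bool) → ℝ)
    (_ : ∀ S : Finset (Fin n), cubeFourier f S = 0), ∀ x, f x = 0 := by
  intro n
  induction n with
  | zero =>
    intro f h x
    have := h ∅
    simp [cubeFourier, cubeE, walsh] at this
    rw [← this]; congr 1; exact Subsingleton.elim _ _
  | succ n ih =>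
    intro f h x
    have hG := ih (cubeG f) (fun S => by rw [fourier_G]; exact h _)
    have hH := ih (cubeH f) (fun S => by rw [fourier_H]; exact h _)
    rw [← Fin.cons_self_tail x]
    cases x 0
    · rw [f_false f, hG, hH]; simp
    · rw [f_true f, hG, hH]; simp

lemma bonami_alg (P a b X G H : ℝ) (hP : 0 ≤ P) (hG : 0 ≤ G) (hH : 0 ≤ H)
    (hb0 : 0 ≤ b)
    (ha : a ≤ 9 * P * G ^ 2) (hb : b ≤ P * H ^ 2) (hX : X ^ 2 ≤ a * b) :
    a + 6 * X + b ≤ 9 * P * (G + H) ^ 2 := by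
  have h1 : X ^ 2 ≤ (3 * P * G * H) ^ 2 := by
    calc X ^ 2 ≤ a * b := hX
      _ ≤ (9 * P * G ^ 2) * (P * H ^ 2) := by gcongr
      _ = _ := by ring
  have h2 : X ≤ 3 * P * G * H := abs_le_of_sq_le_sq' h1 (by positivity) |>.2
  have : 0 ≤ P * H ^ 2 := by positivity
  nlinarith

lemma bonami : ∀ (n k : ℕ) (f : (Fin n → Bool) → ℝ)
    (_ : ∀ S : Finset (Fin n), k + 1 ≤ S.card → cubeFourier f S = 0),
    cubeE (fun x => f x ^ 4) ≤ 9 ^ k * (cubeE (fun x => f x ^ 2)) ^ 2 := by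
  intro n
  induction n with
  | zero =>
    intro k f _
    simp only [cubeE, Finset.univ_unique, Finset.sum_singleton, pow_zero, div_one]
    rw [← pow_mul]
    have : (1:ℝ) ≤ 9 ^ k := one_le_pow₀ (by norm_num)
    norm_num
    exact le_mul_of_one_le_left (by positivity) this
  | succ n ih =>
    intro k f h
    have e4 : cubeE (fun x => f x ^ 4) = cubeE (fun y => cubeG f y ^ 4)
        + 6 * cubeE (fun y => cubeG f y ^ 2 * cubeH f y ^ 2) + cubeE (fun y => cubeH f y ^ 4) := by
      rw [cubeE_succ, ← cubeE_add, ← cubeE_smul, ← cubeE_add, ← cubeE_add, div_eq_inv_mul,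
        ← cubeE_smul]
      congr 1; funext y; rw [f_true f, f_false f]; ring
    have e2 : cubeE (fun x => f x ^ 2) = cubeE (fun y => cubeG f y ^ 2)
        + cubeE (fun y => cubeH f y ^ 2) := by
      rw [cubeE_succ, ← cubeE_add, ← cubeE_add, div_eq_inv_mul, ← cubeE_smul]
      congr 1; funext y; rw [f_true f, f_false f]; ring
    have hG := ih k (cubeG f) (deg_G f h)
    have hcs := cubeE_cs (fun y => cubeG f y ^ 2) (fun y => cubeH f y ^ 2)
    simp only [← pow_mul] at hcs
    norm_num at hcs
    rw [e4, e2]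
    have nG : 0 ≤ cubeE (fun y => cubeG f y ^ 2) := cubeE_nonneg _ fun _ => by positivity
    have nH : 0 ≤ cubeE (fun y => cubeH f y ^ 2) := cubeE_nonneg _ fun _ => by positivity
    have nb : 0 ≤ cubeE (fun y => cubeH f y ^ 4) := cubeE_nonneg _ fun _ => by positivity
    cases k with
    | zero =>
      have hz := deg_zero n (cubeH f) (fun S => deg_H f h S (by omega))
      have z : cubeE (fun _ : Fin n → Bool => (0:ℝ)) = 0 := by simp [cubeE]
      simp only [hz]
      norm_num [z]
      simpa using hG
    | succ k =>
      have hH := ih k (cubeH f) (fun S hS => deg_H f h S (by omega))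
      have := bonami_alg (9 ^ k) _ _ _ _ _ (by positivity) nG nH nb
        (by rw [pow_succ] at hG; linarith) hH hcs
      rw [pow_succ]; linarith

lemma final_alg (P A B C D : ℝ) (hP : 0 ≤ P) (hA : 0 ≤ A) (hB : 0 ≤ B) (hC : 0 ≤ C)
    (h1 : A ≤ P * B ^ 2) (h2 : B ^ 2 ≤ C * D) (h3 : D ^ 2 ≤ B * A) :
    A ≤ P ^ 3 * C ^ 4 := by
  rcases hA.eq_or_lt with rfl | hA
  · positivity
  have hB : 0 < B := by
    rcases hB.eq_or_lt with rfl | hB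
    · simp at h1; linarith
    · exact hB
  have h4 : B ^ 3 ≤ C ^ 2 * A := by
    have : B * B ^ 3 ≤ B * (C ^ 2 * A) := by
      calc B * B ^ 3 = (B ^ 2) ^ 2 := by ring
        _ ≤ (C * D) ^ 2 := by gcongr
        _ = C ^ 2 * D ^ 2 := by ring
        _ ≤ C ^ 2 * (B * A) := by gcongr
        _ = _ := by ring
    exact le_of_mul_le_mul_left this hB
  have : A ^ 2 * A ≤ A ^ 2 * (P ^ 3 * C ^ 4) := by
    calc A ^ 2 * A = A ^ 3 := by ring
      _ ≤ (P * B ^ 2) ^ 3 := by gcongr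
      _ = P ^ 3 * (B ^ 3) ^ 2 := by ring
      _ ≤ P ^ 3 * (C ^ 2 * A) ^ 2 := by gcongr
      _ = _ := by ring
  exact le_of_mul_le_mul_left this (by positivity)

/-- Consequence of the Bonami lemma: if `f : C_n → ℝ` has degree at most `k`
(i.e. `f̂(S) = 0` for `|S| > k`), then `‖f‖₄ ≤ 3^{3k/2} ‖f‖₁`. -/
theorem stmt9 (k n : ℕ) (f : (Fin n → Bool) → ℝ)
    (hband : ∀ S : Finset (Fin n), k < S.card → cubeFourier f S = 0) :
    pNorm 4 f ≤ (3 : ℝ) ^ (3 * (k : ℝ) / 2) * pNorm 1 f := by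
  have hb := bonami n k f hband
  have nA : 0 ≤ cubeE (fun y => f y ^ 4) := cubeE_nonneg _ fun _ => by positivity
  have nB : 0 ≤ cubeE (fun y => f y ^ 2) := cubeE_nonneg _ fun _ => by positivity
  have nC : 0 ≤ cubeE (fun y => |f y|) := cubeE_nonneg _ fun _ => by positivity
  have c1 : cubeE (fun y => f y ^ 2) ^ 2 ≤ cubeE (fun y => |f y|) * cubeE (fun y => |f y| ^ 3) := by
    have := cubeE_cs (fun y => √|f y|) (fun y => √|f y| ^ 3)
    convert this using 4 with y y y
    · rw [← sq_abs]
      nth_rewrite 1 [← Real.sq_sqrt (abs_nonneg (f y))]; ring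
    · rw [Real.sq_sqrt (abs_nonneg (f y))]
    · nth_rewrite 1 [← Real.sq_sqrt (abs_nonneg (f y))]; ring
  have c2 : cubeE (fun y => |f y| ^ 3) ^ 2 ≤ cubeE (fun y => f y ^ 2) * cubeE (fun y => f y ^ 4) := by
    have := cubeE_cs (fun y => |f y|) (fun y => f y ^ 2)
    convert this using 4 with y y y
    · rw [← sq_abs (f y)]; ring
    · rw [sq_abs]
    · ring
  have key := final_alg _ _ _ _ _ (by positivity) nA nB nC hb c1 c2
  have e4 : pNorm 4 f = (cubeE (fun y => f y ^ 4)) ^ (1 / 4 : ℝ) := by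
    unfold pNorm
    congr 2; funext y
    have : |f y| ^ (4:ℝ) = |f y| ^ (4:ℕ) := by exact_mod_cast Real.rpow_natCast |f y| 4
    rw [this]
    exact (by decide : Even 4).pow_abs _
  have e1 : pNorm 1 f = cubeE (fun y => |f y|) := by
    simp [pNorm]
  rw [e4, e1]
  have hR : ((3 : ℝ) ^ (3 * (k : ℝ) / 2)) ^ 4 = (9 ^ k) ^ 3 := by
    rw [← Real.rpow_natCast, ← Real.rpow_mul (by norm_num)]
    have : 3 * (k : ℝ) / 2 * ((4:ℕ):ℝ) = ((6 * k : ℕ) : ℝ) := by push_cast; ring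
    rw [this, Real.rpow_natCast, ← pow_mul, show (9:ℝ) = 3 ^ 2 by norm_num, ← pow_mul]
    congr 1; ring
  rw [← hR, ← mul_pow] at key
  calc _ ≤ ((((3 : ℝ) ^ (3 * (k : ℝ) / 2)) * cubeE (fun y => |f y|)) ^ 4) ^ (1 / 4 : ℝ) :=
        Real.rpow_le_rpow nA key (by norm_num)
    _ = _ := by
      rw [← Real.rpow_natCast, ← Real.rpow_mul (by positivity)]
      norm_num
end
end

section
/- For every γ with 0 < γ < 1 there exists a constant b_γ > 0, independent of n and k, such that the following holds: for every n ∈ ℕ, every k ≥ 1, and every f : C_n → ℝ whose Fourier coefficients satisfy f̂(∅) = 0 and f̂(S) = 0 whenever |S| > k, one has b_γ · k^{−γ} · 3^{−3k} · ‖f‖₁ ≤ E[(−Δ_γ f) · sgn(f) · 1_{f ≠ 0}] − E[|Δ_γ f| · 1_{f = 0}]. -/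
open Finset MeasureTheory Real

noncomputable section

/-- Fourier multiplier. -/
def fmult {n : ℕ} (a : ℕ → ℝ) (f : (Fin n → Bool) → ℝ) : (Fin n → Bool) → ℝ :=
  fun x => ∑ S : Finset (Fin n), a S.card * cubeFourier f S * walsh S x

/-- Unnormalised L1 norm. -/
def nrm {n : ℕ} (f : (Fin n → Bool) → ℝ) : ℝ := ∑ x, |f x|

/-- Signs. -/
def sg (b : Bool) : ℝ := if b then 1 else -1

lemma kernel_eq {n : ℕ} (ρ : ℝ) (x y : Fin n → Bool) :
    ∑ S : Finset (Fin n), ρ ^ S.card * walsh S x * walsh S y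
      = ∏ i, (1 + ρ * sg (x i) * sg (y i)) := by
  rw [Finset.prod_one_add, Finset.powerset_univ]
  refine Finset.sum_congr rfl fun S _ => ?_
  simp only [walsh, sg, Finset.prod_mul_distrib, Finset.prod_const]

lemma sum_kernel {n : ℕ} (ρ : ℝ) (y : Fin n → Bool) :
    ∑ x : Fin n → Bool, ∏ i, (1 + ρ * sg (x i) * sg (y i)) = 2 ^ n := by
  rw [← Fintype.prod_sum (fun i b => 1 + ρ * sg b * sg (y i))]
  rw [Finset.prod_congr rfl (g := fun _ => (2:ℝ))]
  · simp
  · intro i _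
    have h1 : sg true = 1 := rfl
    have h2 : sg false = -1 := rfl
    rw [Fintype.sum_bool, h1, h2]
    ring

lemma kernel_nonneg {n : ℕ} (ρ : ℝ) (h0 : 0 ≤ ρ) (h1 : ρ ≤ 1) (x y : Fin n → Bool) :
    0 ≤ ∏ i, (1 + ρ * sg (x i) * sg (y i)) := by
  refine Finset.prod_nonneg fun i _ => ?_
  unfold sg
  split_ifs <;> linarith

lemma fmult_kernel {n : ℕ} (ρ : ℝ) (f : (Fin n → Bool) → ℝ) (x : Fin n → Bool) :
    fmult (fun m => ρ ^ m) f x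
      = (∑ y, f y * ∏ i, (1 + ρ * sg (x i) * sg (y i))) / 2 ^ n := by
  simp only [← kernel_eq, fmult, cubeFourier, cubeE, Finset.mul_sum]
  rw [Finset.sum_comm, Finset.sum_div]
  refine Finset.sum_congr rfl fun S _ => ?_
  rw [mul_div_assoc', div_mul_eq_mul_div, Finset.mul_sum, Finset.sum_mul]
  congr 1
  refine Finset.sum_congr rfl fun y _ => ?_
  ring

lemma nrm_contr {n : ℕ} (ρ : ℝ) (h0 : 0 ≤ ρ) (h1 : ρ ≤ 1) (f : (Fin n → Bool) → ℝ) :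
    nrm (fmult (fun m => ρ ^ m) f) ≤ nrm f := by
  have hp : (0:ℝ) < 2 ^ n := by positivity
  unfold nrm
  calc ∑ x, |fmult (fun m => ρ ^ m) f x|
      ≤ ∑ x : Fin n → Bool, (∑ y : Fin n → Bool,
          |f y| * ∏ i, (1 + ρ * sg (x i) * sg (y i))) / 2 ^ n := by
        refine Finset.sum_le_sum fun x _ => ?_
        rw [fmult_kernel, abs_div, abs_of_pos hp]
        gcongr
        refine (Finset.abs_sum_le_sum_abs _ _).trans (le_of_eq ?_)
        refine Finset.sum_congr rfl fun y _ => ?_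
        rw [abs_mul, abs_of_nonneg (kernel_nonneg ρ h0 h1 x y)]
    _ = ∑ y, |f y| := by
        rw [← Finset.sum_div, Finset.sum_comm]
        simp only [← Finset.mul_sum, sum_kernel]
        rw [← Finset.sum_mul]
        field_simp

lemma fmult_one {n : ℕ} (f : (Fin n → Bool) → ℝ) : fmult (fun _ => 1) f = f := by
  funext x
  have h := fmult_kernel 1 f x
  simp only [one_pow] at h
  rw [h, Finset.sum_eq_single x]
  · have : ∏ i, (1 + 1 * sg (x i) * sg (x i)) = (2:ℝ) ^ n := by
      rw [Finset.prod_congr rfl (g := fun _ => (2:ℝ))]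
      · simp
      · intro i _
        unfold sg
        split_ifs <;> norm_num
    rw [this]
    field_simp
  · intro y _ hy
    obtain ⟨i, hi⟩ := Function.ne_iff.mp hy
    rw [Finset.prod_eq_zero (Finset.mem_univ i), mul_zero]
    revert hi
    unfold sg
    cases x i <;> cases y i <;> simp
  · simp

lemma walsh_eq {n : ℕ} (S : Finset (Fin n)) (x : Fin n → Bool) :
    walsh S x = ∏ i, (if i ∈ S then sg (x i) else 1) := by
  simp [walsh, sg, Finset.prod_ite_mem]

lemma walsh_orth {n : ℕ} (S T : Finset (Fin n)) :
    ∑ x, walsh S x * walsh T x = if S = T then 2 ^ n else 0 := by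
  simp only [walsh_eq, ← Finset.prod_mul_distrib]
  rw [← Fintype.prod_sum
    (fun i b => (if i ∈ S then sg b else 1) * (if i ∈ T then sg b else 1))]
  split_ifs with h
  · subst h
    rw [Finset.prod_congr rfl (g := fun _ => (2:ℝ))]
    · simp
    · intro i _
      by_cases h : i ∈ S <;> simp [h, sg] <;> norm_num
  · have : ∃ i, ¬ (i ∈ S ↔ i ∈ T) := by
      by_contra! hc
      exact h (Finset.ext hc)
    obtain ⟨i, hi⟩ := this
    apply Finset.prod_eq_zero (Finset.mem_univ i)
    by_cases h1 : i ∈ S <;> by_cases h2 : i ∈ T <;> simp_all [sg]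

lemma fourier_fmult {n : ℕ} (a : ℕ → ℝ) (f : (Fin n → Bool) → ℝ) (T : Finset (Fin n)) :
    cubeFourier (fmult a f) T = a T.card * cubeFourier f T := by
  rw [cubeFourier, cubeE]
  simp only [fmult, Finset.sum_mul]
  rw [Finset.sum_comm]
  have : ∀ S : Finset (Fin n), ∑ x, a S.card * cubeFourier f S * walsh S x * walsh T x
      = a S.card * cubeFourier f S * if S = T then 2 ^ n else 0 := by
    intro S
    rw [← walsh_orth, Finset.mul_sum]
    exact Finset.sum_congr rfl fun x _ => by ring
  simp [this]

lemma fmult_fmult {n : ℕ} (a b : ℕ → ℝ) (f : (Fin n → Bool) → ℝ) :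
    fmult a (fmult b f) = fmult (fun m => a m * b m) f := by
  funext x
  simp only [fmult, fourier_fmult]
  simp only [fmult, mul_assoc]

lemma fmult_lin {n : ℕ} (a b : ℕ → ℝ) (c : ℝ) (f : (Fin n → Bool) → ℝ) :
    fmult (fun m => a m - c * b m) f = fun x => fmult a f x - c * fmult b f x := by
  funext x
  simp only [fmult, Finset.mul_sum, ← Finset.sum_sub_distrib]
  exact Finset.sum_congr rfl fun S _ => by ring

lemma fmult_smul {n : ℕ} (b : ℕ → ℝ) (c : ℝ) (f : (Fin n → Bool) → ℝ) :
    fmult (fun m => c * b m) f = fun x => c * fmult b f x := by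
  funext x
  simp only [fmult, Finset.mul_sum]
  exact Finset.sum_congr rfl fun S _ => by ring

lemma fmult_congr {n : ℕ} (a b : ℕ → ℝ) (f : (Fin n → Bool) → ℝ)
    (h : ∀ S : Finset (Fin n), cubeFourier f S ≠ 0 → a S.card = b S.card) :
    fmult a f = fmult b f := by
  funext x
  refine Finset.sum_congr rfl fun S _ => ?_
  by_cases h0 : cubeFourier f S = 0
  · simp [h0]
  · rw [h S h0]

lemma fmult_sum {n : ℕ} (I : Finset ℕ) (a : ℕ → ℕ → ℝ) (f : (Fin n → Bool) → ℝ) :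
    fmult (fun m => ∑ j ∈ I, a j m) f = fun x => ∑ j ∈ I, fmult (a j) f x := by
  funext x
  simp only [fmult, Finset.sum_mul]
  rw [Finset.sum_comm]

lemma nrm_nonneg {n : ℕ} (f : (Fin n → Bool) → ℝ) : 0 ≤ nrm f :=
  Finset.sum_nonneg fun _ _ => abs_nonneg _

lemma nrm_smul {n : ℕ} (c : ℝ) (f : (Fin n → Bool) → ℝ) :
    nrm (fun x => c * f x) = |c| * nrm f := by
  simp [nrm, abs_mul, Finset.mul_sum]

lemma nrm_sub {n : ℕ} (f g : (Fin n → Bool) → ℝ) :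
    nrm (fun x => f x - g x) ≤ nrm f + nrm g := by
  simp only [nrm, ← Finset.sum_add_distrib]
  exact Finset.sum_le_sum fun x _ => abs_sub _ _

lemma nrm_sum {n : ℕ} (I : Finset ℕ) (F : ℕ → (Fin n → Bool) → ℝ) :
    nrm (fun x => ∑ j ∈ I, F j x) ≤ ∑ j ∈ I, nrm (F j) := by
  simp only [nrm]
  rw [Finset.sum_comm]
  exact Finset.sum_le_sum fun x _ => Finset.abs_sum_le_sum_abs _ _

/-- Indicator of a level. -/
def lev (j m : ℕ) : ℝ := if m = j then 1 else 0

lemma num_bound (k : ℕ) :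
    (1:ℝ) + (k + 1) * ((8:ℝ) ^ (k ^ 2) * (1 + 2 ^ (k + 1))) ≤ 8 ^ ((k + 1) ^ 2) := by
  have h1 : ((k:ℝ) + 1) + 1 ≤ 2 ^ (k+1) := by
    have : k + 1 + 1 ≤ 2 ^ (k+1) := Nat.lt_two_pow_self
    exact_mod_cast this
  have h2 : (1:ℝ) ≤ 8 ^ (k^2) := one_le_pow₀ (by norm_num)
  have h3 : (8:ℝ) ^ ((k+1)^2) = 8 ^ (k^2) * (8 * 64 ^ k) := by
    rw [show (64:ℝ) = 8 ^ 2 by norm_num, ← pow_mul, ← pow_succ', ← pow_add]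
    congr 1
    ring
  have h4 : (1:ℝ) ≤ 2 ^ k := one_le_pow₀ (by norm_num)
  have h5 : (2:ℝ) ^ k * 2 ^ k ≤ 64 ^ k := by
    rw [← mul_pow]
    gcongr
    norm_num
  rw [h3]
  rw [pow_succ (2:ℝ) k] at *
  set A := (8:ℝ) ^ (k^2)
  set t := (2:ℝ) ^ k
  have h6 : ((k:ℝ)+1) * (1 + t * 2) ≤ (t * 2 - 1) * (1 + t * 2) := by
    gcongr
    linarith
  have h7 : 1 + ((k:ℝ)+1) * (1 + t * 2) ≤ 8 * 64 ^ k := by nlinarith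
  calc 1 + ((k:ℝ)+1) * (A * (1 + t * 2)) ≤ A + ((k:ℝ)+1) * (A * (1 + t * 2)) := by gcongr
    _ = A * (1 + ((k:ℝ)+1) * (1 + t * 2)) := by ring
    _ ≤ _ := by gcongr

lemma lev_bound {n : ℕ} (k : ℕ) : ∀ (f : (Fin n → Bool) → ℝ),
    (∀ S : Finset (Fin n), k < S.card → cubeFourier f S = 0) → ∀ j,
    nrm (fmult (lev j) f) ≤ 8 ^ (k ^ 2) * nrm f := by
  have big : ∀ (k : ℕ) (f : (Fin n → Bool) → ℝ),
      (∀ S : Finset (Fin n), k < S.card → cubeFourier f S = 0) → ∀ j, k < j →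
      nrm (fmult (lev j) f) = 0 := by
    intro k f hf j hj
    have : fmult (lev j) f = fmult (fun m => 0 * lev j m) f := by
      apply fmult_congr
      intro S hS
      have : ¬ k < S.card := fun h => hS (hf S h)
      simp [lev]
      omega
    rw [this, fmult_smul, nrm_smul]
    simp
  induction k with
  | zero =>
    intro f hf j
    rcases Nat.eq_zero_or_pos j with rfl | hj
    · have : fmult (lev 0) f = f := by
        conv_rhs => rw [← fmult_one f]
        apply fmult_congr
        intro S hS
        have : ¬ 0 < S.card := fun h => hS (hf S h)
        simp [lev]
        simpa using this
      rw [this]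
      simp
    · rw [big 0 f hf j hj]
      have := nrm_nonneg f
      positivity
  | succ k ih =>
    intro f hf j
    have hN := nrm_nonneg f
    have small : ∀ j, j ≤ k →
        nrm (fmult (lev j) f) ≤ 8 ^ (k^2) * ((1 + 2 ^ (k+1)) * nrm f) := by
      intro j hj
      set g := fmult (fun m => 1 - 2 ^ (k+1) * (1/2:ℝ) ^ m) f with hg
      have hgN : nrm g ≤ (1 + 2 ^ (k+1)) * nrm f := by
        rw [hg, fmult_lin]
        refine (nrm_sub _ _).trans ?_
        rw [fmult_one, nrm_smul, abs_of_pos (by positivity)]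
        have := nrm_contr (1/2) (by norm_num) (by norm_num) f
        nlinarith [pow_pos (show (0:ℝ) < 2 by norm_num) (k+1)]
      have hgf : ∀ S : Finset (Fin n), k < S.card → cubeFourier g S = 0 := by
        intro S hS
        rw [hg, fourier_fmult]
        rcases Nat.eq_or_lt_of_le (Nat.succ_le_of_lt hS) with h | h
        · rw [← h]
          have : (2:ℝ) ^ (k+1) * (1/2) ^ (k+1) = 1 := by
            rw [← mul_pow]
            norm_num
          simp only [Nat.succ_eq_add_one, this]
          simp
        · rw [hf S h, mul_zero]
      have h1 := ih g hgf j
      have h2 : fmult (lev j) g = fun x => (1 - 2 ^ (k+1-j)) * fmult (lev j) f x := by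
        rw [hg, fmult_fmult, ← fmult_smul]
        apply fmult_congr
        intro S _
        unfold lev
        split_ifs with h
        · rw [h]
          have : (2:ℝ) ^ (k+1) = 2 ^ (k+1-j) * 2 ^ j := by
            rw [← pow_add]
            congr 1
            omega
          rw [this, mul_assoc, ← mul_pow]
          norm_num
        · simp
      rw [h2, nrm_smul] at h1
      have h3 : (1:ℝ) ≤ |1 - 2 ^ (k+1-j)| := by
        have : (2:ℝ) ≤ 2 ^ (k+1-j) := by
          calc (2:ℝ) = 2 ^ 1 := by norm_num
            _ ≤ _ := pow_le_pow_right₀ (by norm_num) (by omega)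
        rw [abs_of_nonpos (by linarith)]
        linarith
      calc nrm (fmult (lev j) f) ≤ |1 - 2 ^ (k+1-j)| * nrm (fmult (lev j) f) :=
            le_mul_of_one_le_left (nrm_nonneg _) h3
        _ ≤ _ := h1
        _ ≤ _ := by gcongr
    have nb := num_bound k
    rcases lt_trichotomy j (k+1) with h | h | h
    · refine (small j (by omega)).trans ?_
      rw [← mul_assoc]
      refine mul_le_mul_of_nonneg_right ?_ hN
      have : 0 ≤ (8:ℝ) ^ (k^2) * (1 + 2 ^ (k+1)) := by positivity
      have : 0 ≤ (k:ℝ) * ((8:ℝ) ^ (k^2) * (1 + 2 ^ (k+1))) := by positivity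
      linarith
    · subst h
      have : fmult (lev (k+1)) f
          = fun x => f x - ∑ j ∈ Finset.range (k+1), fmult (lev j) f x := by
        have e := fmult_sum (Finset.range (k+1)) lev f
        have e2 : fmult (lev (k+1)) f
            = fmult (fun m => 1 - 1 * ∑ j ∈ Finset.range (k+1), lev j m) f := by
          apply fmult_congr
          intro S hS
          have : ¬ k + 1 < S.card := fun h => hS (hf S h)
          simp only [lev, Finset.sum_ite_eq, Finset.mem_range]
          split_ifs <;> first | omega | simp
        rw [e2, fmult_lin, fmult_one]
        funext x
        rw [e, one_mul]
      rw [this]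
      refine (nrm_sub _ _).trans ?_
      have h1 := nrm_sum (Finset.range (k+1)) (fun j => fmult (lev j) f)
      have h2 : ∑ j ∈ Finset.range (k+1), nrm (fmult (lev j) f)
          ≤ ∑ j ∈ Finset.range (k+1), 8 ^ (k^2) * ((1 + 2 ^ (k+1)) * nrm f) := by
        refine Finset.sum_le_sum fun j hj => small j ?_
        have := Finset.mem_range.mp hj
        omega
      rw [Finset.sum_const, Finset.card_range, nsmul_eq_mul] at h2
      push_cast at h2
      have := mul_le_mul_of_nonneg_right nb hN
      linarith
    · rw [big (k+1) f hf j h]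
      positivity

lemma heat_decay {n : ℕ} (k : ℕ) (hk : 1 ≤ k) (f : (Fin n → Bool) → ℝ)
    (h0 : cubeFourier f ∅ = 0)
    (hf : ∀ S : Finset (Fin n), k < S.card → cubeFourier f S = 0)
    (s : ℝ) (hs : 3 * (k:ℝ) ^ 2 ≤ s) :
    nrm (fmult (fun m => Real.exp (-s) ^ m) f) ≤ 1/2 * nrm f := by
  have hs0 : 0 ≤ s := by nlinarith [sq_nonneg (k:ℝ)]
  have hN := nrm_nonneg f
  have e : fmult (fun m => Real.exp (-s) ^ m) f
      = fun x => ∑ j ∈ Finset.Icc 1 k, Real.exp (-s) ^ j * fmult (lev j) f x := by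
    have e1 := fmult_sum (Finset.Icc 1 k) (fun j m => Real.exp (-s) ^ j * lev j m) f
    simp only [fmult_smul] at e1
    rw [← e1]
    apply fmult_congr
    intro S hS
    have a1 : ¬ k < S.card := fun h => hS (hf S h)
    have a2 : S.card ≠ 0 := by
      intro h
      rw [Finset.card_eq_zero] at h
      exact hS (h ▸ h0)
    have a3 : 1 ≤ S.card ∧ S.card ≤ k := by omega
    simp [lev, a3]
  rw [e]
  refine (nrm_sum _ (fun j x => Real.exp (-s) ^ j * fmult (lev j) f x)).trans ?_
  have hle : Real.exp (-s) ≤ 1 := Real.exp_le_one_iff.mpr (by linarith)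
  have hb : ∀ j ∈ Finset.Icc 1 k, nrm (fun x => Real.exp (-s) ^ j * fmult (lev j) f x)
      ≤ Real.exp (-s) * (8 ^ (k^2) * nrm f) := by
    intro j hj
    rw [nrm_smul, abs_of_pos (by positivity)]
    have := lev_bound k f hf j
    have h1 : Real.exp (-s) ^ j ≤ Real.exp (-s) := by
      have := pow_le_pow_of_le_one (Real.exp_pos (-s)).le hle (Finset.mem_Icc.mp hj).1
      simpa using this
    have := nrm_nonneg (fmult (lev j) f)
    gcongr
  refine (Finset.sum_le_sum hb).trans ?_
  rw [Finset.sum_const, Nat.card_Icc, nsmul_eq_mul]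
  simp only [Nat.add_sub_cancel]
  have h16 : (16:ℝ) ^ (k^2) ≤ Real.exp s := by
    have h3 : (16:ℝ) ≤ Real.exp 3 := by
      have := Real.exp_one_gt_d9
      have h : Real.exp 3 = Real.exp 1 ^ 3 := by
        rw [← Real.exp_nat_mul]
        norm_num
      rw [h]
      calc (16:ℝ) ≤ 2.7 ^ 3 := by norm_num
        _ ≤ _ := by gcongr; linarith
    calc (16:ℝ) ^ (k^2) ≤ Real.exp 3 ^ (k^2) := by gcongr
      _ = Real.exp (3 * (k:ℝ)^2) := by
        rw [← Real.exp_nat_mul]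
        push_cast
        ring_nf
      _ ≤ _ := Real.exp_le_exp.mpr hs
  have h2k : 2 * (k:ℝ) ≤ 2 ^ (k^2) := by
    have a : 2 * k ≤ 2 ^ k := by
      obtain ⟨m, rfl⟩ := Nat.exists_eq_add_of_le' hk
      have : m + 1 ≤ 2 ^ m := Nat.lt_two_pow_self
      rw [pow_succ]
      omega
    have b : 2 ^ k ≤ 2 ^ (k^2) := Nat.pow_le_pow_right (by norm_num) (by nlinarith)
    exact_mod_cast a.trans b
  have hh : 2 * (k:ℝ) * 8 ^ (k^2) ≤ Real.exp s := by
    calc 2 * (k:ℝ) * 8 ^ (k^2) ≤ 2 ^ (k^2) * 8 ^ (k^2) := by gcongr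
      _ = 16 ^ (k^2) := by rw [← mul_pow]; norm_num
      _ ≤ _ := h16
  have hfin : (k:ℝ) * (Real.exp (-s) * 8 ^ (k^2)) ≤ 1/2 := by
    rw [Real.exp_neg]
    have := Real.exp_pos s
    rw [inv_mul_eq_div, mul_div_assoc', div_le_iff₀ this]
    linarith
  have := mul_le_mul_of_nonneg_right hfin hN
  linarith

lemma frac_integrable (γ : ℝ) (hγ0 : 0 < γ) (hγ1 : γ < 1) (a : ℝ) (ha : 0 ≤ a) :
    IntegrableOn (fun s : ℝ => (1 - Real.exp (-(a * s))) * s ^ (-1 - γ)) (Set.Ioi 0) := by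
  have hm : Measurable (fun s : ℝ => (1 - Real.exp (-(a * s))) * s ^ (-1 - γ)) := by
    fun_prop
  have hbd : ∀ s : ℝ, 0 < s → 0 ≤ 1 - Real.exp (-(a * s)) ∧ 1 - Real.exp (-(a * s)) ≤ 1 ∧
      1 - Real.exp (-(a * s)) ≤ a * s := by
    intro s hs
    have h1 : Real.exp (-(a * s)) ≤ 1 := Real.exp_le_one_iff.mpr (by nlinarith)
    have h2 := Real.add_one_le_exp (-(a * s))
    have h3 := Real.exp_pos (-(a * s))
    refine ⟨?_, ?_, ?_⟩ <;> linarith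
  rw [← Set.Ioc_union_Ioi_eq_Ioi (zero_le_one' ℝ)]
  refine IntegrableOn.union ?_ ?_
  · have h1 : IntegrableOn (fun s : ℝ => a * s ^ (-γ)) (Set.Ioc 0 1) := by
      have := (intervalIntegral.intervalIntegrable_rpow' (a := 0) (b := 1)
        (show -1 < -γ by linarith))
      rw [intervalIntegrable_iff_integrableOn_Ioc_of_le zero_le_one] at this
      exact this.const_mul a
    refine Integrable.mono' h1 hm.aestronglyMeasurable ?_
    filter_upwards [ae_restrict_mem measurableSet_Ioc] with s hs
    obtain ⟨b1, b2, b3⟩ := hbd s hs.1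
    have hw : 0 < s ^ (-1 - γ) := Real.rpow_pos_of_pos hs.1 _
    rw [Real.norm_of_nonneg (by positivity)]
    calc (1 - Real.exp (-(a * s))) * s ^ (-1 - γ) ≤ (a * s) * s ^ (-1 - γ) := by gcongr
      _ = a * s ^ (-γ) := by
        rw [mul_assoc]
        congr 1
        rw [← Real.rpow_one_add' hs.1.le (by linarith)]
        congr 1
        ring
  · have h1 : IntegrableOn (fun s : ℝ => s ^ (-1 - γ)) (Set.Ioi 1) :=
      integrableOn_Ioi_rpow_of_lt (by linarith) zero_lt_one
    refine Integrable.mono' h1 hm.aestronglyMeasurable ?_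
    filter_upwards [ae_restrict_mem measurableSet_Ioi] with s hs
    have hs0 : 0 < s := lt_trans zero_lt_one hs
    obtain ⟨b1, b2, b3⟩ := hbd s hs0
    have hw : 0 < s ^ (-1 - γ) := Real.rpow_pos_of_pos hs0 _
    rw [Real.norm_of_nonneg (by positivity)]
    calc (1 - Real.exp (-(a * s))) * s ^ (-1 - γ) ≤ 1 * s ^ (-1 - γ) := by gcongr
      _ = _ := one_mul _

/-- The subordination constant. -/
def cfrac (γ : ℝ) : ℝ := ∫ s in Set.Ioi (0:ℝ), (1 - Real.exp (-s)) * s ^ (-1 - γ)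

lemma cfrac_scale (γ : ℝ) (a : ℝ) (ha : 0 < a) :
    ∫ s in Set.Ioi (0:ℝ), (1 - Real.exp (-(a * s))) * s ^ (-1 - γ) = a ^ γ * cfrac γ := by
  have h := integral_comp_mul_left_Ioi
    (fun u : ℝ => (1 - Real.exp (-u)) * u ^ (-1 - γ)) 0 ha
  rw [mul_zero, smul_eq_mul] at h
  change _ = a⁻¹ * cfrac γ at h
  have h2 : ∫ s in Set.Ioi (0:ℝ), (1 - Real.exp (-(a * s))) * (a * s) ^ (-1 - γ)
      = a ^ (-1 - γ) * ∫ s in Set.Ioi (0:ℝ), (1 - Real.exp (-(a * s))) * s ^ (-1 - γ) := by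
    rw [← integral_const_mul]
    refine setIntegral_congr_fun measurableSet_Ioi fun s hs => ?_
    beta_reduce
    rw [Real.mul_rpow ha.le (le_of_lt hs)]
    ring
  rw [h2] at h
  have h3 : a ^ (-1 - γ) = a⁻¹ * (a ^ γ)⁻¹ := by
    rw [sub_eq_add_neg, Real.rpow_add ha, Real.rpow_neg_one, Real.rpow_neg ha.le]
  rw [h3] at h
  have h4 : 0 < a ^ γ := Real.rpow_pos_of_pos ha _
  field_simp at h
  linarith

lemma frac_nonneg (γ : ℝ) (s : ℝ) (hs : 0 < s) :
    0 ≤ (1 - Real.exp (-s)) * s ^ (-1 - γ) := by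
  have h1 : Real.exp (-s) ≤ 1 := Real.exp_le_one_iff.mpr (by linarith)
  have hw : 0 < s ^ (-1 - γ) := Real.rpow_pos_of_pos hs _
  have : 0 ≤ 1 - Real.exp (-s) := by linarith
  positivity

lemma tail_int (γ : ℝ) (hγ0 : 0 < γ) (T : ℝ) (hT : 0 < T) :
    ∫ s in Set.Ioi T, s ^ (-1 - γ) = T ^ (-γ) / γ := by
  rw [integral_Ioi_rpow_of_lt (by linarith) hT]
  rw [show -1 - γ + 1 = -γ by ring, neg_div_neg_eq]

lemma cfrac_pos (γ : ℝ) (hγ0 : 0 < γ) (hγ1 : γ < 1) : 0 < cfrac γ := by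
  have hi := frac_integrable γ hγ0 hγ1 1 zero_le_one
  simp only [one_mul] at hi
  have h1 : ∫ s in Set.Ioi (1:ℝ), (1 - Real.exp (-s)) * s ^ (-1 - γ) ≤ cfrac γ := by
    refine setIntegral_mono_set hi ?_ (Set.Ioi_subset_Ioi zero_le_one).eventuallyLE
    filter_upwards [ae_restrict_mem measurableSet_Ioi] with s hs
    exact frac_nonneg γ s hs
  have h2 : ∫ s in Set.Ioi (1:ℝ), (1 - Real.exp (-1)) * s ^ (-1 - γ)
      ≤ ∫ s in Set.Ioi (1:ℝ), (1 - Real.exp (-s)) * s ^ (-1 - γ) := by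
    refine setIntegral_mono_on ?_ (hi.mono_set (Set.Ioi_subset_Ioi zero_le_one))
      measurableSet_Ioi ?_
    · exact (integrableOn_Ioi_rpow_of_lt (by linarith) zero_lt_one).const_mul _
    · intro s hs
      have hs1 : 1 < s := hs
      have hw : 0 < s ^ (-1 - γ) := Real.rpow_pos_of_pos (by linarith) _
      gcongr
  rw [integral_const_mul, tail_int γ hγ0 1 zero_lt_one, Real.one_rpow] at h2
  have h3 : Real.exp (-1) < 1 := by
    rw [← Real.exp_zero]
    exact Real.exp_lt_exp.mpr (by norm_num)
  have : 0 < (1 - Real.exp (-1)) * (1 / γ) := by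
    have : 0 < 1 - Real.exp (-1) := by linarith
    positivity
  linarith

lemma frac_repr {n : ℕ} (γ : ℝ) (hγ0 : 0 < γ) (hγ1 : γ < 1) (f : (Fin n → Bool) → ℝ)
    (x : Fin n → Bool) :
    IntegrableOn (fun s : ℝ => (f x - fmult (fun m => Real.exp (-s) ^ m) f x) * s ^ (-1 - γ))
      (Set.Ioi 0) ∧
    ∫ s in Set.Ioi (0:ℝ), (f x - fmult (fun m => Real.exp (-s) ^ m) f x) * s ^ (-1 - γ)
      = cfrac γ * (-fracLap γ f x) := by
  have e : (fun s : ℝ => (f x - fmult (fun m => Real.exp (-s) ^ m) f x) * s ^ (-1 - γ))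
      = fun s => ∑ S : Finset (Fin n), (cubeFourier f S * walsh S x) *
        ((1 - Real.exp (-((S.card:ℝ) * s))) * s ^ (-1 - γ)) := by
    funext s
    nth_rewrite 1 [← fmult_one f]
    simp only [fmult, ← Finset.sum_sub_distrib, Finset.sum_mul]
    refine Finset.sum_congr rfl fun S _ => ?_
    rw [← Real.exp_nat_mul, mul_neg]
    ring
  have hint : ∀ S ∈ (Finset.univ : Finset (Finset (Fin n))),
      Integrable (fun s : ℝ => (cubeFourier f S * walsh S x) *
        ((1 - Real.exp (-((S.card:ℝ) * s))) * s ^ (-1 - γ)))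
        (volume.restrict (Set.Ioi 0)) := fun S _ =>
    (frac_integrable γ hγ0 hγ1 S.card (Nat.cast_nonneg _)).const_mul _
  rw [e]
  refine ⟨integrable_finsetSum _ hint, ?_⟩
  rw [integral_finsetSum _ hint, fracLap, neg_neg, Finset.mul_sum]
  refine Finset.sum_congr rfl fun S _ => ?_
  rw [integral_const_mul]
  rcases Nat.eq_zero_or_pos S.card with h | h
  · simp [h, Real.zero_rpow hγ0.ne']
  · rw [cfrac_scale γ _ (by exact_mod_cast h)]
    ring

lemma abs_integrable {n : ℕ} (γ : ℝ) (hγ0 : 0 < γ) (hγ1 : γ < 1) (f : (Fin n → Bool) → ℝ)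
    (x : Fin n → Bool) :
    IntegrableOn
      (fun s : ℝ => (|f x| - |fmult (fun m => Real.exp (-s) ^ m) f x|) * s ^ (-1 - γ))
      (Set.Ioi 0) := by
  refine Integrable.mono (frac_repr γ hγ0 hγ1 f x).1 ?_ ?_
  · apply Measurable.aestronglyMeasurable
    unfold fmult
    fun_prop
  · refine Filter.Eventually.of_forall fun s => ?_
    rw [norm_mul, norm_mul]
    gcongr
    exact abs_abs_sub_abs_le_abs_sub _ _

lemma pointwise {n : ℕ} (γ : ℝ) (hγ0 : 0 < γ) (hγ1 : γ < 1) (f : (Fin n → Bool) → ℝ)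
    (x : Fin n → Bool) :
    ∫ s in Set.Ioi (0:ℝ), (|f x| - |fmult (fun m => Real.exp (-s) ^ m) f x|) * s ^ (-1 - γ)
      ≤ cfrac γ * (-fracLap γ f x * Real.sign (f x) * (if f x ≠ 0 then 1 else 0)
        - |fracLap γ f x| * (if f x = 0 then 1 else 0)) := by
  obtain ⟨hi, he⟩ := frac_repr γ hγ0 hγ1 f x
  have ha := abs_integrable γ hγ0 hγ1 f x
  have hc := cfrac_pos γ hγ0 hγ1
  have key : ∀ σ : ℝ, |σ| ≤ 1 → σ * f x = |f x| →
      ∫ s in Set.Ioi (0:ℝ), (|f x| - |fmult (fun m => Real.exp (-s) ^ m) f x|) * s ^ (-1 - γ)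
      ≤ σ * (cfrac γ * (-fracLap γ f x)) := by
    intro σ hσ hσf
    rw [← he, ← integral_const_mul]
    refine setIntegral_mono_on ha (hi.const_mul σ) measurableSet_Ioi ?_
    intro s hs
    have hw : 0 < s ^ (-1 - γ) := Real.rpow_pos_of_pos hs _
    rw [← mul_assoc]
    refine mul_le_mul_of_nonneg_right ?_ hw.le
    rw [mul_sub, hσf]
    set p := fmult (fun m => Real.exp (-s) ^ m) f x
    have : σ * p ≤ |p| := by
      calc σ * p ≤ |σ * p| := le_abs_self _
        _ = |σ| * |p| := abs_mul _ _
        _ ≤ 1 * |p| := by gcongr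
        _ = |p| := one_mul _
    linarith
  rcases lt_trichotomy (f x) 0 with h | h | h
  · have := key (-1) (by simp) (by rw [abs_of_neg h]; ring)
    rw [Real.sign_of_neg h, if_pos h.ne, if_neg h.ne]
    linarith
  · simp only [h]
    simp only [h] at key
    rcases le_total 0 (fracLap γ f x) with g | g
    · have := key 1 (by simp) (by simp)
      simp [abs_of_nonneg g] at this ⊢
      linarith
    · have := key (-1) (by simp) (by simp)
      simp [abs_of_nonpos g] at this ⊢
      linarith
  · have := key 1 (by simp) (by rw [abs_of_pos h]; ring)
    rw [Real.sign_of_pos h, if_pos h.ne', if_neg h.ne']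
    linarith

lemma main_bound {n : ℕ} (γ : ℝ) (hγ0 : 0 < γ) (hγ1 : γ < 1) (k : ℕ) (hk : 1 ≤ k)
    (f : (Fin n → Bool) → ℝ) (h0 : cubeFourier f ∅ = 0)
    (hf : ∀ S : Finset (Fin n), k < S.card → cubeFourier f S = 0) :
    (1/2 * nrm f) * ((3 * (k:ℝ)^2) ^ (-γ) / γ) ≤
      cfrac γ * ∑ x, (-fracLap γ f x * Real.sign (f x) * (if f x ≠ 0 then 1 else 0)
        - |fracLap γ f x| * (if f x = 0 then 1 else 0)) := by
  have hk' : (1:ℝ) ≤ k := by exact_mod_cast hk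
  have hT : 0 < 3 * (k:ℝ)^2 := by positivity
  rw [Finset.mul_sum]
  refine le_trans ?_ (Finset.sum_le_sum fun x _ => pointwise γ hγ0 hγ1 f x)
  have hint : ∀ x ∈ (Finset.univ : Finset (Fin n → Bool)), Integrable
      (fun s : ℝ => (|f x| - |fmult (fun m => Real.exp (-s) ^ m) f x|) * s ^ (-1 - γ))
      (volume.restrict (Set.Ioi 0)) := fun x _ => abs_integrable γ hγ0 hγ1 f x
  rw [← integral_finsetSum _ hint]
  have hI := integrable_finsetSum _ hint
  have e : ∀ s : ℝ, ∑ x, (|f x| - |fmult (fun m => Real.exp (-s) ^ m) f x|) * s ^ (-1 - γ)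
      = (nrm f - nrm (fmult (fun m => Real.exp (-s) ^ m) f)) * s ^ (-1 - γ) := by
    intro s
    rw [← Finset.sum_mul, Finset.sum_sub_distrib]
    rfl
  simp only [e] at hI ⊢
  rw [← tail_int γ hγ0 _ hT, ← integral_const_mul]
  refine le_trans (setIntegral_mono_on (s := Set.Ioi (3 * (k:ℝ)^2)) ?_
    (IntegrableOn.mono_set hI (Set.Ioi_subset_Ioi hT.le)) measurableSet_Ioi ?_)
    (setIntegral_mono_set hI ?_ (Set.Ioi_subset_Ioi hT.le).eventuallyLE)
  · exact (integrableOn_Ioi_rpow_of_lt (by linarith) hT).const_mul _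
  · intro s hs
    have hs' : 3 * (k:ℝ)^2 < s := hs
    have hw : 0 < s ^ (-1 - γ) := Real.rpow_pos_of_pos (by linarith) _
    have := heat_decay k hk f h0 hf s hs'.le
    refine mul_le_mul_of_nonneg_right ?_ hw.le
    linarith
  · filter_upwards [ae_restrict_mem measurableSet_Ioi] with s hs
    have hs' : 0 < s := hs
    have hw : 0 < s ^ (-1 - γ) := Real.rpow_pos_of_pos hs _
    have := nrm_contr (Real.exp (-s)) (Real.exp_pos _).le
      (Real.exp_le_one_iff.mpr (by linarith)) f
    exact mul_nonneg (by linarith) hw.le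

/-- Poincaré inequality with the fractional Laplacian in `L¹`: for `0 < γ < 1`
there is `b_γ > 0` independent of `n` and `k` such that for every `n`, `k ≥ 1`,
and every `f : C_n → ℝ` with `f̂(∅) = 0` and `f̂(S) = 0` for `|S| > k`,
`b_γ k^{-γ} 3^{-3k} ‖f‖₁ ≤ E[(-Δ_γ f) sgn f 1_{f≠0}] - E[|Δ_γ f| 1_{f=0}]`. -/
theorem stmt10 (γ : ℝ) (hγ0 : 0 < γ) (hγ1 : γ < 1) :
    ∃ b : ℝ, 0 < b ∧
      ∀ (n k : ℕ), 1 ≤ k →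
        ∀ f : (Fin n → Bool) → ℝ,
          cubeFourier f ∅ = 0 →
          (∀ S : Finset (Fin n), k < S.card → cubeFourier f S = 0) →
          b * (k : ℝ) ^ (-γ) * (3 : ℝ) ^ (-(3 * (k : ℝ))) * pNorm 1 f ≤
            cubeE (fun x => -fracLap γ f x * Real.sign (f x) * (if f x ≠ 0 then 1 else 0)) -
              cubeE (fun x => |fracLap γ f x| * (if f x = 0 then 1 else 0)) := by
  have hc := cfrac_pos γ hγ0 hγ1
  have h3 : (0:ℝ) < 3 ^ (-γ) := Real.rpow_pos_of_pos (by norm_num) _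
  refine ⟨3 ^ (-γ) / (2 * γ * cfrac γ), by positivity, ?_⟩
  intro n k hk f h0 hf
  have hm := main_bound γ hγ0 hγ1 k hk f h0 hf
  have hN := nrm_nonneg f
  have hk' : (1:ℝ) ≤ k := by exact_mod_cast hk
  have hk0 : (0:ℝ) < k := by linarith
  have hp : (0:ℝ) < 2 ^ n := by positivity
  have hpn : pNorm 1 f = nrm f / 2 ^ n := by
    simp [pNorm, cubeE, nrm]
  have hr : cubeE (fun x => -fracLap γ f x * Real.sign (f x) * (if f x ≠ 0 then 1 else 0)) -
      cubeE (fun x => |fracLap γ f x| * (if f x = 0 then 1 else 0))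
      = (∑ x, (-fracLap γ f x * Real.sign (f x) * (if f x ≠ 0 then 1 else 0)
        - |fracLap γ f x| * (if f x = 0 then 1 else 0))) / 2 ^ n := by
    rw [cubeE, cubeE, ← sub_div, Finset.sum_sub_distrib]
  rw [hpn, hr, mul_div_assoc']
  refine div_le_div_of_nonneg_right ?_ hp.le
  set R := ∑ x, (-fracLap γ f x * Real.sign (f x) * (if f x ≠ 0 then 1 else 0)
        - |fracLap γ f x| * (if f x = 0 then 1 else 0))
  have e1 : (3 * (k:ℝ)^2) ^ (-γ) = 3 ^ (-γ) * ((k:ℝ) ^ (-γ) * (k:ℝ) ^ (-γ)) := by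
    rw [Real.mul_rpow (by norm_num) (by positivity), pow_two,
      Real.mul_rpow hk0.le hk0.le]
  have e2 : (3:ℝ) ^ (-(3 * (k:ℝ))) ≤ (k:ℝ) ^ (-γ) := by
    rw [Real.rpow_neg (by norm_num), Real.rpow_neg hk0.le]
    have a1 : (k:ℝ) ^ γ ≤ k := by
      calc (k:ℝ) ^ γ ≤ (k:ℝ) ^ (1:ℝ) := Real.rpow_le_rpow_of_exponent_le hk' hγ1.le
        _ = k := Real.rpow_one _
    have a2 : (k:ℝ) ≤ 3 ^ (3 * (k:ℝ)) := by
      have : (3:ℝ) ^ (3 * (k:ℝ)) = 3 ^ (3 * k) := by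
        rw [← Real.rpow_natCast]
        push_cast
        rfl
      rw [this]
      have b : k ≤ 3 ^ (3 * k) :=
        calc k ≤ 3 * k := by omega
          _ ≤ 3 ^ (3 * k) := (Nat.lt_pow_self (by norm_num)).le
      exact_mod_cast b
    have a3 : 0 < (k:ℝ) ^ γ := Real.rpow_pos_of_pos hk0 _
    gcongr
    linarith
  rw [e1] at hm
  have hkg : 0 < (k:ℝ) ^ (-γ) := Real.rpow_pos_of_pos hk0 _
  have h5 : 3 ^ (-γ) / (2 * γ * cfrac γ) * (k:ℝ) ^ (-γ) * (3:ℝ) ^ (-(3 * (k:ℝ))) * nrm f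
      ≤ 3 ^ (-γ) / (2 * γ * cfrac γ) * (k:ℝ) ^ (-γ) * (k:ℝ) ^ (-γ) * nrm f := by
    gcongr
  refine h5.trans ?_
  have h6 : 3 ^ (-γ) / (2 * γ * cfrac γ) * (k:ℝ) ^ (-γ) * (k:ℝ) ^ (-γ) * nrm f
      = (1/2 * nrm f) * (3 ^ (-γ) * ((k:ℝ) ^ (-γ) * (k:ℝ) ^ (-γ)) / γ) / cfrac γ := by
    field_simp
  rw [h6, div_le_iff₀ hc]
  linarith
end
end

section
/- Let 0 < γ < 1. There exists a function p_γ : ℝ → ℝ with the following properties: (i) p_γ ≥ 0 everywhere and p_γ(τ) = 0 for all τ ≤ 0; (ii) ∫_ℝ p_γ(τ) dτ = 1; (iii) p_γ is infinitely differentiable with bounded derivatives of all orders; (iv) lim_{τ→∞} τ^{1+γ} p_γ(τ) = C_γ, where C_γ is determined by 1/C_γ = ∫₀^∞ (1 − e^{−τ}) τ^{−(1+γ)} dτ; and (v) for every λ ≥ 0, e^{−λ^γ} = ∫₀^∞ e^{−λτ} p_γ(τ) dτ. -/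
open MeasureTheory Real Filter

open scoped Topology FourierTransform

lemma aux_g_bound {a b c : ℝ} (ha : 0 < a) (hb : 0 < b) (hc : 0 < c) (x : ℝ) :
    Real.exp (a * x - c * Real.exp (b * x)) ≤
      Real.exp (2 * a ^ 2 / (c * b ^ 2)) * Real.exp (-a * |x|) := by
  rw [← Real.exp_add]
  apply Real.exp_le_exp.mpr
  have hM : 0 ≤ 2 * a ^ 2 / (c * b ^ 2) := by positivity
  rcases le_total x 0 with hx | hx
  · rw [abs_of_nonpos hx]
    have := Real.exp_pos (b * x)
    nlinarith [mul_pos hc this]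
  · rw [abs_of_nonneg hx]
    have h1 : (b * x) ^ 2 / 2 ≤ Real.exp (b * x) := by
      have := Real.quadratic_le_exp_of_nonneg (show 0 ≤ b * x by positivity)
      nlinarith [mul_nonneg hb.le hx]
    have h2 : 2 * a * x - c * ((b * x) ^ 2 / 2) ≤ 2 * a ^ 2 / (c * b ^ 2) := by
      have hk : 0 < c * b ^ 2 := by positivity
      rw [le_div_iff₀ hk]
      nlinarith [sq_nonneg (2 * a - c * b ^ 2 * x)]
    nlinarith [mul_le_mul_of_nonneg_left h1 hc.le]

lemma aux_integrable_even {f : ℝ → ℝ} (hf : IntegrableOn f (Set.Ioi 0)) :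
    Integrable (fun x : ℝ => f |x|) := by
  have h1 : IntegrableOn (fun x : ℝ => f |x|) (Set.Ioi 0) := by
    refine hf.congr_fun ?_ measurableSet_Ioi
    intro x hx
    simp only [abs_of_pos (Set.mem_Ioi.mp hx)]
  have h2 : IntegrableOn (fun x : ℝ => f |x|) (Set.Iio 0) := by
    have := ((Measure.measurePreserving_neg (volume : Measure ℝ)).integrableOn_comp_preimage
      (Homeomorph.neg ℝ).measurableEmbedding (f := fun x : ℝ => f |x|) (s := Set.Ioi 0)).mpr h1
    simpa [Function.comp_def] using this
  rw [← integrableOn_univ, ← Set.Iic_union_Ioi (a := (0:ℝ))]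
  exact (integrableOn_Iic_iff_integrableOn_Iio (by finiteness) |>.mpr h2).union h1

lemma aux_exp_abs_integrable {a : ℝ} (ha : 0 < a) :
    Integrable (fun x : ℝ => Real.exp (-a * |x|)) :=
  aux_integrable_even (f := fun x => Real.exp (-a * x))
    (integrableOn_exp_mul_Ioi (a := -a) (by linarith) 0)

lemma aux_g_integrable {a b c : ℝ} (ha : 0 < a) (hb : 0 < b) (hc : 0 < c) :
    Integrable (fun x : ℝ => Real.exp (a * x - c * Real.exp (b * x))) := by
  refine ((aux_exp_abs_integrable ha).const_mul (Real.exp (2 * a ^ 2 / (c * b ^ 2)))).mono'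
    (by fun_prop) (ae_of_all _ fun x => ?_)
  rw [Real.norm_of_nonneg (Real.exp_nonneg _)]
  exact aux_g_bound ha hb hc x

lemma aux_exp_abs_tendsto {a : ℝ} (ha : 0 < a) (l : Filter ℝ)
    (hl : Tendsto (fun x : ℝ => |x|) l atTop) (C : ℝ) :
    Tendsto (fun x : ℝ => C * Real.exp (-a * |x|)) l (𝓝 0) := by
  have : Tendsto (fun x : ℝ => Real.exp (-a * |x|)) l (𝓝 0) := by
    apply Real.tendsto_exp_atBot.comp
    exact hl.const_mul_atTop_of_neg (by linarith)
  simpa using this.const_mul C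

/-- shifting a horizontal line -/
lemma aux_shift {f : ℂ → ℂ} (hf : Differentiable ℂ f) {A B a b c : ℝ} (hAB : A ≤ B)
    (ha : 0 < a) (hb : 0 < b) (hc : 0 < c)
    (hbd : ∀ x y : ℝ, A ≤ y → y ≤ B →
      ‖f (x + y * Complex.I)‖ ≤ Real.exp (a * x - c * Real.exp (b * x))) :
    ∫ x : ℝ, f (x + A * Complex.I) = ∫ x : ℝ, f (x + B * Complex.I) := by
  have hfc := hf.continuous
  have hi : ∀ y : ℝ, A ≤ y → y ≤ B → Integrable (fun x : ℝ => f (x + y * Complex.I)) := by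
    intro y h1 h2
    exact (aux_g_integrable ha hb hc).mono' (by fun_prop) (ae_of_all _ fun x => hbd x y h1 h2)
  set M := Real.exp (2 * a ^ 2 / (c * b ^ 2)) with hM
  have hside : ∀ l : Filter ℝ, Tendsto (fun x : ℝ => |x|) l atTop →
      Tendsto (fun R : ℝ => ∫ y in A..B, f ((R : ℝ) + y * Complex.I)) l (𝓝 0) := by
    intro l hl
    apply squeeze_zero_norm (a := fun R => (M * |B - A|) * Real.exp (-a * |R|)) _
      (aux_exp_abs_tendsto ha l hl _)
    intro R
    have := intervalIntegral.norm_integral_le_of_norm_le_const (a := A) (b := B)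
      (C := M * Real.exp (-a * |R|)) (f := fun y : ℝ => f ((R : ℝ) + y * Complex.I)) (by
        intro y hy
        rw [Set.uIoc_of_le hAB] at hy
        exact (hbd R y hy.1.le hy.2).trans (aux_g_bound ha hb hc R))
    linarith
  have hrect : ∀ R : ℝ, (∫ x : ℝ in (-R)..R, f (x + A * Complex.I)) -
      (∫ x : ℝ in (-R)..R, f (x + B * Complex.I)) +
      Complex.I • (∫ y : ℝ in A..B, f ((R : ℝ) + y * Complex.I)) -
      Complex.I • (∫ y : ℝ in A..B, f (((-R : ℝ) : ℂ) + y * Complex.I)) = 0 := by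
    intro R
    have := Complex.integral_boundary_rect_eq_zero_of_differentiableOn f ⟨-R, A⟩ ⟨R, B⟩
      hf.differentiableOn
    simpa using this
  have t1 := intervalIntegral_tendsto_integral (hi A le_rfl hAB) tendsto_neg_atTop_atBot tendsto_id
  have t2 := intervalIntegral_tendsto_integral (hi B hAB le_rfl) tendsto_neg_atTop_atBot tendsto_id
  have t3 := (hside atTop tendsto_abs_atTop_atTop).const_smul Complex.I
  have t4 := ((hside atBot tendsto_abs_atBot_atTop).comp tendsto_neg_atTop_atBot).const_smul
    Complex.I
  have t5 := ((t1.sub t2).add t3).sub t4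
  have t6 := tendsto_nhds_unique (t5.congr (fun R => hrect R)) tendsto_const_nhds
  simp only [smul_zero, add_zero, sub_zero] at t6
  exact sub_eq_zero.mp t6

lemma aux_re_cpow {γ : ℝ} (hγ0 : 0 < γ) (hγ1 : γ < 1) {z : ℂ} (hz : 0 ≤ z.re) :
    Real.cos (π * γ / 2) * ‖z‖ ^ γ ≤ (z ^ (γ : ℂ)).re := by
  rw [Complex.cpow_ofReal_re, mul_comm]
  gcongr
  have h1 := Complex.abs_arg_le_pi_div_two_iff.mpr hz
  rw [← Real.cos_abs (Complex.arg z * γ), abs_mul, abs_of_pos hγ0]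
  apply Real.cos_le_cos_of_nonneg_of_le_pi
  · positivity
  · nlinarith [Real.pi_pos]
  · nlinarith [Real.pi_pos]

lemma aux_cos_pos {γ : ℝ} (hγ0 : 0 < γ) (hγ1 : γ < 1) : 0 < Real.cos (π * γ / 2) := by
  apply Real.cos_pos_of_mem_Ioo
  constructor <;> nlinarith [Real.pi_pos]

lemma aux_cpow_continuousOn {γ : ℝ} (hγ0 : 0 < γ) :
    ContinuousOn (fun z : ℂ => z ^ (γ : ℂ)) {z | 0 ≤ z.re} := by
  intro z hz
  by_cases h : z = 0
  · subst h
    exact (Complex.continuousAt_cpow_const_of_re_pos (by simp) (by simpa using hγ0)).continuousWithinAt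
  · refine (continuousAt_cpow_const ?_).continuousWithinAt
    rw [Complex.mem_slitPlane_iff]
    rcases (show 0 ≤ z.re from hz).lt_or_eq with h1 | h1
    · exact Or.inl h1
    · right
      intro h2
      exact h (Complex.ext h1.symm h2)

/-- the symbol -/
noncomputable def auxK (γ : ℝ) (v : ℝ) : ℂ :=
  Complex.exp (-(((-(2 * π * v) : ℝ) : ℂ) * Complex.I) ^ (γ : ℂ))

lemma auxK_continuous {γ : ℝ} (hγ0 : 0 < γ) : Continuous (auxK γ) := by
  unfold auxK
  apply Complex.continuous_exp.comp
  apply Continuous.neg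
  apply (aux_cpow_continuousOn hγ0).comp_continuous (by fun_prop)
  intro x
  simp

lemma auxK_norm {γ : ℝ} (hγ0 : 0 < γ) (hγ1 : γ < 1) (v : ℝ) :
    ‖auxK γ v‖ ≤ Real.exp (-(Real.cos (π * γ / 2) * (2 * π) ^ γ) * |v| ^ γ) := by
  unfold auxK
  rw [Complex.norm_exp]
  apply Real.exp_le_exp.mpr
  have := aux_re_cpow hγ0 hγ1 (z := (((-(2 * π * v) : ℝ) : ℂ) * Complex.I)) (by simp)
  have h2 : ‖(((-(2 * π * v) : ℝ) : ℂ) * Complex.I)‖ = (2 * π) * |v| := by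
    rw [norm_mul, Complex.norm_real, Complex.norm_I, mul_one, norm_neg, Real.norm_eq_abs, abs_mul,
      abs_of_pos Real.two_pi_pos]
  rw [h2, Real.mul_rpow Real.two_pi_pos.le (abs_nonneg _)] at this
  rw [Complex.neg_re]
  linarith

lemma auxK_moment {γ : ℝ} (hγ0 : 0 < γ) (hγ1 : γ < 1) (n : ℕ) :
    Integrable (fun v : ℝ => ‖v‖ ^ n * ‖auxK γ v‖) := by
  have hc : 0 < Real.cos (π * γ / 2) * (2 * π) ^ γ :=
    mul_pos (aux_cos_pos hγ0 hγ1) (Real.rpow_pos_of_pos Real.two_pi_pos _)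
  have h := aux_integrable_even (integrableOn_rpow_mul_exp_neg_mul_rpow (s := n) (p := γ)
    (by have := Nat.cast_nonneg (α := ℝ) n; linarith) hγ0 hc)
  have hK := auxK_continuous hγ0
  refine h.mono' (by fun_prop) (ae_of_all _ fun v => ?_)
  rw [Real.norm_of_nonneg (by positivity), Real.rpow_natCast, Real.norm_eq_abs]
  gcongr
  exact auxK_norm hγ0 hγ1 v

lemma auxK_integrable {γ : ℝ} (hγ0 : 0 < γ) (hγ1 : γ < 1) : Integrable (auxK γ) := by
  have := auxK_moment hγ0 hγ1 0
  simp only [pow_zero, one_mul] at this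
  exact (integrable_norm_iff (auxK_continuous hγ0).aestronglyMeasurable).mp this

lemma auxK_conj {γ : ℝ} (_hγ0 : 0 < γ) (v : ℝ) :
    (starRingEnd ℂ) (auxK γ v) = auxK γ (-v) := by
  have h : (((-(2 * π * v) : ℝ) : ℂ) * Complex.I).arg ≠ π := by
    intro h
    have : (((-(2 * π * v) : ℝ) : ℂ) * Complex.I).re = 0 := by simp
    rw [Complex.arg_eq_pi_iff] at h
    linarith [h.1]
  have h2 := Complex.conj_cpow _ (γ : ℂ) h
  rw [Complex.conj_ofReal] at h2
  unfold auxK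
  rw [← Complex.exp_conj, map_neg, ← h2]
  simp only [map_mul, Complex.conj_ofReal, Complex.conj_I]
  simp

/-- the density -/
noncomputable def auxp (γ : ℝ) (τ : ℝ) : ℝ := (𝓕 (auxK γ) τ).re

lemma auxp_ofReal {γ : ℝ} (hγ0 : 0 < γ) (τ : ℝ) :
    ((auxp γ τ : ℝ) : ℂ) = 𝓕 (auxK γ) τ := by
  unfold auxp
  apply (Complex.conj_eq_iff_re).mp
  rw [Real.fourier_real_eq_integral_exp_smul, ← integral_conj]
  rw [← integral_neg_eq_self]
  congr 1
  ext v
  simp only [smul_eq_mul, map_mul, auxK_conj hγ0, ← Complex.exp_conj]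
  simp [show (starRingEnd ℂ) 2 = 2 from map_ofNat _ 2]

lemma auxp_contDiff {γ : ℝ} (hγ0 : 0 < γ) (hγ1 : γ < 1) :
    ContDiff ℝ (⊤ : ℕ∞) (auxp γ) := by
  have h := Real.contDiff_fourier (f := auxK γ) (N := ⊤) (fun n _ => auxK_moment hγ0 hγ1 n)
  exact Complex.reCLM.contDiff.comp h

lemma aux_iteratedDeriv_re {f : ℝ → ℂ} (hf : ContDiff ℝ (⊤ : ℕ∞) f) (m : ℕ) (x : ℝ) :
    iteratedDeriv m (fun y => (f y).re) x = (iteratedDeriv m f x).re := by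
  induction m generalizing x with
  | zero => simp
  | succ m ih =>
    rw [iteratedDeriv_succ, iteratedDeriv_succ, funext ih]
    have hd : DifferentiableAt ℝ (iteratedDeriv m f) x :=
      (hf.differentiable_iteratedDeriv m (by exact_mod_cast ENat.natCast_lt_top m)) x
    exact (Complex.reCLM.hasFDerivAt.comp_hasDerivAt x hd.hasDerivAt).deriv

lemma auxp_bdd {γ : ℝ} (hγ0 : 0 < γ) (hγ1 : γ < 1) (m : ℕ) :
    ∃ B : ℝ, ∀ τ : ℝ, |iteratedDeriv m (auxp γ) τ| ≤ B := by
  have h := Real.contDiff_fourier (f := auxK γ) (N := ⊤) (fun n _ => auxK_moment hγ0 hγ1 n)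
  have hK := auxK_continuous hγ0
  have h2 := Real.iteratedDeriv_fourier (f := auxK γ) (N := ⊤) (n := m) (by
    intro n _
    rw [← integrable_norm_iff (by fun_prop)]
    refine (auxK_moment hγ0 hγ1 n).congr (ae_of_all _ fun v => ?_)
    simp) (by simp)
  refine ⟨∫ x : ℝ, ‖(-2 * ↑Real.pi * Complex.I * ↑x : ℂ) ^ m • auxK γ x‖, fun τ => ?_⟩
  have : auxp γ = fun y => (𝓕 (auxK γ) y).re := rfl
  rw [this, aux_iteratedDeriv_re h, h2]
  refine (Complex.abs_re_le_norm _).trans ?_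
  exact VectorFourier.norm_fourierIntegral_le_integral_norm _ _ _ _ _

/-- the integrand in logarithmic coordinates -/
noncomputable def auxPhi (γ τ : ℝ) (w : ℂ) : ℂ :=
  Complex.exp (τ * Complex.exp w - Complex.exp (γ * w) + w)

lemma auxPhi_diff (γ τ : ℝ) : Differentiable ℂ (auxPhi γ τ) := by
  unfold auxPhi; fun_prop

lemma aux_exp_re (b x y : ℝ) :
    (Complex.exp (b * (x + y * Complex.I))).re = Real.exp (b * x) * Real.cos (b * y) := by
  rw [Complex.exp_re]; simp

lemma aux_exp_re' (x y : ℝ) :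
    (Complex.exp (x + y * Complex.I)).re = Real.exp x * Real.cos y := by
  rw [Complex.exp_re]; simp

lemma aux_integral_Ioi_exp {E : Type*} [NormedAddCommGroup E] [NormedSpace ℝ E] (h : ℝ → E)
    {k : ℝ} (hk : 0 < k) :
    ∫ v in Set.Ioi (0 : ℝ), h v = ∫ x : ℝ, (Real.exp x / k) • h (Real.exp x / k) := by
  have him : (fun x : ℝ => Real.exp x / k) '' Set.univ = Set.Ioi 0 := by
    ext y
    simp only [Set.image_univ, Set.mem_range, Set.mem_Ioi]
    constructor
    · rintro ⟨x, rfl⟩; positivity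
    · intro hy
      refine ⟨Real.log (k * y), ?_⟩
      rw [Real.exp_log (by positivity)]
      field_simp
  rw [← him, integral_image_eq_integral_abs_deriv_smul (f' := fun x : ℝ => Real.exp x / k)
    MeasurableSet.univ]
  · rw [setIntegral_univ]
    congr 1
    ext x
    rw [abs_of_pos (by positivity)]
  · intro x _
    exact ((Real.hasDerivAt_exp x).div_const _).hasDerivWithinAt
  · intro x _ y _ hxy
    have : Real.exp x = Real.exp y := by
      have h0 : k ≠ 0 := hk.ne'
      exact (div_left_inj' h0).mp hxy
    exact Real.exp_injective this

lemma auxp_polar {γ : ℝ} (hγ0 : 0 < γ) (hγ1 : γ < 1) (τ : ℝ) :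
    auxp γ τ = (1 / π) * (∫ x : ℝ, auxPhi γ τ (x + ((π / 2 : ℝ) : ℂ) * Complex.I)).im := by
  set h : ℝ → ℂ := fun v => Complex.exp (↑(-2 * Real.pi * v * τ) * Complex.I) • auxK γ v with hh
  have hK := auxK_continuous hγ0
  have hhi : Integrable h := by
    refine (auxK_integrable hγ0 hγ1).norm.mono' (by fun_prop) (ae_of_all _ fun v => ?_)
    rw [hh]
    simp only [norm_smul]
    rw [Complex.norm_exp_ofReal_mul_I, one_mul]
  have hconj : ∀ v, h (-v) = (starRingEnd ℂ) (h v) := by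
    intro v
    simp only [hh, smul_eq_mul, map_mul, auxK_conj hγ0, ← Complex.exp_conj]
    simp [show (starRingEnd ℂ) 2 = 2 from map_ofNat _ 2]
  have h1 : auxp γ τ = 2 * (∫ v in Set.Ioi (0:ℝ), h (-v)).re := by
    unfold auxp
    rw [Real.fourier_real_eq_integral_exp_smul]
    change (∫ v, h v).re = _
    have hs := integral_add_compl (measurableSet_Ioi (a := (0:ℝ))) hhi
    rw [Set.compl_Ioi] at hs
    have h3 : ∫ v in Set.Iic (0:ℝ), h v = ∫ v in Set.Ioi (0:ℝ), h (-v) := by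
      have := integral_comp_neg_Ioi (0:ℝ) h
      rw [neg_zero] at this
      exact this.symm
    have h4 : ∫ v in Set.Ioi (0:ℝ), h (-v) = (starRingEnd ℂ) (∫ v in Set.Ioi (0:ℝ), h v) := by
      rw [← integral_conj]
      simp only [hconj]
    rw [← hs, h3, Complex.add_re]
    rw [h4, Complex.conj_re]; ring
  rw [h1, aux_integral_Ioi_exp _ Real.two_pi_pos]
  have h5 : ∀ x : ℝ, (Real.exp x / (2 * π)) • h (-(Real.exp x / (2 * π))) =
      (-Complex.I / (2 * π)) * auxPhi γ τ (x + ((π / 2 : ℝ) : ℂ) * Complex.I) := by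
    intro x
    have hpi : (π : ℂ) ≠ 0 := by exact_mod_cast Real.pi_ne_zero
    have e1 : Complex.exp (x + ((π / 2 : ℝ) : ℂ) * Complex.I) = Complex.exp x * Complex.I := by
      rw [Complex.exp_add]
      push_cast
      rw [Complex.exp_pi_div_two_mul_I]
    have e2 : (Complex.exp x * Complex.I) ^ (γ : ℂ) =
        Complex.exp (γ * (x + ((π / 2 : ℝ) : ℂ) * Complex.I)) := by
      rw [← e1, Complex.cpow_def_of_ne_zero (Complex.exp_ne_zero _), Complex.log_exp, mul_comm]
      · simp; linarith [Real.pi_pos]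
      · simp; linarith [Real.pi_pos]
    have e3 : auxK γ (-(Real.exp x / (2 * π))) =
        Complex.exp (-Complex.exp (γ * (x + ((π / 2 : ℝ) : ℂ) * Complex.I))) := by
      unfold auxK
      rw [← e2]
      congr 3
      have : -(2 * π * -(Real.exp x / (2 * π))) = Real.exp x := by field_simp
      rw [this, Complex.ofReal_exp]
    have e4 : (-2 * π * (-(Real.exp x / (2 * π))) * τ) = τ * Real.exp x := by field_simp
    simp only [hh, e3, e4, smul_eq_mul]
    unfold auxPhi
    rw [Complex.exp_add, e1, sub_eq_add_neg, Complex.exp_add]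
    simp only [Complex.real_smul]
    push_cast
    have : -Complex.I * Complex.I = 1 := by simp
    rw [show (τ : ℂ) * Complex.exp x * Complex.I = τ * (Complex.exp x * Complex.I) by ring]
    generalize Complex.exp (τ * (Complex.exp x * Complex.I)) = A
    generalize Complex.exp (-Complex.exp (γ * (x + ((π : ℂ) / 2) * Complex.I))) = B
    field_simp
    linear_combination (A * B) * Complex.I_sq
  simp only [h5]
  rw [integral_const_mul]
  generalize (∫ x : ℝ, auxPhi γ τ (x + ((π / 2 : ℝ) : ℂ) * Complex.I)) = J
  have : -Complex.I / (2 * π) * J = ((1 / (2 * π) : ℝ) : ℂ) * (-Complex.I * J) := by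
    push_cast; ring
  rw [this, Complex.re_ofReal_mul]
  simp
  ring

lemma auxPhi_norm (γ τ x y : ℝ) : ‖auxPhi γ τ (x + y * Complex.I)‖ =
    Real.exp (τ * (Real.exp x * Real.cos y) - Real.exp (γ * x) * Real.cos (γ * y) + x) := by
  unfold auxPhi
  rw [Complex.norm_exp, Complex.add_re, Complex.sub_re, Complex.re_ofReal_mul, aux_exp_re,
    aux_exp_re']
  simp

lemma auxp_zero {γ : ℝ} (hγ0 : 0 < γ) (hγ1 : γ < 1) (τ : ℝ) (hτ : τ ≤ 0) : auxp γ τ = 0 := by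
  rw [auxp_polar hγ0 hγ1, ← aux_shift (auxPhi_diff γ τ) (A := 0) (B := π / 2) (a := 1) (b := γ)
    (c := Real.cos (π * γ / 2)) (by positivity) one_pos hγ0 (aux_cos_pos hγ0 hγ1)]
  · have : ∀ x : ℝ, auxPhi γ τ (x + ((0:ℝ):ℂ) * Complex.I) =
        ((Real.exp (τ * Real.exp x - Real.exp (γ * x) + x) : ℝ) : ℂ) := by
      intro x
      unfold auxPhi
      push_cast
      simp
    simp only [this]
    rw [integral_complex_ofReal, Complex.ofReal_im, mul_zero]
  · intro x y hy0 hy1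
    rw [auxPhi_norm]
    apply Real.exp_le_exp.mpr
    have h1 : 0 ≤ Real.cos y := Real.cos_nonneg_of_mem_Icc ⟨by linarith, hy1⟩
    have h2 : Real.cos (π * γ / 2) ≤ Real.cos (γ * y) := by
      apply Real.cos_le_cos_of_nonneg_of_le_pi <;> nlinarith [Real.pi_pos]
    have h3 := Real.exp_pos (γ * x)
    have h4 := mul_nonneg (Real.exp_pos x).le h1
    nlinarith

lemma aux_gamma_integral {s : ℝ} (hs : 0 < s) :
    ∫ x : ℝ, Real.exp (s * x - Real.exp x) = Real.Gamma s := by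
  rw [Real.Gamma_eq_integral hs, aux_integral_Ioi_exp _ one_pos]
  congr 1
  ext x
  rw [div_one, smul_eq_mul, ← Real.exp_mul, ← Real.exp_add, ← Real.exp_add]
  congr 1
  ring

lemma auxPsi_norm (s x y : ℝ) :
    ‖Complex.exp (Complex.exp (x + y * Complex.I) + s * (x + y * Complex.I))‖ =
      Real.exp (Real.exp x * Real.cos y + s * x) := by
  rw [Complex.norm_exp, Complex.add_re, Complex.re_ofReal_mul, aux_exp_re']
  simp

lemma auxPsi_integral {s θ : ℝ} (hs : 0 < s) (h1 : π / 2 < θ) (h2 : θ ≤ π) :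
    ∫ x : ℝ, Complex.exp (Complex.exp (x + θ * Complex.I) + s * (x + θ * Complex.I)) =
      Real.Gamma s * Complex.exp (s * π * Complex.I) := by
  have hc : 0 < - Real.cos θ := by
    have := Real.cos_neg_of_pi_div_two_lt_of_lt h1 (by linarith [Real.pi_pos])
    linarith
  rw [aux_shift (f := fun w => Complex.exp (Complex.exp w + s * w)) (by fun_prop) (A := θ) (B := π)
    (a := s) (b := 1) (c := - Real.cos θ) h2 hs one_pos hc]
  · have : ∀ x : ℝ, Complex.exp (Complex.exp (x + π * Complex.I) + s * (x + π * Complex.I)) =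
        ((Real.exp (s * x - Real.exp x) : ℝ) : ℂ) * Complex.exp (s * π * Complex.I) := by
      intro x
      push_cast
      rw [← Complex.exp_add]
      congr 1
      rw [Complex.exp_add, Complex.exp_pi_mul_I]
      ring
    simp only [this]
    rw [integral_mul_const, integral_complex_ofReal, aux_gamma_integral hs]
  · intro x y hy0 hy1
    simp only [auxPsi_norm]
    apply Real.exp_le_exp.mpr
    have h2 : Real.cos y ≤ Real.cos θ := by
      apply Real.cos_le_cos_of_nonneg_of_le_pi <;> nlinarith [Real.pi_pos]
    have h3 := Real.exp_pos x
    rw [one_mul]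
    nlinarith

lemma auxPsi_integrable {s θ : ℝ} (hs : 0 < s) (h1 : π / 2 < θ) (h2 : θ ≤ π) :
    Integrable (fun x : ℝ => Real.exp (Real.exp x * Real.cos θ + s * x)) := by
  have hc : 0 < - Real.cos θ := by
    have := Real.cos_neg_of_pi_div_two_lt_of_lt h1 (by linarith [Real.pi_pos])
    linarith
  refine (aux_g_integrable hs one_pos hc).congr (ae_of_all _ fun x => ?_)
  simp only
  congr 1
  ring_nf

lemma aux_exp_sub_one {z : ℂ} (hz : z.re ≤ 0) : ‖Complex.exp z - 1‖ ≤ ‖z‖ := by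
  have hconv : Convex ℝ {z : ℂ | z.re ≤ 0} := convex_halfSpace_re_le 0
  have := hconv.norm_image_sub_le_of_norm_hasDerivWithin_le (f := Complex.exp) (f' := Complex.exp)
    (C := 1) (x := 0) (y := z) (fun x _ => (Complex.hasDerivAt_exp x).hasDerivWithinAt)
    (fun x hx => by rw [Complex.norm_exp]; exact Real.exp_le_one_iff.mpr hx) (by simp) hz
  simpa using this

lemma auxp_scaled {γ : ℝ} (hγ0 : 0 < γ) (hγ1 : γ < 1) {τ θ : ℝ} (hτ : 0 < τ) (h1 : π / 2 < θ)
    (h2 : θ ≤ π) (h3 : γ * θ < π / 2) :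
    τ ^ (1 + γ) * auxp γ τ = (1 / π) * (∫ x : ℝ,
      Complex.exp (Complex.exp (x + θ * Complex.I) + (x + θ * Complex.I)) *
      ((Complex.exp (-(((τ ^ (-γ) : ℝ) : ℂ) * Complex.exp (γ * (x + θ * Complex.I)))) - 1) /
        ((τ ^ (-γ) : ℝ) : ℂ))).im := by
  have hπ := Real.pi_pos
  have hcγ : 0 < Real.cos (γ * θ) := Real.cos_pos_of_mem_Ioo ⟨by nlinarith, h3⟩
  set u : ℝ := τ ^ (-γ) with hu
  have hu0 : 0 < u := Real.rpow_pos_of_pos hτ _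
  have hpsi1 := auxPsi_integral one_pos h1 h2
  have hpsi1i := auxPsi_integrable one_pos h1 h2
  simp only [Complex.ofReal_one, one_mul, Real.Gamma_one, Complex.exp_pi_mul_I] at hpsi1
  rw [auxp_polar hγ0 hγ1, aux_shift (auxPhi_diff γ τ) (A := π / 2) (B := θ) (a := 1) (b := γ)
    (c := Real.cos (γ * θ)) h1.le one_pos hγ0 hcγ]
  · have hi1 : Integrable (fun x : ℝ =>
        Complex.exp (Complex.exp (x + θ * Complex.I) + (x + θ * Complex.I))) := by
      refine hpsi1i.mono' (by fun_prop) (ae_of_all _ fun x => ?_)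
      have := auxPsi_norm 1 x θ
      simp only [Complex.ofReal_one, one_mul] at this
      rw [this, one_mul]
    have hi2 : Integrable (fun x : ℝ =>
        Complex.exp (Complex.exp (x + θ * Complex.I) + (x + θ * Complex.I)) *
        Complex.exp (-((u : ℂ) * Complex.exp (γ * (x + θ * Complex.I))))) := by
      refine hi1.norm.mono' (by fun_prop) (ae_of_all _ fun x => ?_)
      rw [norm_mul]
      refine mul_le_of_le_one_right (norm_nonneg _) ?_
      rw [Complex.norm_exp, Complex.neg_re, Complex.re_ofReal_mul, aux_exp_re]
      apply Real.exp_le_one_iff.mpr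
      have := Real.exp_pos (γ * x)
      have : 0 ≤ u * (Real.exp (γ * x) * Real.cos (γ * θ)) := by positivity
      linarith
    have e1 : ∫ x : ℝ, auxPhi γ τ (x + θ * Complex.I) = ((τ⁻¹ : ℝ) : ℂ) * ∫ x : ℝ,
        Complex.exp (Complex.exp (x + θ * Complex.I) + (x + θ * Complex.I)) *
        Complex.exp (-((u : ℂ) * Complex.exp (γ * (x + θ * Complex.I)))) := by
      rw [← integral_sub_right_eq_self _ (Real.log τ), ← integral_const_mul]
      congr 1
      ext x
      unfold auxPhi
      have a1 : (((x - Real.log τ : ℝ) : ℂ) + θ * Complex.I) =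
        (x + θ * Complex.I) - ((Real.log τ : ℝ) : ℂ) := by push_cast; ring
      have a2 : Complex.exp ((Real.log τ : ℝ) : ℂ) = τ := by
        rw [← Complex.ofReal_exp, Real.exp_log hτ]
      have a3 : Complex.exp (γ * ((x + θ * Complex.I) - ((Real.log τ : ℝ) : ℂ))) =
          u * Complex.exp (γ * (x + θ * Complex.I)) := by
        have : (u : ℂ) = Complex.exp (-(γ * ((Real.log τ : ℝ) : ℂ))) := by
          rw [hu, Real.rpow_def_of_pos hτ, Complex.ofReal_exp]
          congr 1
          push_cast; ring
        rw [this, ← Complex.exp_add]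
        congr 1; ring
      have hτc : (τ : ℂ) ≠ 0 := by exact_mod_cast hτ.ne'
      rw [a1, a3, Complex.exp_sub, a2, mul_div_cancel₀ _ hτc]
      rw [show Complex.exp (x + θ * Complex.I) - u * Complex.exp (γ * (x + θ * Complex.I)) +
        ((x + θ * Complex.I) - ((Real.log τ : ℝ) : ℂ)) =
        ((Complex.exp (x + θ * Complex.I) + (x + θ * Complex.I)) +
        (-(u * Complex.exp (γ * (x + θ * Complex.I))))) - ((Real.log τ : ℝ) : ℂ) by ring]
      rw [Complex.exp_sub, a2, Complex.exp_add (Complex.exp (x + θ * Complex.I) + (x + θ * Complex.I))]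
      push_cast
      field_simp
    have e2 : (∫ x : ℝ,
        Complex.exp (Complex.exp (x + θ * Complex.I) + (x + θ * Complex.I)) *
        ((Complex.exp (-((u : ℂ) * Complex.exp (γ * (x + θ * Complex.I)))) - 1) / (u : ℂ))) =
        ((u⁻¹ : ℝ) : ℂ) * ((∫ x : ℝ,
        Complex.exp (Complex.exp (x + θ * Complex.I) + (x + θ * Complex.I)) *
        Complex.exp (-((u : ℂ) * Complex.exp (γ * (x + θ * Complex.I))))) - (-1)) := by
      rw [← hpsi1, ← integral_sub hi2 hi1, ← integral_const_mul]
      congr 1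
      ext x
      push_cast
      field_simp
    rw [e1, e2, Complex.im_ofReal_mul, Complex.im_ofReal_mul]
    have e3 : τ ^ (1 + γ) * τ⁻¹ = u⁻¹ := by
      rw [hu, Real.rpow_neg hτ.le, inv_inv, Real.rpow_add hτ, Real.rpow_one]
      field_simp
    rw [← e3]
    simp
    ring
  · intro x y hy0 hy1
    rw [auxPhi_norm]
    apply Real.exp_le_exp.mpr
    have h1 : Real.cos y ≤ 0 := Real.cos_nonpos_of_pi_div_two_le_of_le hy0 (by linarith)
    have h2 : Real.cos (γ * θ) ≤ Real.cos (γ * y) := by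
      apply Real.cos_le_cos_of_nonneg_of_le_pi
      · nlinarith
      · linarith
      · nlinarith
    have h3 := Real.exp_pos (γ * x)
    have h4 := mul_nonneg_of_nonpos_of_nonpos (neg_nonpos.mpr (Real.exp_pos x).le) h1
    nlinarith

lemma auxp_asymp {γ : ℝ} (hγ0 : 0 < γ) (hγ1 : γ < 1) :
    Tendsto (fun τ : ℝ => τ ^ (1 + γ) * auxp γ τ) atTop
      (𝓝 (Real.Gamma (1 + γ) * Real.sin (π * γ) / π)) := by
  have hπ := Real.pi_pos
  set θ : ℝ := π / (1 + γ) with hθ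
  have hg : 0 < 1 + γ := by linarith
  have hθm : θ * (1 + γ) = π := by rw [hθ]; field_simp
  have h1 : π / 2 < θ := by nlinarith
  have h2 : θ ≤ π := by nlinarith
  have h3 : γ * θ < π / 2 := by nlinarith
  have hcγ : 0 < Real.cos (γ * θ) := Real.cos_pos_of_mem_Ioo ⟨by nlinarith, h3⟩
  have key : Tendsto (fun τ : ℝ => ∫ x : ℝ,
      Complex.exp (Complex.exp (x + θ * Complex.I) + (x + θ * Complex.I)) *
      ((Complex.exp (-(((τ ^ (-γ) : ℝ) : ℂ) * Complex.exp (γ * (x + θ * Complex.I)))) - 1) /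
        ((τ ^ (-γ) : ℝ) : ℂ))) atTop (𝓝 (∫ x : ℝ,
      Complex.exp (Complex.exp (x + θ * Complex.I) + (x + θ * Complex.I)) *
      (-Complex.exp (γ * (x + θ * Complex.I))))) := by
    apply tendsto_integral_filter_of_dominated_convergence
      (fun x : ℝ => Real.exp (Real.exp x * Real.cos θ + (1 + γ) * x))
    · exact Eventually.of_forall fun τ => by fun_prop
    · filter_upwards [eventually_gt_atTop 0] with τ hτ
      refine ae_of_all _ fun x => ?_
      have hu0 : 0 < τ ^ (-γ) := Real.rpow_pos_of_pos hτ _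
      generalize τ ^ (-γ) = u at hu0
      have hn := auxPsi_norm 1 x θ
      simp only [Complex.ofReal_one, one_mul] at hn
      rw [norm_mul, hn, norm_div]
      have b1 : ‖Complex.exp (-((u : ℂ) * Complex.exp (γ * (x + θ * Complex.I)))) - 1‖ ≤
          u * Real.exp (γ * x) := by
        refine (aux_exp_sub_one ?_).trans ?_
        · rw [Complex.neg_re, Complex.re_ofReal_mul, aux_exp_re]
          have := Real.exp_pos (γ * x)
          have : 0 ≤ u * (Real.exp (γ * x) * Real.cos (γ * θ)) := by positivity
          linarith
        · rw [norm_neg, norm_mul, Complex.norm_real, Complex.norm_exp, Real.norm_of_nonneg hu0.le]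
          simp
      rw [Complex.norm_real, Real.norm_of_nonneg hu0.le]
      have b2 : ‖Complex.exp (-((u : ℂ) * Complex.exp (γ * (x + θ * Complex.I)))) - 1‖ / u ≤
          Real.exp (γ * x) := by rw [div_le_iff₀ hu0]; linarith
      calc _ ≤ Real.exp (Real.exp x * Real.cos θ + x) * Real.exp (γ * x) := by gcongr
        _ = _ := by rw [← Real.exp_add]; congr 1; ring
    · exact auxPsi_integrable hg h1 h2
    · refine ae_of_all _ fun x => ?_
      apply Tendsto.const_mul
      generalize Complex.exp (γ * (x + θ * Complex.I)) = c
      have hd : HasDerivAt (fun u : ℝ => Complex.exp (-((u : ℂ) * c))) (-c) 0 := by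
        have h0 : HasDerivAt (fun u : ℝ => -((u : ℂ) * c)) (-(1 * c)) 0 :=
          ((Complex.ofRealCLM.hasDerivAt (x := (0:ℝ))).mul_const c).neg
        have := h0.cexp
        simpa using this
      have hs := hd.tendsto_slope
      have hu : Tendsto (fun τ : ℝ => τ ^ (-γ)) atTop (𝓝[≠] 0) := by
        rw [tendsto_nhdsWithin_iff]
        refine ⟨tendsto_rpow_neg_atTop hγ0, ?_⟩
        filter_upwards [eventually_gt_atTop 0] with τ hτ
        exact (Real.rpow_pos_of_pos hτ _).ne'
      refine (hs.comp hu).congr fun τ => ?_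
      simp only [Function.comp, slope, sub_zero, vsub_eq_sub, Complex.real_smul]
      simp
      ring
  have hval : (∫ x : ℝ,
      Complex.exp (Complex.exp (x + θ * Complex.I) + (x + θ * Complex.I)) *
      (-Complex.exp (γ * (x + θ * Complex.I)))) =
      -(Real.Gamma (1 + γ) * Complex.exp (((1 + γ : ℝ) : ℂ) * π * Complex.I)) := by
    rw [← auxPsi_integral hg h1 h2, ← integral_neg]
    congr 1
    ext x
    rw [mul_neg, ← Complex.exp_add]
    congr 2
    push_cast; ring
  rw [hval] at key
  have key2 := ((Complex.continuous_im.tendsto _).comp key).const_mul (1 / π)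
  have hlim : (1 / π) * (-(Real.Gamma (1 + γ) *
      Complex.exp (((1 + γ : ℝ) : ℂ) * π * Complex.I))).im =
      Real.Gamma (1 + γ) * Real.sin (π * γ) / π := by
    rw [Complex.neg_im, Complex.im_ofReal_mul, ← Complex.ofReal_mul, Complex.exp_ofReal_mul_I_im]
    rw [show (1 + γ) * π = π * γ + π by ring, Real.sin_add_pi]
    ring
  rw [hlim] at key2
  refine key2.congr' ?_
  filter_upwards [eventually_gt_atTop 0] with τ hτ
  rw [auxp_scaled hγ0 hγ1 hτ h1 h2 h3]
  rfl

lemma auxp_continuous {γ : ℝ} (hγ0 : 0 < γ) (hγ1 : γ < 1) : Continuous (auxp γ) :=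
  (auxp_contDiff hγ0 hγ1).continuous

lemma auxp_integrable {γ : ℝ} (hγ0 : 0 < γ) (hγ1 : γ < 1) : Integrable (auxp γ) := by
  have hc := auxp_continuous hγ0 hγ1
  have ha := (auxp_asymp hγ0 hγ1).abs
  set L := |Real.Gamma (1 + γ) * Real.sin (π * γ) / π|
  have hev := (ha.eventually (gt_mem_nhds (show L < L + 1 by linarith))).and
    (eventually_gt_atTop (0 : ℝ))
  obtain ⟨T, hT⟩ := eventually_atTop.mp hev
  set T' := max T 1
  have hT0 : 0 < T' := lt_of_lt_of_le one_pos (le_max_right _ _)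
  have i1 : IntegrableOn (auxp γ) (Set.Iic 0) := by
    refine (integrableOn_zero).congr_fun ?_ measurableSet_Iic
    intro x hx
    exact (auxp_zero hγ0 hγ1 x hx).symm
  have i2 : IntegrableOn (auxp γ) (Set.Icc 0 T') := hc.continuousOn.integrableOn_Icc
  have i3 : IntegrableOn (auxp γ) (Set.Ioi T') := by
    have h0 := (integrableOn_Ioi_rpow_of_lt (a := -(1 + γ)) (by linarith) hT0).const_mul (L + 1)
    refine h0.mono' hc.aestronglyMeasurable ?_
    refine (ae_restrict_iff' measurableSet_Ioi).mpr (ae_of_all _ fun x hx => ?_)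
    have hx : T' < x := hx
    obtain ⟨h1, h2⟩ := hT x ((le_max_left _ _).trans hx.le)
    have hp := Real.rpow_pos_of_pos h2 (1 + γ)
    rw [abs_mul, abs_of_pos hp] at h1
    rw [Real.rpow_neg h2.le, Real.norm_eq_abs, ← div_eq_mul_inv, le_div_iff₀ hp]
    linarith
  have : Integrable (auxp γ) (volume.restrict Set.univ) := by
    have hu : (Set.univ : Set ℝ) = (Set.Iic 0 ∪ Set.Icc 0 T') ∪ Set.Ioi T' := by
      ext x
      simp only [Set.mem_univ, Set.mem_union, Set.mem_Iic, Set.mem_Icc, Set.mem_Ioi, true_iff]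
      grind
    rw [hu]
    exact (i1.union i2).union i3
  simpa using this

lemma auxp_char {γ : ℝ} (hγ0 : 0 < γ) (hγ1 : γ < 1) (x : ℝ) :
    ∫ τ : ℝ, Complex.exp (-((x * Complex.I) * τ)) * (auxp γ τ : ℂ) =
      Complex.exp (-(x * Complex.I) ^ (γ : ℂ)) := by
  have hF : 𝓕 (auxK γ) = fun τ => ((auxp γ τ : ℝ) : ℂ) :=
    funext fun τ => (auxp_ofReal hγ0 τ).symm
  have h := (auxK_continuous hγ0).fourierInv_fourier_eq (auxK_integrable hγ0 hγ1)
    (by rw [hF]; exact (auxp_integrable hγ0 hγ1).ofReal)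
  have h2 := congrFun h (-x / (2 * π))
  rw [hF, Real.fourierInv_eq'] at h2
  have e : -(2 * π * (-x / (2 * π))) = x := by field_simp
  unfold auxK at h2
  rw [e] at h2
  rw [← h2]
  congr 1
  ext τ
  rw [smul_eq_mul]
  congr 2
  have e2 : 2 * π * (inner ℝ τ (-x / (2 * π))) = - (x * τ) := by
    simp; field_simp
  rw [e2]
  push_cast; ring

/-- moments of the Laplace transform -/
noncomputable def auxG (γ : ℝ) (n : ℕ) (z : ℂ) : ℂ :=
  ∫ τ : ℝ, (τ : ℂ) ^ n * Complex.exp (-(z * τ)) * (auxp γ τ : ℂ)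

lemma aux_pow_exp {d t : ℝ} (hd : 0 < d) (ht : 0 ≤ t) (n : ℕ) :
    t ^ n * Real.exp (-(d * t)) ≤ n.factorial / d ^ n := by
  have h := Real.pow_div_factorial_le_exp (d * t) (by positivity) n
  rw [Real.exp_neg, ← div_eq_mul_inv, div_le_iff₀ (Real.exp_pos _)]
  rw [div_le_iff₀ (by positivity), mul_pow] at h
  rw [div_mul_eq_mul_div, le_div_iff₀ (by positivity)]
  linarith

lemma auxG_bound {γ : ℝ} (hγ0 : 0 < γ) (hγ1 : γ < 1) {d : ℝ} (hd : 0 < d) (n : ℕ) {z : ℂ}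
    (hz : d ≤ z.re) (τ : ℝ) :
    ‖(τ : ℂ) ^ n * Complex.exp (-(z * τ)) * (auxp γ τ : ℂ)‖ ≤
      n.factorial / d ^ n * |auxp γ τ| := by
  rcases le_or_gt τ 0 with h | h
  · rw [auxp_zero hγ0 hγ1 τ h]; simp
  · rw [norm_mul, norm_mul, Complex.norm_real, Real.norm_eq_abs, norm_pow, Complex.norm_real,
      Real.norm_of_nonneg h.le, Complex.norm_exp]
    gcongr
    refine le_trans ?_ (aux_pow_exp hd h.le n)
    gcongr
    simp
    nlinarith

lemma auxG_hasDerivAt {γ : ℝ} (hγ0 : 0 < γ) (hγ1 : γ < 1) (n : ℕ) {z : ℂ} (hz : 0 < z.re) :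
    HasDerivAt (auxG γ n) (-auxG γ (n + 1) z) z := by
  have hc := auxp_continuous hγ0 hγ1
  have hi := (auxp_integrable hγ0 hγ1).abs
  set d := z.re / 2 with hd
  have hd0 : 0 < d := by positivity
  have hs : {w : ℂ | d < w.re} ∈ 𝓝 z :=
    (isOpen_lt continuous_const Complex.continuous_re).mem_nhds (by simp [hd]; linarith)
  have := (hasDerivAt_integral_of_dominated_loc_of_deriv_le
    (F := fun (w : ℂ) (τ : ℝ) => (τ : ℂ) ^ n * Complex.exp (-(w * τ)) * (auxp γ τ : ℂ))
    (F' := fun (w : ℂ) (τ : ℝ) => -((τ : ℂ) ^ (n + 1) * Complex.exp (-(w * τ)) * (auxp γ τ : ℂ)))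
    (bound := fun τ => (n + 1).factorial / d ^ (n + 1) * |auxp γ τ|) (μ := volume) hs
    (Eventually.of_forall fun w => by fun_prop) ?_ (by fun_prop) ?_ (hi.const_mul _) ?_).2
  · rw [integral_neg] at this
    exact this
  · refine (hi.const_mul (n.factorial / d ^ n)).mono' (by fun_prop) (ae_of_all _ fun τ => ?_)
    exact auxG_bound hγ0 hγ1 hd0 n (by rw [hd]; linarith) τ
  · refine ae_of_all _ fun τ w hw => ?_
    rw [norm_neg]
    exact auxG_bound hγ0 hγ1 hd0 (n + 1) (le_of_lt hw) τ
  · refine ae_of_all _ fun τ w hw => ?_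
    have h1 : HasDerivAt (fun w : ℂ => -(w * τ)) (-(1 * τ)) w := ((hasDerivAt_id w).mul_const _).neg
    have h2 := ((h1.cexp).const_mul ((τ : ℂ) ^ n)).mul_const (auxp γ τ : ℂ)
    refine h2.congr_deriv ?_
    ring

lemma auxG0_bound {γ : ℝ} (hγ0 : 0 < γ) (hγ1 : γ < 1) {z : ℂ} (hz : 0 ≤ z.re) (τ : ℝ) :
    ‖(τ : ℂ) ^ 0 * Complex.exp (-(z * τ)) * (auxp γ τ : ℂ)‖ ≤ |auxp γ τ| := by
  rcases le_or_gt τ 0 with h | h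
  · rw [auxp_zero hγ0 hγ1 τ h]; simp
  · rw [pow_zero, one_mul, norm_mul, Complex.norm_real, Real.norm_eq_abs, Complex.norm_exp]
    refine mul_le_of_le_one_left (abs_nonneg _) (Real.exp_le_one_iff.mpr ?_)
    simp
    nlinarith

lemma auxG0_eq {γ : ℝ} (hγ0 : 0 < γ) (hγ1 : γ < 1) {z : ℂ} (hz : 0 ≤ z.re) :
    auxG γ 0 z = Complex.exp (-z ^ (γ : ℂ)) := by
  have hc := auxp_continuous hγ0 hγ1
  have hi := (auxp_integrable hγ0 hγ1).abs
  set D : ℂ → ℂ := fun z => auxG γ 0 z - Complex.exp (-z ^ (γ : ℂ)) with hD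
  have hDn : ∀ z : ℂ, 0 ≤ z.re → ‖D z‖ ≤ (∫ τ, |auxp γ τ|) + 1 := by
    intro z hz
    refine (norm_sub_le _ _).trans (add_le_add ?_ ?_)
    · exact norm_integral_le_of_norm_le hi (ae_of_all _ fun τ => auxG0_bound hγ0 hγ1 hz τ)
    · rw [Complex.norm_exp]
      apply Real.exp_le_one_iff.mpr
      have h1 := aux_re_cpow hγ0 hγ1 hz
      have h2 := aux_cos_pos hγ0 hγ1
      have : 0 ≤ Real.cos (π * γ / 2) * ‖z‖ ^ γ := by positivity
      rw [Complex.neg_re]; linarith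
  have hd : DiffContOnCl ℂ D {z | 0 < z.re} := by
    constructor
    · intro z hz
      have hz : 0 < z.re := hz
      apply DifferentiableAt.differentiableWithinAt
      refine (auxG_hasDerivAt hγ0 hγ1 0 hz).differentiableAt.sub ?_
      refine DifferentiableAt.cexp ?_
      exact (differentiableAt_id.cpow_const (Or.inl hz)).neg
    · rw [Complex.closure_setOfPred_lt_re]
      refine ContinuousOn.sub ?_ ?_
      · refine continuousOn_of_dominated (bound := fun τ => |auxp γ τ|)
          (fun z _ => by fun_prop) (fun z hz => ae_of_all _ fun τ => auxG0_bound hγ0 hγ1 hz τ) hi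
          (ae_of_all _ fun τ => by fun_prop)
      · exact (aux_cpow_continuousOn hγ0).neg.cexp
  have hle := PhragmenLindelof.right_half_plane_of_bounded_on_real (C := 0) (z := z) hd
    ⟨1, by norm_num, 0, by
      refine Asymptotics.IsBigO.of_bound ((∫ τ, |auxp γ τ|) + 1) ?_
      filter_upwards [mem_inf_of_right (mem_principal_self _)] with w hw
      have hw : 0 < w.re := hw
      simpa using hDn w hw.le⟩
    (by
      refine isBoundedUnder_of_eventually_le (a := (∫ τ, |auxp γ τ|) + 1) ?_
      filter_upwards [eventually_ge_atTop 0] with x hx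
      exact hDn x (by simpa using hx))
    (by
      intro x
      have := auxp_char hγ0 hγ1 x
      simp only [hD, auxG, pow_zero, one_mul]
      rw [this]; simp) hz
  have := norm_le_zero_iff.mp hle
  exact sub_eq_zero.mp this

/-- cone of completely monotone functions -/
inductive auxS (γ : ℝ) : (ℝ → ℝ) → Prop
  | term (c a : ℝ) (hc : 0 ≤ c) (ha : a ≤ 0) : auxS γ (fun l => c * l ^ a * Real.exp (-l ^ γ))
  | add (f g : ℝ → ℝ) (hf : auxS γ f) (hg : auxS γ g) : auxS γ (fun l => f l + g l)

lemma auxS_nonneg {γ : ℝ} {f : ℝ → ℝ} (hf : auxS γ f) : ∀ l, 0 < l → 0 ≤ f l := by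
  induction hf with
  | term c a hc ha => intro l hl; positivity
  | add f g _ _ h1 h2 => intro l hl; exact add_nonneg (h1 l hl) (h2 l hl)

lemma auxS_deriv {γ : ℝ} (hγ0 : 0 < γ) (hγ1 : γ < 1) {f : ℝ → ℝ} (hf : auxS γ f) :
    ∃ h, auxS γ h ∧ ∀ l, 0 < l → HasDerivAt f (-h l) l := by
  induction hf with
  | term c a hc ha =>
    refine ⟨_, auxS.add _ _ (auxS.term (-a * c) (a - 1) (by nlinarith) (by linarith))
      (auxS.term (c * γ) (a + (γ - 1)) (by positivity) (by linarith)), fun l hl => ?_⟩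
    have h1 := (Real.hasDerivAt_rpow_const (p := a) (Or.inl hl.ne')).const_mul c
    have h2 := (Real.hasDerivAt_rpow_const (p := γ) (Or.inl hl.ne')).neg.exp
    refine (h1.mul h2).congr_deriv ?_
    rw [Real.rpow_add hl]
    simp only [Pi.neg_apply]
    ring
  | add f g _ _ h1 h2 =>
    obtain ⟨k1, s1, d1⟩ := h1
    obtain ⟨k2, s2, d2⟩ := h2
    refine ⟨_, auxS.add _ _ s1 s2, fun l hl => ?_⟩
    refine ((d1 l hl).add (d2 l hl)).congr_deriv ?_
    ring

lemma auxG_real_mem {γ : ℝ} (hγ0 : 0 < γ) (hγ1 : γ < 1) (n : ℕ) :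
    ∃ f, auxS γ f ∧ ∀ l : ℝ, 0 < l → (auxG γ n l).re = f l := by
  induction n with
  | zero =>
    refine ⟨_, auxS.term 1 0 zero_le_one le_rfl, fun l hl => ?_⟩
    rw [auxG0_eq hγ0 hγ1 (by simpa using hl.le), ← Complex.ofReal_cpow hl.le, ← Complex.ofReal_neg,
      Complex.exp_ofReal_re]
    simp
  | succ n ih =>
    obtain ⟨f, hf, hfl⟩ := ih
    obtain ⟨h, hh, hd⟩ := auxS_deriv hγ0 hγ1 hf
    refine ⟨h, hh, fun l hl => ?_⟩
    have h1 := (auxG_hasDerivAt hγ0 hγ1 n (z := (l : ℂ)) (by simpa using hl)).real_of_complex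
    have h2 : HasDerivAt (fun x : ℝ => (auxG γ n x).re) (-h l) l := by
      refine (hd l hl).congr_of_eventuallyEq ?_
      filter_upwards [lt_mem_nhds hl] with x hx
      exact hfl x hx
    have := h1.unique h2
    rw [Complex.neg_re] at this
    linarith

lemma auxp_moment_nonneg {γ : ℝ} (hγ0 : 0 < γ) (hγ1 : γ < 1) (n : ℕ) {l : ℝ} (hl : 0 < l) :
    0 ≤ ∫ τ : ℝ, τ ^ n * Real.exp (-(l * τ)) * auxp γ τ := by
  obtain ⟨f, hf, hfl⟩ := auxG_real_mem hγ0 hγ1 n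
  have h := auxS_nonneg hf l hl
  rw [← hfl l hl] at h
  convert h using 1
  unfold auxG
  have : ∀ τ : ℝ, (τ : ℂ) ^ n * Complex.exp (-((l : ℂ) * τ)) * (auxp γ τ : ℂ) =
      ((τ ^ n * Real.exp (-(l * τ)) * auxp γ τ : ℝ) : ℂ) := by
    intro τ; push_cast; ring
  simp only [this]
  rw [integral_complex_ofReal, Complex.ofReal_re]

lemma aux_kappa_mono {t t0 : ℝ} (h0 : 0 < t0) (h : (t - t0) * (1 - t0) ≤ 0) :
    t * Real.exp (1 - t) ≤ t0 * Real.exp (1 - t0) := by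
  have h1 : t / t0 ≤ Real.exp (t - t0) := by
    refine le_trans ?_ (Real.add_one_le_exp (t - t0))
    rw [div_le_iff₀ h0]
    nlinarith
  have h2 : Real.exp (1 - t0) = Real.exp (t - t0) * Real.exp (1 - t) := by
    rw [← Real.exp_add]; congr 1; ring
  rw [div_le_iff₀ h0] at h1
  rw [h2]
  nlinarith [Real.exp_pos (1 - t)]

lemma aux_kappa_lt {t : ℝ} (h : t ≠ 1) : t * Real.exp (1 - t) < 1 := by
  have h1 := Real.add_one_lt_exp (x := t - 1) (by intro h'; apply h; linarith)
  have h2 : Real.exp (t - 1) * Real.exp (1 - t) = 1 := by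
    rw [← Real.exp_add]; simp
  nlinarith [Real.exp_pos (1 - t)]

lemma auxp_nonneg {γ : ℝ} (hγ0 : 0 < γ) (hγ1 : γ < 1) (x : ℝ) : 0 ≤ auxp γ x := by
  rcases le_or_gt x 0 with hx | hx
  · rw [auxp_zero hγ0 hγ1 x hx]
  by_contra! hneg
  have hc := auxp_continuous hγ0 hγ1
  have hi := auxp_integrable hγ0 hγ1
  set κ : ℝ → ℝ := fun t => t * Real.exp (1 - t) with hκ
  have hκc : Continuous κ := by fun_prop
  set c := -auxp γ x / 2 with hcd
  have hc0 : 0 < c := by rw [hcd]; linarith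
  -- neighbourhood, scaled variable
  have hg : Tendsto (fun t : ℝ => auxp γ (x * t)) (𝓝 1) (𝓝 (auxp γ x)) := by
    have : Continuous (fun t : ℝ => auxp γ (x * t)) := by fun_prop
    simpa using this.tendsto 1
  have hev := hg.eventually (gt_mem_nhds (show auxp γ x < -c by rw [hcd]; linarith))
  obtain ⟨δ', hδ', hball⟩ := Metric.eventually_nhds_iff.mp hev
  set δ := min (δ' / 2) (1 / 2) with hδd
  have hδ0 : 0 < δ := by positivity
  have hδ1 : δ ≤ 1 / 2 := min_le_right _ _
  have hδ2 : δ < δ' := lt_of_le_of_lt (min_le_left _ _) (by linarith)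
  set q := max (κ (1 - δ)) (κ (1 + δ)) with hq
  have hq1 : q < 1 := max_lt (aux_kappa_lt (by linarith)) (aux_kappa_lt (by linarith))
  have hq0 : 0 < q := lt_of_lt_of_le
    (show 0 < κ (1 + δ) from mul_pos (by linarith) (Real.exp_pos _)) (le_max_right _ _)
  have hout : ∀ t : ℝ, δ < |t - 1| → κ t ≤ q := by
    intro t ht
    rcases lt_abs.mp ht with h | h
    · exact (aux_kappa_mono (t0 := 1 + δ) (by linarith) (by nlinarith)).trans (le_max_right _ _)
    · exact (aux_kappa_mono (t0 := 1 - δ) (by linarith) (by nlinarith)).trans (le_max_left _ _)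
  set r := (1 + q) / 2 with hr
  have hr0 : 0 < r := by positivity
  have hqr : q < r := by rw [hr]; linarith
  have hκ1 : Tendsto κ (𝓝 1) (𝓝 1) := by
    have := hκc.tendsto 1
    simpa [hκ] using this
  obtain ⟨η', hη', hin⟩ := Metric.eventually_nhds_iff.mp
    (hκ1.eventually (lt_mem_nhds (show r < 1 by rw [hr]; linarith)))
  set η := min (η' / 2) δ with hη
  have hη0 : 0 < η := by positivity
  have hηδ : η ≤ δ := min_le_right _ _
  have hηη : η < η' := lt_of_le_of_lt (min_le_left _ _) (by linarith)
  set A : Set ℝ := Set.Icc (x * (1 - η)) (x * (1 + η)) with hA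
  set B := ∫ τ, |auxp γ τ| with hB
  have hvol : ∫ τ, A.indicator (fun _ => (1:ℝ)) τ = 2 * η * x := by
    rw [integral_indicator measurableSet_Icc]
    simp
    rw [max_eq_left (by nlinarith)]
    ring
  have main : ∀ n : ℕ, 0 < n → c * (2 * η * x) ≤ (q / r) ^ n * B := by
    intro n hn
    have hl : 0 < (n : ℝ) / x := by positivity
    have hpos := auxp_moment_nonneg hγ0 hγ1 n hl
    have hk : ∀ τ : ℝ, κ (τ / x) ^ n * auxp γ τ =
        (Real.exp 1 / x) ^ n * (τ ^ n * Real.exp (-((n : ℝ) / x * τ)) * auxp γ τ) := by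
      intro τ
      have : Real.exp (-((n : ℝ) / x * τ)) = Real.exp (-(τ / x)) ^ n := by
        rw [← Real.exp_nat_mul]; congr 1; ring
      rw [this, hκ]
      simp only
      rw [sub_eq_add_neg, Real.exp_add, mul_pow, mul_pow, div_pow, div_pow]
      ring
    have hpos2 : 0 ≤ ∫ τ : ℝ, κ (τ / x) ^ n * auxp γ τ := by
      simp only [hk]
      rw [integral_const_mul]
      positivity
    have hκ01 : ∀ t : ℝ, 0 ≤ t → 0 ≤ κ t ∧ κ t ≤ 1 := by
      intro t ht
      refine ⟨mul_nonneg ht (Real.exp_nonneg _), ?_⟩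
      by_cases h : t = 1
      · simp [hκ, h]
      · exact (aux_kappa_lt h).le
    have hi1 : Integrable (fun τ : ℝ => κ (τ / x) ^ n * auxp γ τ) := by
      refine hi.abs.mono' (by fun_prop) (ae_of_all _ fun τ => ?_)
      rcases le_or_gt τ 0 with h | h
      · rw [auxp_zero hγ0 hγ1 τ h]; simp
      · obtain ⟨a1, a2⟩ := hκ01 (τ / x) (by positivity)
        rw [norm_mul, Real.norm_eq_abs (auxp γ τ), norm_pow, Real.norm_of_nonneg a1]
        exact mul_le_of_le_one_left (abs_nonneg _) (pow_le_one₀ a1 a2)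
    have hi2 : Integrable (fun τ : ℝ => q ^ n * |auxp γ τ| -
        c * r ^ n * A.indicator (fun _ => (1:ℝ)) τ) := by
      refine (hi.abs.const_mul _).sub (Integrable.const_mul ?_ _)
      rw [integrable_indicator_iff measurableSet_Icc]
      exact integrableOn_const (by simp)
    have hmono := integral_mono hi1 hi2 (fun τ => by
      simp only
      rcases le_or_gt τ 0 with h | h
      · rw [auxp_zero hγ0 hγ1 τ h]
        have : τ ∉ A := by
          intro hmem
          have := hmem.1
          nlinarith
        simp [this]
      have ht : x * (τ / x) = τ := by field_simp
      obtain ⟨a1, a2⟩ := hκ01 (τ / x) (by positivity)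
      by_cases hmem : τ ∈ A
      · simp only [hmem, Set.indicator_of_mem, mul_one]
        have b1 : |τ / x - 1| ≤ η := by
          rw [abs_le]
          constructor
          · have := hmem.1
            rw [← ht] at this
            have := le_of_mul_le_mul_left this hx
            linarith
          · have := hmem.2
            rw [← ht] at this
            have := le_of_mul_le_mul_left this hx
            linarith
        have b2 := hball (y := τ / x) (by rw [Real.dist_eq]; linarith)
        have b3 := hin (y := τ / x) (by rw [Real.dist_eq]; linarith)
        rw [ht] at b2
        have b4 : r ^ n ≤ κ (τ / x) ^ n := by gcongr
        have b5 : 0 ≤ q ^ n * |auxp γ τ| := by positivity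
        have b6 : 0 ≤ r ^ n := by positivity
        nlinarith
      · simp only [hmem, Set.indicator_of_notMem, not_false_eq_true, mul_zero, sub_zero]
        by_cases hfar : δ < |τ / x - 1|
        · have := hout _ hfar
          calc _ ≤ κ (τ / x) ^ n * |auxp γ τ| := by gcongr; exact le_abs_self _
            _ ≤ _ := by gcongr
        · have b2 := hball (y := τ / x) (by rw [Real.dist_eq]; linarith)
          rw [ht] at b2
          have b5 : 0 ≤ q ^ n * |auxp γ τ| := by positivity
          have b6 : 0 ≤ κ (τ / x) ^ n := by positivity
          nlinarith)
    rw [integral_sub (hi.abs.const_mul _) (by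
      refine (Integrable.const_mul ?_ _)
      rw [integrable_indicator_iff measurableSet_Icc]
      exact integrableOn_const (by simp)), integral_const_mul, integral_const_mul, hvol] at hmono
    rw [div_pow, div_mul_eq_mul_div (q ^ n) (r ^ n) B, le_div_iff₀ (pow_pos hr0 n)]
    linarith
  have hlim : Tendsto (fun n : ℕ => (q / r) ^ n * B) atTop (𝓝 (0 * B)) :=
    (tendsto_pow_atTop_nhds_zero_of_lt_one (by positivity) ((div_lt_one hr0).mpr hqr)).mul_const B
  have := ge_of_tendsto hlim (by
    filter_upwards [eventually_gt_atTop 0] with n hn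
    exact main n hn)
  have : 0 < c * (2 * η * x) := by positivity
  linarith

lemma aux_const {γ : ℝ} (hγ0 : 0 < γ) (hγ1 : γ < 1) :
    ∫ τ in Set.Ioi (0 : ℝ), (1 - Real.exp (-τ)) / τ ^ (1 + γ) = Real.Gamma (1 - γ) / γ := by
  have hb : ∀ τ : ℝ, 0 ≤ τ → 0 ≤ 1 - Real.exp (-τ) ∧ 1 - Real.exp (-τ) ≤ τ ∧
      1 - Real.exp (-τ) ≤ 1 := by
    intro τ h
    refine ⟨?_, ?_, ?_⟩
    · have := Real.exp_le_one_iff.mpr (show -τ ≤ 0 by linarith); linarith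
    · have := Real.add_one_le_exp (-τ); linarith
    · have := Real.exp_pos (-τ); linarith
  have hmeas : Measurable (fun τ : ℝ => (1 - Real.exp (-τ)) / τ ^ (1 + γ)) := by fun_prop
  have i1 : IntegrableOn (fun τ : ℝ => (1 - Real.exp (-τ)) / τ ^ (1 + γ)) (Set.Ioi 0) := by
    rw [← Set.Ioc_union_Ioi_eq_Ioi (zero_le_one (α := ℝ))]
    refine IntegrableOn.union ?_ ?_
    · have h0 : IntegrableOn (fun τ : ℝ => τ ^ (-γ)) (Set.Ioc 0 1) :=
        (intervalIntegrable_iff_integrableOn_Ioc_of_le zero_le_one).mp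
          (intervalIntegral.intervalIntegrable_rpow' (by linarith))
      refine h0.mono' hmeas.aestronglyMeasurable ?_
      refine (ae_restrict_iff' measurableSet_Ioc).mpr (ae_of_all _ fun τ hτ => ?_)
      obtain ⟨b1, b2, b3⟩ := hb τ hτ.1.le
      have hp := Real.rpow_pos_of_pos hτ.1 (1 + γ)
      rw [Real.norm_of_nonneg (by positivity), div_le_iff₀ hp, ← Real.rpow_add hτ.1]
      simpa using b2
    · have h0 := integrableOn_Ioi_rpow_of_lt (a := -(1 + γ)) (by linarith) (zero_lt_one (α := ℝ))
      refine h0.mono' hmeas.aestronglyMeasurable ?_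
      refine (ae_restrict_iff' measurableSet_Ioi).mpr (ae_of_all _ fun τ hτ => ?_)
      have hτ : 0 < τ := lt_trans one_pos hτ
      obtain ⟨b1, b2, b3⟩ := hb τ hτ.le
      have hp := Real.rpow_pos_of_pos hτ (1 + γ)
      rw [Real.norm_of_nonneg (by positivity), div_le_iff₀ hp, ← Real.rpow_add hτ]
      simpa using b3
  have i2 : IntegrableOn (fun τ : ℝ => Real.exp (-τ) * τ ^ ((1 - γ) - 1)) (Set.Ioi 0) :=
    Real.GammaIntegral_convergent (by linarith)
  have hG := Real.Gamma_eq_integral (s := 1 - γ) (by linarith)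
  have h := integral_Ioi_of_hasDerivAt_of_tendsto (a := 0) (m := 0)
    (f := fun τ : ℝ => (1 - Real.exp (-τ)) * τ ^ (-γ))
    (f' := fun τ : ℝ => Real.exp (-τ) * τ ^ ((1 - γ) - 1) -
      γ * ((1 - Real.exp (-τ)) / τ ^ (1 + γ))) ?_ ?_ (i2.sub (i1.const_mul γ)) ?_
  · rw [integral_sub i2 (i1.const_mul γ), integral_const_mul, ← hG] at h
    simp only [neg_zero, Real.exp_zero, sub_self, zero_mul] at h
    field_simp
    linarith
  · have hz : (fun τ : ℝ => (1 - Real.exp (-τ)) * τ ^ (-γ)) 0 = 0 := by simp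
    unfold ContinuousWithinAt
    rw [hz]
    have ht : Tendsto (fun τ : ℝ => τ ^ (1 - γ)) (𝓝[≥] 0) (𝓝 0) := by
      have := (Real.continuousAt_rpow_const 0 (1 - γ) (Or.inr (by linarith))).tendsto
      rw [Real.zero_rpow (by linarith)] at this
      exact this.mono_left nhdsWithin_le_nhds
    refine squeeze_zero' ?_ ?_ ht
    · filter_upwards [self_mem_nhdsWithin] with τ hτ
      have hτ : 0 ≤ τ := hτ
      have := (hb τ hτ).1
      positivity
    · filter_upwards [self_mem_nhdsWithin] with τ hτ
      have hτ : 0 ≤ τ := hτ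
      rcases hτ.eq_or_lt with h | h
      · subst h
        simp
        positivity
      · rw [sub_eq_add_neg 1 γ, Real.rpow_add h, Real.rpow_one]
        have := (hb τ hτ).2.1
        gcongr
  · intro τ hτ
    have hτ : 0 < τ := hτ
    have h1 : HasDerivAt (fun τ : ℝ => 1 - Real.exp (-τ)) (Real.exp (-τ)) τ := by
      have := ((hasDerivAt_neg τ).exp).const_sub 1
      simpa using this
    have h2 := Real.hasDerivAt_rpow_const (p := -γ) (x := τ) (Or.inl hτ.ne')
    refine (h1.mul h2).congr_deriv ?_
    have e1 : (1 - γ) - 1 = -γ := by ring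
    have e2 : -γ - 1 = -(1 + γ) := by ring
    rw [e1, e2, Real.rpow_neg hτ.le (1 + γ)]
    ring
  · refine squeeze_zero' ?_ ?_ (tendsto_rpow_neg_atTop hγ0)
    · filter_upwards [eventually_gt_atTop 0] with τ hτ
      have := (hb τ hτ.le).1
      positivity
    · filter_upwards [eventually_gt_atTop 0] with τ hτ
      exact mul_le_of_le_one_left (by positivity) (hb τ hτ.le).2.2

/-- Subordination density: for `0 < γ < 1` there is a probability density `p_γ`
on `ℝ`, vanishing on `(-∞, 0]`, infinitely differentiable with bounded
derivatives of all orders, with `τ^{1+γ} p_γ(τ) → C_γ` as `τ → ∞` where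
`1/C_γ = ∫₀^∞ (1 - e^{-τ}) τ^{-(1+γ)} dτ`, and such that
`e^{-λ^γ} = ∫₀^∞ e^{-λτ} p_γ(τ) dτ` for every `λ ≥ 0`. -/
theorem stmt11 (γ : ℝ) (hγ0 : 0 < γ) (hγ1 : γ < 1) :
    ∃ p : ℝ → ℝ,
      (∀ τ : ℝ, 0 ≤ p τ) ∧
      (∀ τ : ℝ, τ ≤ 0 → p τ = 0) ∧
      (∫ τ : ℝ, p τ) = 1 ∧
      ContDiff ℝ (⊤ : ℕ∞) p ∧
      (∀ m : ℕ, ∃ B : ℝ, ∀ τ : ℝ, |iteratedDeriv m p τ| ≤ B) ∧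
      Tendsto (fun τ : ℝ => τ ^ (1 + γ) * p τ) atTop
        (nhds ((∫ τ in Set.Ioi (0 : ℝ), (1 - Real.exp (-τ)) / τ ^ (1 + γ))⁻¹)) ∧
      (∀ l : ℝ, 0 ≤ l →
        Real.exp (-l ^ γ) = ∫ τ in Set.Ioi (0 : ℝ), Real.exp (-(l * τ)) * p τ) := by
  have hL : ∀ l : ℝ, 0 ≤ l → Real.exp (-l ^ γ) = ∫ τ : ℝ, Real.exp (-(l * τ)) * auxp γ τ := by
    intro l hl
    have h := auxG0_eq hγ0 hγ1 (z := (l : ℂ)) (by simpa using hl)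
    rw [← Complex.ofReal_cpow hl, ← Complex.ofReal_neg, ← Complex.ofReal_exp] at h
    unfold auxG at h
    have e : ∀ τ : ℝ, (τ : ℂ) ^ 0 * Complex.exp (-((l : ℂ) * τ)) * (auxp γ τ : ℂ) =
        ((Real.exp (-(l * τ)) * auxp γ τ : ℝ) : ℂ) := by
      intro τ; push_cast; ring
    simp only [e] at h
    rw [integral_complex_ofReal] at h
    exact_mod_cast h.symm
  refine ⟨auxp γ, auxp_nonneg hγ0 hγ1, auxp_zero hγ0 hγ1, ?_, auxp_contDiff hγ0 hγ1,
    auxp_bdd hγ0 hγ1, ?_, ?_⟩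
  · have := hL 0 le_rfl
    rw [Real.zero_rpow hγ0.ne'] at this
    simpa using this.symm
  · rw [aux_const hγ0 hγ1]
    convert auxp_asymp hγ0 hγ1 using 2
    have h1 := Real.Gamma_mul_Gamma_one_sub γ
    have h2 : Real.Gamma (1 + γ) = γ * Real.Gamma γ := by
      rw [add_comm, Real.Gamma_add_one hγ0.ne']
    have h3 : 0 < Real.Gamma (1 - γ) := Real.Gamma_pos_of_pos (by linarith)
    have h4 : 0 < Real.sin (π * γ) := by
      apply Real.sin_pos_of_pos_of_lt_pi <;> nlinarith [Real.pi_pos]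
    rw [h2]
    have hπ := Real.pi_pos
    rw [eq_div_iff h4.ne'] at h1
    rw [inv_div, div_eq_div_iff h3.ne' hπ.ne']
    linear_combination (-γ) * h1
  · intro l hl
    rw [hL l hl]
    symm
    apply setIntegral_eq_integral_of_forall_compl_eq_zero
    intro τ hτ
    rw [auxp_zero hγ0 hγ1 τ (by simpa using hτ), mul_zero]
end

section
/- Let 0 < γ < 1. There exist constants t₀ ∈ (0,1) and c₀ > 0, depending only on γ, such that for every n ∈ ℕ and every t with 0 < t ≤ t₀, there exists a function K̃ : C_n → ℝ satisfying: (i) K̃(x) ≥ 0 for all x ∈ C_n; (ii) E|K̃| ≤ e^{−c₀ t}; and (iii) the Fourier coefficients of K̃ satisfy K̃^(S) = e^{−t|S|^γ} for every S ⊆ {1,…,n} with 1 ≤ |S| ≤ 2. -/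
open Finset MeasureTheory Real

noncomputable section

lemma riesz_fourier {n : ℕ} (w r : ℝ) (S : Finset (Fin n)) :
    cubeFourier (fun x => w * ∏ i, (1 + r * (if x i then (1 : ℝ) else -1))) S = w * r ^ S.card := by
  unfold cubeFourier cubeE
  have h : ∀ x : Fin n → Bool,
      (w * ∏ i, (1 + r * (if x i then (1 : ℝ) else -1))) * walsh S x =
      w * ∏ i, (fun (i : Fin n) (b : Bool) => (1 + r * (if b then (1 : ℝ) else -1)) *
        (if i ∈ S then (if b then (1 : ℝ) else -1) else 1)) i (x i) := by
    intro x
    unfold walsh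
    rw [Finset.prod_mul_distrib, Finset.prod_ite_mem, Finset.univ_inter, mul_assoc]
  rw [Finset.sum_congr rfl fun x _ => h x, ← Finset.mul_sum,
    ← Fintype.prod_sum (fun (i : Fin n) (b : Bool) => (1 + r * (if b then (1 : ℝ) else -1)) *
        (if i ∈ S then (if b then (1 : ℝ) else -1) else 1))]
  have h2 : ∀ i : Fin n, (∑ b : Bool, (1 + r * (if b then (1 : ℝ) else -1)) *
        (if i ∈ S then (if b then (1 : ℝ) else -1) else 1)) = 2 * (if i ∈ S then r else 1) := by
    intro i
    by_cases hi : i ∈ S <;> simp [hi] <;> ring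
  simp_rw [h2]
  rw [Finset.prod_mul_distrib, Finset.prod_ite_mem, Finset.univ_inter]
  simp
  field_simp

/-- Modification of the fractional heat kernel: for `0 < γ < 1` there exist
`t₀ ∈ (0,1)` and `c₀ > 0` depending only on `γ` such that for every `n` and
every `0 < t ≤ t₀` there is a function `K̃ : C_n → ℝ` with `K̃ ≥ 0`,
`E|K̃| ≤ e^{-c₀ t}`, and `K̃^(S) = e^{-t|S|^γ}` whenever `1 ≤ |S| ≤ 2`. -/
theorem stmt13 (γ : ℝ) (hγ0 : 0 < γ) (hγ1 : γ < 1) :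
    ∃ t₀ ∈ Set.Ioo (0 : ℝ) 1, ∃ c₀ : ℝ, 0 < c₀ ∧
      ∀ (n : ℕ) (t : ℝ), 0 < t → t ≤ t₀ →
        ∃ K : (Fin n → Bool) → ℝ,
          (∀ x, 0 ≤ K x) ∧
          cubeE (fun x => |K x|) ≤ Real.exp (-c₀ * t) ∧
          ∀ S : Finset (Fin n), 1 ≤ S.card → S.card ≤ 2 →
            cubeFourier K S = Real.exp (-t * (S.card : ℝ) ^ γ) := by
  have h2 : (2 : ℝ) ^ γ < 2 := by
    simpa using Real.rpow_lt_rpow_of_exponent_lt (x := 2) (by norm_num) hγ1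
  have h1 : 1 < (2 : ℝ) ^ γ := Real.one_lt_rpow (by norm_num) hγ0
  refine ⟨1 / 2, ⟨by norm_num, by norm_num⟩, 2 - 2 ^ γ, by linarith, ?_⟩
  intro n t ht _
  set w := Real.exp (-(2 - 2 ^ γ) * t) with hw
  set r := Real.exp (-(2 ^ γ - 1) * t) with hr
  have hr0 : 0 < r := Real.exp_pos _
  have hr1 : r ≤ 1 := by
    rw [hr, Real.exp_le_one_iff]
    nlinarith
  have hK : ∀ x : Fin n → Bool, 0 ≤ w * ∏ i, (1 + r * (if x i then (1 : ℝ) else -1)) := by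
    intro x
    refine mul_nonneg (Real.exp_pos _).le (Finset.prod_nonneg fun i _ => ?_)
    split_ifs <;> linarith
  refine ⟨fun x => w * ∏ i, (1 + r * (if x i then (1 : ℝ) else -1)), hK, ?_, ?_⟩
  · have h := riesz_fourier (n := n) w r ∅
    simp only [cubeFourier, walsh, Finset.prod_empty, mul_one, Finset.card_empty, pow_zero] at h
    simp_rw [abs_of_nonneg (hK _)]
    exact h.le
  · intro S hS1 hS2
    rw [riesz_fourier]
    have hc : S.card = 1 ∨ S.card = 2 := by omega
    rcases hc with hc | hc <;> rw [hc, hw, hr, ← Real.exp_nat_mul, ← Real.exp_add] <;>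
      congr 1 <;> push_cast
    · rw [Real.one_rpow]
      ring
    · ring
end
end

section
/- Let 0 < γ < 1. There exists a constant c_γ > 0, depending only on γ, such that for every n ∈ ℕ, every f : C_n → ℝ whose Fourier coefficients satisfy f̂(S) = 0 unless 1 ≤ |S| ≤ 2, every t ≥ 0, and every p with 1 ≤ p ≤ ∞, one has ‖e^{tΔ_γ} f‖_p ≤ e^{−c_γ t} ‖f‖_p. -/
open Finset MeasureTheory Real

noncomputable section

open ENNReal in
/-- The `L^p` norm on the Hamming cube for `p ∈ [1, ∞]`, including `p = ∞`
(where it is the sup norm). -/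
def pNormE {n : ℕ} (p : ℝ≥0∞) (f : (Fin n → Bool) → ℝ) : ℝ :=
  if p = ∞ then ⨆ x : Fin n → Bool, |f x|
  else (cubeE fun x => |f x| ^ p.toReal) ^ (1 / p.toReal)

theorem walsh_kernel {n : ℕ} (x y : Fin n → Bool) :
    ∑ S : Finset (Fin n), walsh S y * walsh S x = if y = x then (2 : ℝ) ^ n else 0 := by
  have h1 : ∑ S : Finset (Fin n), walsh S y * walsh S x
      = ∏ i : Fin n, (1 + (if y i then (1 : ℝ) else -1) * (if x i then (1 : ℝ) else -1)) := by
    rw [Finset.prod_one_add, Finset.powerset_univ]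
    refine Finset.sum_congr rfl fun S _ => ?_
    simp only [walsh, Finset.prod_mul_distrib]
  rw [h1]
  split_ifs with h
  · subst h
    rw [Finset.prod_congr rfl (g := fun _ => (2 : ℝ))]
    · simp
    · intro i _
      cases y i <;> norm_num
  · obtain ⟨i, hi⟩ := Function.ne_iff.mp h
    refine Finset.prod_eq_zero (Finset.mem_univ i) ?_
    cases hy : y i <;> cases hx : x i <;> simp_all

theorem walsh_inversion {n : ℕ} (f : (Fin n → Bool) → ℝ) (x : Fin n → Bool) :
    ∑ S : Finset (Fin n), cubeFourier f S * walsh S x = f x := by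
  have h1 : ∀ S : Finset (Fin n), cubeFourier f S * walsh S x
      = ∑ y : Fin n → Bool, f y / 2 ^ n * (walsh S y * walsh S x) := by
    intro S
    simp only [cubeFourier, cubeE]
    rw [Finset.sum_div, Finset.sum_mul]
    refine Finset.sum_congr rfl fun y _ => ?_
    ring
  rw [Finset.sum_congr rfl fun S _ => h1 S, Finset.sum_comm]
  simp_rw [← Finset.mul_sum, walsh_kernel]
  simp

theorem walsh_neg {n : ℕ} (S : Finset (Fin n)) (x : Fin n → Bool) :
    walsh S (fun i => !(x i)) = (-1) ^ S.card * walsh S x := by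
  simp only [walsh]
  rw [← Finset.prod_const, ← Finset.prod_mul_distrib]
  refine Finset.prod_congr rfl fun i _ => ?_
  by_cases h : x i = true <;> simp [h]

theorem heatFrac_eq {n : ℕ} (γ t : ℝ) (f : (Fin n → Bool) → ℝ)
    (hf : ∀ S : Finset (Fin n), ¬(1 ≤ S.card ∧ S.card ≤ 2) → cubeFourier f S = 0)
    (x : Fin n → Bool) :
    heatFrac γ t f x = (Real.exp (-t) + Real.exp (-t * 2 ^ γ)) / 2 * f x
      - (Real.exp (-t) - Real.exp (-t * 2 ^ γ)) / 2 * f (fun i => !(x i)) := by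
  conv_rhs => rw [← walsh_inversion f x, ← walsh_inversion f (fun i => !(x i))]
  rw [Finset.mul_sum, Finset.mul_sum, ← Finset.sum_sub_distrib]
  refine Finset.sum_congr rfl fun S _ => ?_
  rw [walsh_neg]
  by_cases h : 1 ≤ S.card ∧ S.card ≤ 2
  · have h2 : S.card = 1 ∨ S.card = 2 := by omega
    rcases h2 with h2 | h2
    · rw [h2]
      simp only [Nat.cast_one, Real.one_rpow]
      ring_nf
    · rw [h2]
      push_cast
      ring_nf
  · rw [hf S h]
    ring

def negEquiv (n : ℕ) : (Fin n → Bool) ≃ (Fin n → Bool) where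
  toFun x := fun i => !(x i)
  invFun x := fun i => !(x i)
  left_inv x := by ext i; simp
  right_inv x := by ext i; simp

theorem norm_bound {n : ℕ} (f g : (Fin n → Bool) → ℝ) (a b : ℝ) (ha : 0 ≤ a) (hb : 0 ≤ b)
    (hab : 0 < a + b) (hg : ∀ x, g x = a * f x - b * f (fun i => !(x i)))
    (p : ENNReal) (hp : 1 ≤ p) : pNormE p g ≤ (a + b) * pNormE p f := by
  have hpt : ∀ x, |g x| ≤ a * |f x| + b * |f (fun i => !(x i))| := by
    intro x
    rw [hg]
    refine (abs_sub _ _).trans (le_of_eq ?_)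
    rw [abs_mul, abs_mul, abs_of_nonneg ha, abs_of_nonneg hb]
  by_cases hpi : p = ⊤
  · simp only [pNormE, hpi, if_true]
    refine ciSup_le fun x => (hpt x).trans ?_
    have hs : ∀ y, |f y| ≤ ⨆ x : Fin n → Bool, |f x| := fun y =>
      le_ciSup (f := fun x => |f x|) (Set.finite_range _).bddAbove y
    rw [add_mul]
    exact add_le_add (mul_le_mul_of_nonneg_left (hs _) ha) (mul_le_mul_of_nonneg_left (hs _) hb)
  · simp only [pNormE, hpi, if_false]
    have hq : 1 ≤ p.toReal := by
      have := ENNReal.toReal_mono hpi hp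
      simpa using this
    set q := p.toReal
    have hq0 : 0 < q := by linarith
    have hE0 : ∀ h : (Fin n → Bool) → ℝ, 0 ≤ cubeE fun x => |h x| ^ q := by
      intro h
      unfold cubeE
      positivity
    have key : (cubeE fun x => |g x| ^ q) ≤ (a + b) ^ q * cubeE fun x => |f x| ^ q := by
      have hpt2 : ∀ x, |g x| ^ q ≤ (a + b) ^ q *
          (a / (a + b) * |f x| ^ q + b / (a + b) * |f (fun i => !(x i))| ^ q) := by
        intro x
        have hc := (convexOn_rpow hq).2 (Set.mem_Ici.mpr (abs_nonneg (f x)))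
          (Set.mem_Ici.mpr (abs_nonneg (f (fun i => !(x i)))))
          (show 0 ≤ a / (a + b) by positivity) (show 0 ≤ b / (a + b) by positivity)
          (by field_simp)
        simp only [smul_eq_mul] at hc
        calc |g x| ^ q ≤ (a * |f x| + b * |f (fun i => !(x i))|) ^ q :=
              Real.rpow_le_rpow (abs_nonneg _) (hpt x) hq0.le
          _ = ((a + b) * (a / (a + b) * |f x| + b / (a + b) * |f (fun i => !(x i))|)) ^ q := by
              congr 1
              field_simp
          _ = (a + b) ^ q * (a / (a + b) * |f x| + b / (a + b) * |f (fun i => !(x i))|) ^ q :=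
              Real.mul_rpow hab.le (by positivity)
          _ ≤ _ := mul_le_mul_of_nonneg_left hc (by positivity)
      have hneg : ∑ x : Fin n → Bool, |f (fun i => !(x i))| ^ q = ∑ x, |f x| ^ q :=
        Equiv.sum_comp (negEquiv n) fun x => |f x| ^ q
      unfold cubeE
      rw [← mul_div_assoc]
      refine div_le_div_of_nonneg_right ?_ (by positivity)
      refine (Finset.sum_le_sum fun x _ => hpt2 x).trans (le_of_eq ?_)
      rw [← Finset.mul_sum, Finset.sum_add_distrib, ← Finset.mul_sum, ← Finset.mul_sum, hneg,
        ← add_mul, ← add_div, div_self hab.ne', one_mul]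
    calc (cubeE fun x => |g x| ^ q) ^ (1 / q)
        ≤ ((a + b) ^ q * cubeE fun x => |f x| ^ q) ^ (1 / q) :=
          Real.rpow_le_rpow (hE0 g) key (by positivity)
      _ = _ := by
          rw [Real.mul_rpow (by positivity) (hE0 f), ← Real.rpow_mul hab.le,
            mul_one_div_cancel hq0.ne', Real.rpow_one]

open ENNReal in
/-- Spectral gap in every `L^p`, `1 ≤ p ≤ ∞`, for band-limited functions: for
`0 < γ < 1` there is `c_γ > 0` depending only on `γ` such that for every `n`,
every `f : C_n → ℝ` with `f̂(S) = 0` unless `1 ≤ |S| ≤ 2`, every `t ≥ 0`, and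
every `1 ≤ p ≤ ∞`, `‖e^{tΔ_γ} f‖_p ≤ e^{-c_γ t} ‖f‖_p`. -/
theorem stmt14 (γ : ℝ) (hγ0 : 0 < γ) (hγ1 : γ < 1) :
    ∃ c : ℝ, 0 < c ∧
      ∀ (n : ℕ) (f : (Fin n → Bool) → ℝ),
        (∀ S : Finset (Fin n), ¬(1 ≤ S.card ∧ S.card ≤ 2) → cubeFourier f S = 0) →
        ∀ t : ℝ, 0 ≤ t →
          ∀ p : ℝ≥0∞, 1 ≤ p → p ≤ ∞ →
            pNormE p (heatFrac γ t f) ≤ Real.exp (-c * t) * pNormE p f := by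
  refine ⟨1, one_pos, fun n f hf t ht p hp _ => ?_⟩
  have h2 : (1 : ℝ) ≤ 2 ^ γ := Real.one_le_rpow (by norm_num) hγ0.le
  have hle : Real.exp (-t * 2 ^ γ) ≤ Real.exp (-t) := Real.exp_le_exp.mpr (by nlinarith)
  have h := norm_bound f (heatFrac γ t f) ((Real.exp (-t) + Real.exp (-t * 2 ^ γ)) / 2)
    ((Real.exp (-t) - Real.exp (-t * 2 ^ γ)) / 2) (by positivity) (by linarith)
    (by linarith [Real.exp_pos (-t)]) (heatFrac_eq γ t f hf) p hp
  have he : (Real.exp (-t) + Real.exp (-t * 2 ^ γ)) / 2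
      + (Real.exp (-t) - Real.exp (-t * 2 ^ γ)) / 2 = Real.exp (-1 * t) := by
    rw [neg_one_mul]
    ring
  rwa [he] at h
end
end

section
/- There is no constant c > 0 such that for every n ∈ ℕ, every f : C_n → ℝ with E f = 0, and every t ≥ 0, one has ‖e^{tΔ} f‖₁ ≤ e^{−c t} ‖f‖₁. Equivalently: for every c > 0 there exist n ∈ ℕ, a function f : C_n → ℝ with E f = 0, and a time t > 0 such that ‖e^{tΔ} f‖₁ > e^{−c t} ‖f‖₁. -/
open Finset MeasureTheory Real

noncomputable section

/-- The product density `∏ (1 + a x_i)`. -/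
def pd (n : ℕ) (a : ℝ) (x : Fin n → Bool) : ℝ :=
  ∏ i : Fin n, (1 + a * (if x i then (1 : ℝ) else -1))

lemma exp_lt_one_aux {x : ℝ} (h : x < 0) : Real.exp x < 1 := by
  rw [← Real.exp_zero]
  exact Real.exp_lt_exp.2 h

lemma pd_sum (n : ℕ) (a : ℝ) (x : Fin n → Bool) :
    pd n a x = ∑ S : Finset (Fin n), a ^ S.card * walsh S x := by
  unfold pd walsh
  rw [Finset.prod_one_add]
  simp only [Finset.prod_mul_distrib, Finset.prod_const, Finset.powerset_univ]

lemma cubeE_prod (n : ℕ) (g : Fin n → Bool → ℝ) :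
    cubeE (fun x : Fin n → Bool => ∏ i, g i (x i)) = ∏ i, ((g i true + g i false) / 2) := by
  unfold cubeE
  have h := Finset.prod_univ_sum (fun _ : Fin n => (Finset.univ : Finset Bool)) g
  rw [Fintype.piFinset_univ] at h
  rw [← h, Finset.prod_div_distrib]
  simp

lemma pd_fourier (n : ℕ) (a : ℝ) (S : Finset (Fin n)) :
    cubeFourier (pd n a) S = a ^ S.card := by
  have h : (fun x : Fin n → Bool => pd n a x * walsh S x) = fun x => ∏ i,
      (fun (i : Fin n) (b : Bool) => (1 + a * (if b then (1 : ℝ) else -1)) *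
        (if i ∈ S then (if b then (1 : ℝ) else -1) else 1)) i (x i) := by
    funext x
    simp only [pd, walsh, Finset.prod_mul_distrib]
    congr 1
    rw [Finset.prod_ite_mem, Finset.univ_inter]
  unfold cubeFourier
  rw [h]
  refine (cubeE_prod n (fun (i : Fin n) (b : Bool) => (1 + a * (if b then (1 : ℝ) else -1)) *
        (if i ∈ S then (if b then (1 : ℝ) else -1) else 1))).trans ?_
  have : ∀ i : Fin n, ((1 + a * (if (true : Bool) then (1 : ℝ) else -1)) *
        (if i ∈ S then (if (true : Bool) then (1 : ℝ) else -1) else 1) +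
        (1 + a * (if (false : Bool) then (1 : ℝ) else -1)) *
        (if i ∈ S then (if (false : Bool) then (1 : ℝ) else -1) else 1)) / 2
        = if i ∈ S then a else 1 := by
    intro i
    by_cases hi : i ∈ S <;> simp [hi] <;> ring
  rw [Finset.prod_congr rfl (fun i _ => this i), Finset.prod_ite_mem, Finset.univ_inter]
  simp

lemma pd_E (n : ℕ) (a : ℝ) : cubeE (pd n a) = 1 := by
  have := pd_fourier n a ∅
  simpa [cubeFourier, walsh] using this

lemma cubeE_sub {n : ℕ} (f g : (Fin n → Bool) → ℝ) :
    cubeE (fun x => f x - g x) = cubeE f - cubeE g := by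
  simp [cubeE, Finset.sum_sub_distrib, sub_div]

lemma cubeE_const {n : ℕ} (k : ℝ) : cubeE (fun _ : Fin n → Bool => k) = k := by
  simp [cubeE]

lemma cubeE_mono {n : ℕ} {f g : (Fin n → Bool) → ℝ} (h : ∀ x, f x ≤ g x) :
    cubeE f ≤ cubeE g := by
  unfold cubeE
  gcongr with x
  exact h x

lemma pNorm_one {n : ℕ} (f : (Fin n → Bool) → ℝ) : pNorm 1 f = cubeE fun x => |f x| := by
  simp [pNorm]

lemma pd_nonneg (n : ℕ) {a : ℝ} (ha : |a| ≤ 1) (x : Fin n → Bool) : 0 ≤ pd n a x := by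
  unfold pd
  have := abs_le.1 ha
  apply Finset.prod_nonneg
  intro i _
  split_ifs <;> linarith

lemma heat_pd (n : ℕ) (t : ℝ) :
    heat1 t (fun x => pd n 1 x - pd n (-1) x) =
      fun x => pd n (Real.exp (-t)) x - pd n (-Real.exp (-t)) x := by
  funext x
  unfold heat1
  rw [pd_sum, pd_sum, ← Finset.sum_sub_distrib]
  apply Finset.sum_congr rfl
  intro S _
  have h : cubeFourier (fun x => pd n 1 x - pd n (-1) x) S = 1 - (-1) ^ S.card := by
    have h1 := pd_fourier n 1 S
    have h2 := pd_fourier n (-1) S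
    unfold cubeFourier at *
    simp only [sub_mul]
    rw [cubeE_sub, h1, h2, one_pow]
  have he : Real.exp (-t * (S.card : ℝ)) = Real.exp (-t) ^ S.card := by
    rw [← Real.exp_nat_mul, mul_comm]
  rw [h, he, neg_pow (Real.exp (-t))]
  ring

lemma pd_mul (n : ℕ) (a : ℝ) (x : Fin n → Bool) :
    pd n a x * pd n (-a) x = (1 - a ^ 2) ^ n := by
  unfold pd
  rw [← Finset.prod_mul_distrib]
  have : ∀ i : Fin n, (1 + a * (if x i then (1 : ℝ) else -1)) *
      (1 + -a * (if x i then (1 : ℝ) else -1)) = 1 - a ^ 2 := by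
    intro i
    split_ifs <;> ring
  rw [Finset.prod_congr rfl (fun i _ => this i)]
  simp

lemma abs_sub_lower {p q : ℝ} (hp : 0 ≤ p) (hq : 0 ≤ q) :
    p + q - 2 * √(p * q) ≤ |p - q| := by
  rcases le_total p q with h | h
  · have : p ≤ √(p * q) := Real.le_sqrt_of_sq_le (by nlinarith)
    rw [abs_of_nonpos (by linarith)]
    linarith
  · have : q ≤ √(p * q) := Real.le_sqrt_of_sq_le (by nlinarith)
    rw [abs_of_nonneg (by linarith)]
    linarith

/-- There is no uniform (dimension-free) `L¹` spectral gap for the heat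
semigroup: no `c > 0` satisfies `‖e^{tΔ} f‖₁ ≤ e^{-ct} ‖f‖₁` for every `n`,
every `f : C_n → ℝ` with `E f = 0`, and every `t ≥ 0`. -/
theorem stmt15 :
    ¬ ∃ c : ℝ, 0 < c ∧
        ∀ (n : ℕ) (f : (Fin n → Bool) → ℝ), cubeE f = 0 →
          ∀ t : ℝ, 0 ≤ t → pNorm 1 (heat1 t f) ≤ Real.exp (-c * t) * pNorm 1 f := by
  rintro ⟨c, hc, H⟩
  have key : ∀ n : ℕ, 2 - 2 * √((1 - Real.exp (-1) ^ 2) ^ n) ≤ Real.exp (-c * 1) * 2 := by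
    intro n
    have h := H n (fun x => pd n 1 x - pd n (-1) x)
      (by rw [cubeE_sub, pd_E, pd_E, sub_self]) 1 zero_le_one
    rw [heat_pd, pNorm_one, pNorm_one] at h
    have hr : |Real.exp (-1)| ≤ 1 := by
      rw [abs_of_pos (Real.exp_pos _)]
      exact Real.exp_le_one_iff.2 (by norm_num)
    have lo : 2 - 2 * √((1 - Real.exp (-1) ^ 2) ^ n) ≤
        cubeE fun x => |pd n (Real.exp (-1)) x - pd n (-Real.exp (-1)) x| := by
      have h1 := cubeE_mono (n := n) (fun x => abs_sub_lower (pd_nonneg n hr x)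
        (pd_nonneg n (a := -Real.exp (-1)) (by rwa [abs_neg]) x))
      simp only [pd_mul] at h1
      rw [cubeE_sub, cubeE_add, pd_E, pd_E, cubeE_const] at h1
      linarith
    have hi : (cubeE fun x => |pd n 1 x - pd n (-1) x|) ≤ 2 := by
      have h1 : (cubeE fun x => |pd n 1 x - pd n (-1) x|) ≤
          cubeE fun x => pd n 1 x + pd n (-1) x := by
        apply cubeE_mono
        intro x
        have a1 := pd_nonneg n (a := 1) (by simp) x
        have a2 := pd_nonneg n (a := -1) (by simp) x
        rw [abs_le]
        constructor <;> linarith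
      rw [cubeE_add, pd_E, pd_E] at h1
      linarith
    exact lo.trans (h.trans (mul_le_mul_of_nonneg_left hi (Real.exp_pos _).le))
  have hr0 := Real.exp_pos (-1)
  have hr1 : Real.exp (-1) < 1 := exp_lt_one_aux (by norm_num)
  have lim : Filter.Tendsto (fun n : ℕ => 2 - 2 * √((1 - Real.exp (-1) ^ 2) ^ n))
      Filter.atTop (nhds (2 - 2 * √0)) := by
    have := tendsto_pow_atTop_nhds_zero_of_lt_one (r := 1 - Real.exp (-1) ^ 2)
      (by nlinarith) (by nlinarith)
    exact ((this.sqrt).const_mul 2).const_sub 2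
  have h2 := le_of_tendsto' lim key
  have h3 : Real.exp (-c * 1) < 1 := exp_lt_one_aux (by linarith)
  rw [Real.sqrt_zero] at h2
  linarith
end
end

section
/- Fix n ∈ ℕ and let f : C_n → ℝ be the function defined by f(1,…,1) = 2^{n−1}, f(−1,…,−1) = −2^{n−1}, and f(x) = 0 at all other points of C_n. Then E f = 0, ‖f‖₁ = 1, and for every t > 0, ‖e^{tΔ} f‖₁ = 2^{−n} · Σ_{0 ≤ k ≤ n/2} C(n,k) · ((1 + e^{−t})^{n−k} (1 − e^{−t})^k − (1 − e^{−t})^{n−k} (1 + e^{−t})^k), where C(n,k) denotes the binomial coefficient and the sum ranges over integers k with 0 ≤ k ≤ n/2. -/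
open Finset MeasureTheory Real

noncomputable section

theorem aux_sum_bool (n : ℕ) (F : ℕ → ℝ) :
    ∑ x : Fin n → Bool, F (univ.filter (fun i => x i = false)).card
      = ∑ k ∈ range (n + 1), (n.choose k : ℝ) * F k := by
  have h1 : ∑ x : Fin n → Bool, F (univ.filter (fun i => x i = false)).card
      = ∑ S : Finset (Fin n), F S.card := by
    refine Finset.sum_bij' (fun x _ => univ.filter (fun i => x i = false))
      (fun S _ => fun i => decide (i ∉ S)) ?_ ?_ ?_ ?_ ?_
    · intros; simp
    · intros; simp
    · intro x _; funext i; simp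
    · intro S _; ext i; simp
    · intros; rfl
  rw [h1]
  have := Finset.sum_powerset_apply_card F (x := (univ : Finset (Fin n)))
  simpa using this

theorem aux_heat (n : ℕ) (r : ℝ) (x : Fin n → Bool) :
    ∑ S : Finset (Fin n), r ^ S.card * walsh S x
      = (1 + r) ^ (n - (univ.filter (fun i => x i = false)).card)
        * (1 - r) ^ (univ.filter (fun i => x i = false)).card := by
  have h := Finset.prod_one_add (f := fun i => r * (if x i then (1 : ℝ) else -1))
    (univ : Finset (Fin n))
  rw [Finset.powerset_univ] at h
  have h2 : ∀ S : Finset (Fin n), ∏ i ∈ S, (r * (if x i then (1 : ℝ) else -1))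
      = r ^ S.card * walsh S x := by
    intro S
    rw [Finset.prod_mul_distrib, Finset.prod_const]; rfl
  simp only [h2] at h
  rw [← h, ← Finset.prod_filter_mul_prod_filter_not univ (fun i => x i = false), mul_comm]
  congr 1
  · rw [Finset.prod_congr rfl (g := fun _ => 1 + r), Finset.prod_const]
    · congr 1
      have := Finset.card_filter_add_card_filter_not (s := (univ : Finset (Fin n)))
        (fun i => x i = false)
      simp only [Finset.card_univ, Fintype.card_fin] at this
      omega
    · intro i hi; simp at hi; simp [hi]
  · rw [Finset.prod_congr rfl (g := fun _ => 1 - r), Finset.prod_const]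
    intro i hi; simp at hi; simp [hi]; ring

theorem aux_sum_f (n : ℕ) (hn : 1 ≤ n) (a b : ℝ) (w : (Fin n → Bool) → ℝ) :
    ∑ x : Fin n → Bool, (if ∀ i, x i = true then a else if ∀ i, x i = false then b else 0) * w x
      = a * w (fun _ => true) + b * w (fun _ => false) := by
  have hne : (fun _ : Fin n => true) ≠ (fun _ => false) := by
    intro h; have := congrFun h ⟨0, hn⟩; simp at this
  have key : ∀ x : Fin n → Bool,
      (if ∀ i, x i = true then a else if ∀ i, x i = false then b else 0) * w x
      = (if x = (fun _ => true) then a * w x else 0)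
        + (if x = (fun _ => false) then b * w x else 0) := by
    intro x
    simp only [← funext_iff (f := x) (g := fun _ => true), ← funext_iff (f := x) (g := fun _ => false)]
    by_cases h1 : x = fun _ => true
    · have : x ≠ fun _ => false := by rw [h1]; exact hne
      simp [h1, hne]
    · by_cases h2 : x = fun _ => false
      · simp [h2, hne.symm]
      · simp [h1, h2]
  rw [Finset.sum_congr rfl (fun x _ => key x), Finset.sum_add_distrib]
  simp

theorem aux_fold (n : ℕ) (p q : ℝ) (hq : 0 ≤ q) (hpq : q ≤ p) :
    ∑ k ∈ range (n + 1), (n.choose k : ℝ) * |p ^ (n - k) * q ^ k - q ^ (n - k) * p ^ k|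
      = 2 * ∑ k ∈ (range (n + 1)).filter (fun k => 2 * k ≤ n),
        (n.choose k : ℝ) * (p ^ (n - k) * q ^ k - q ^ (n - k) * p ^ k) := by
  have hp : 0 ≤ p := hq.trans hpq
  have hpos : ∀ k, 2 * k ≤ n → 0 ≤ p ^ (n - k) * q ^ k - q ^ (n - k) * p ^ k := by
    intro k hk
    obtain ⟨m, hm⟩ : ∃ m, n - k = m + k := ⟨n - 2 * k, by omega⟩
    rw [hm, pow_add, pow_add]
    have h1 : q ^ m ≤ p ^ m := pow_le_pow_left₀ hq hpq m
    have h2 : 0 ≤ p ^ k * q ^ k := by positivity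
    nlinarith
  rw [Finset.sum_filter]
  set H : ℕ → ℝ := fun k => if 2 * k ≤ n then
    (n.choose k : ℝ) * (p ^ (n - k) * q ^ k - q ^ (n - k) * p ^ k) else 0 with hH
  have hr := Finset.sum_range_reflect H (n + 1)
  rw [two_mul]
  nth_rewrite 1 [← hr]
  rw [← Finset.sum_add_distrib]
  refine Finset.sum_congr rfl fun k hk => ?_
  have hk' : k ≤ n := by simp at hk; omega
  have e : n + 1 - 1 - k = n - k := by omega
  have e2 : n - (n - k) = k := by omega
  rw [e]
  simp only [hH, e2, Nat.choose_symm hk']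
  rcases lt_trichotomy (2 * k) n with h | h | h
  · rw [if_neg (by omega), if_pos (by omega), abs_of_nonneg (hpos k h.le)]; ring
  · have e3 : n - k = k := by omega
    rw [e3, mul_comm (q ^ k)]; simp
  · rw [if_pos (by omega), if_neg (by omega), abs_of_nonpos]
    · ring
    · have := hpos (n - k) (by omega)
      rw [e2] at this
      linarith

/-- The basic counterexample function: `f(1,…,1) = 2^{n-1}`,
`f(-1,…,-1) = -2^{n-1}`, `f = 0` elsewhere (here `true ↔ 1`, `false ↔ -1`).
Then `E f = 0`, `‖f‖₁ = 1`, and for every `t > 0`, `‖e^{tΔ} f‖₁` equals the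
explicit binomial sum
`2^{-n} Σ_{0 ≤ k ≤ n/2} C(n,k) ((1+e^{-t})^{n-k}(1-e^{-t})^k - (1-e^{-t})^{n-k}(1+e^{-t})^k)`. -/
theorem stmt16 (n : ℕ) (hn : 1 ≤ n) (f : (Fin n → Bool) → ℝ)
    (hf : f = fun x =>
      if ∀ i, x i = true then (2 : ℝ) ^ (n - 1)
      else if ∀ i, x i = false then -(2 : ℝ) ^ (n - 1)
      else 0) :
    cubeE f = 0 ∧ pNorm 1 f = 1 ∧
      ∀ t : ℝ, 0 < t →
        pNorm 1 (heat1 t f) =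
          (1 / 2 ^ n) *
            ∑ k ∈ (Finset.range (n + 1)).filter (fun k => 2 * k ≤ n),
              (n.choose k : ℝ) *
                ((1 + Real.exp (-t)) ^ (n - k) * (1 - Real.exp (-t)) ^ k -
                  (1 - Real.exp (-t)) ^ (n - k) * (1 + Real.exp (-t)) ^ k) := by
  have h2 : (2 : ℝ) ^ n = 2 * 2 ^ (n - 1) := by
    rw [← pow_succ']; congr 1; omega
  have hpp : (0 : ℝ) < 2 ^ (n - 1) := by positivity
  have hnorm : ∀ g : (Fin n → Bool) → ℝ, pNorm 1 g = (∑ x, |g x|) / 2 ^ n := by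
    intro g; simp [pNorm, cubeE]
  refine ⟨?_, ?_, ?_⟩
  · have := aux_sum_f n hn (2 ^ (n - 1)) (-2 ^ (n - 1)) (fun _ => 1)
    simp only [mul_one] at this
    simp only [cubeE, hf, this]; simp
  · rw [hnorm]
    have := aux_sum_f n hn (2 ^ (n - 1)) (2 ^ (n - 1)) (fun _ => 1)
    simp only [mul_one] at this
    have e : ∀ x, |f x| = (if ∀ i, x i = true then (2 : ℝ) ^ (n - 1)
        else if ∀ i, x i = false then 2 ^ (n - 1) else 0) := by
      intro x; rw [hf]; dsimp only
      split_ifs <;> simp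
    rw [Finset.sum_congr rfl (fun x _ => e x), this, h2]
    field_simp; ring
  · intro t ht
    set r := Real.exp (-t) with hr
    have hr0 : 0 < r := Real.exp_pos _
    have hr1 : r < 1 := by rw [hr, Real.exp_lt_one_iff]; linarith
    have hF : ∀ S : Finset (Fin n), cubeFourier f S = (1 - (-1) ^ S.card) / 2 := by
      intro S
      have := aux_sum_f n hn (2 ^ (n - 1)) (-2 ^ (n - 1)) (walsh S)
      simp only [cubeFourier, cubeE, hf, this]
      simp only [walsh, h2]
      simp
      field_simp
      ring
    have hheat : ∀ x, heat1 t f x = (1 / 2) *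
        ((1 + r) ^ (n - (univ.filter (fun i => x i = false)).card)
          * (1 - r) ^ (univ.filter (fun i => x i = false)).card
        - (1 - r) ^ (n - (univ.filter (fun i => x i = false)).card)
          * (1 + r) ^ (univ.filter (fun i => x i = false)).card) := by
      intro x
      have a1 := aux_heat n r x
      have a2 := aux_heat n (-r) x
      rw [sub_neg_eq_add, ← sub_eq_add_neg] at a2
      rw [← a1, ← a2, ← Finset.sum_sub_distrib, Finset.mul_sum]
      simp only [heat1, hF]
      refine Finset.sum_congr rfl fun S _ => ?_
      have : Real.exp (-t * (S.card : ℝ)) = r ^ S.card := by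
        rw [hr, ← Real.exp_nat_mul]; ring_nf
      rw [this, neg_pow r]; ring
    rw [hnorm]
    simp only [hheat, abs_mul]
    rw [← Finset.mul_sum, aux_sum_bool n (fun k => |(1 + r) ^ (n - k) * (1 - r) ^ k
        - (1 - r) ^ (n - k) * (1 + r) ^ k|),
      aux_fold n (1 + r) (1 - r) (by linarith) (by linarith),
      abs_of_pos (by norm_num : (0 : ℝ) < 1 / 2)]
    ring
end
end

section
/- Let 0 < ε ≤ 1/2. Then for all sufficiently large n (depending on ε), one has 2^{−n} · Σ_{0 ≤ k ≤ n/2} C(n,k) · ((1 + ε)^{n−k} (1 − ε)^k − (1 + ε)^k (1 − ε)^{n−k}) ≥ (1/2) · (1 − (1 − ε²)^{n/2}), where C(n,k) denotes the binomial coefficient and the sum ranges over integers k with 0 ≤ k ≤ n/2. -/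
open Finset Real

lemma aux17 (a b s : ℝ) (hb : 0 ≤ b) (hs : 0 ≤ s) (hbs : b ≤ s) (hab : a * b = s ^ 2)
    (n j k : ℕ) (h : j + k = n) (hjk : j ≤ k) : a ^ j * b ^ k ≤ s ^ n := by
  obtain ⟨m, rfl⟩ := Nat.exists_eq_add_of_le hjk
  have e1 : a ^ j * b ^ (j + m) = s ^ (2 * j) * b ^ m := by
    rw [pow_add, ← mul_assoc, ← mul_pow, hab, ← pow_mul]
  have e2 : s ^ n = s ^ (2 * j) * s ^ m := by
    rw [← pow_add]; congr 1; omega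
  rw [e1, e2]
  gcongr

/-- Binomial estimate: for `0 < ε ≤ 1/2` and all sufficiently large `n`,
`2^{-n} Σ_{0 ≤ k ≤ n/2} C(n,k) ((1+ε)^{n-k}(1-ε)^k - (1+ε)^k(1-ε)^{n-k})
  ≥ (1/2)(1 - (1-ε²)^{n/2})`. -/
theorem stmt17 (ε : ℝ) (hε0 : 0 < ε) (hε : ε ≤ 1 / 2) :
    ∃ N : ℕ, ∀ n : ℕ, N ≤ n →
      (1 / 2 ^ n) *
          ∑ k ∈ (Finset.range (n + 1)).filter (fun k => 2 * k ≤ n),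
            (n.choose k : ℝ) *
              ((1 + ε) ^ (n - k) * (1 - ε) ^ k - (1 + ε) ^ k * (1 - ε) ^ (n - k)) ≥
        (1 / 2) * (1 - (1 - ε ^ 2) ^ ((n : ℝ) / 2)) := by
  refine ⟨0, fun n _ => ?_⟩
  have h0 : 0 ≤ 1 - ε ^ 2 := by nlinarith
  obtain ⟨s, hsd⟩ : ∃ s, s = √(1 - ε ^ 2) := ⟨_, rfl⟩
  have hs : 0 ≤ s := hsd ▸ Real.sqrt_nonneg _
  have hss : s ^ 2 = 1 - ε ^ 2 := by rw [hsd, Real.sq_sqrt h0]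
  have hs1 : s ≤ 1 := by nlinarith
  have hbs : 1 - ε ≤ s := by rw [hsd]; apply Real.le_sqrt_of_sq_le; nlinarith
  have hr : (1 - ε ^ 2) ^ ((n : ℝ) / 2) = s ^ n := by
    rw [hsd, Real.sqrt_eq_rpow, ← Real.rpow_natCast _ n, ← Real.rpow_mul h0]
    congr 1; ring
  have key := aux17 (1 + ε) (1 - ε) s (by linarith) hs hbs (by rw [hss]; ring) n
  rw [hr, Finset.sum_filter]
  have hsn : s ^ n ≤ 1 := pow_le_one₀ hs hs1
  have hX : ∑ k ∈ Finset.range (n + 1), (n.choose k : ℝ) * ((1 + ε) ^ (n - k) * (1 - ε) ^ k)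
      = 2 ^ n := by
    have := add_pow (1 - ε) (1 + ε) n
    rw [show (1 - ε) + (1 + ε) = 2 by ring] at this
    rw [this]
    exact Finset.sum_congr rfl fun k _ => by ring
  have hC : ∑ k ∈ Finset.range (n + 1), (n.choose k : ℝ) = 2 ^ n := by
    exact_mod_cast Nat.sum_range_choose n
  have main : ∑ k ∈ Finset.range (n + 1),
      ((n.choose k : ℝ) * ((1 + ε) ^ (n - k) * (1 - ε) ^ k) - (n.choose k : ℝ) * s ^ n) ≤
      ∑ k ∈ Finset.range (n + 1), (if 2 * k ≤ n then (n.choose k : ℝ) *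
        ((1 + ε) ^ (n - k) * (1 - ε) ^ k - (1 + ε) ^ k * (1 - ε) ^ (n - k)) else 0) := by
    refine Finset.sum_le_sum fun k hk => ?_
    have hk' : k ≤ n := by simpa [Nat.lt_succ_iff] using hk
    have hc : (0 : ℝ) ≤ n.choose k := by positivity
    rw [← mul_sub]
    split_ifs with h
    · have := key k (n - k) (by omega) (by omega)
      gcongr
    · have := key (n - k) k (by omega) (by omega)
      exact mul_nonpos_of_nonneg_of_nonpos hc (by linarith)
  rw [Finset.sum_sub_distrib, ← Finset.sum_mul, hX, hC] at main
  have h2 : (0 : ℝ) < 2 ^ n := by positivity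
  calc (1 / 2) * (1 - s ^ n) ≤ 1 - s ^ n := by linarith
    _ = (1 / 2 ^ n) * (2 ^ n - 2 ^ n * s ^ n) := by field_simp
    _ ≤ _ := by gcongr
end

section
/- Let 0 < γ < 1. There is no constant c > 0 such that for every n ∈ ℕ, every f : C_n → ℝ with E f = 0, and every t ≥ 0, one has ‖e^{tΔ_γ} f‖₁ ≤ e^{−c t} ‖f‖₁. Equivalently: for every c > 0 there exist n ∈ ℕ, a function f : C_n → ℝ with E f = 0, and a time t > 0 such that ‖e^{tΔ_γ} f‖₁ > e^{−c t} ‖f‖₁. -/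
open Finset MeasureTheory Real

noncomputable section

def qq {n : ℕ} (p q : ℝ) (x : Fin n → Bool) : ℝ := ∏ i, if x i then p else q

def tc {n : ℕ} (x : Fin n → Bool) : ℕ := (univ.filter fun i => x i = true).card
def fc {n : ℕ} (x : Fin n → Bool) : ℕ := (univ.filter fun i => ¬ (x i = true)).card

def maj {n : ℕ} (x : Fin n → Bool) : ℝ :=
  if fc x < tc x then 1 else if tc x < fc x then -1 else 0

lemma qq_eq {n : ℕ} (p q : ℝ) (x : Fin n → Bool) : qq p q x = p ^ tc x * q ^ fc x := by
  unfold qq tc fc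
  rw [Finset.prod_ite, Finset.prod_const, Finset.prod_const]

lemma sum_qq {n : ℕ} (p q : ℝ) : ∑ x : Fin n → Bool, qq p q x = (p + q) ^ n := by
  unfold qq
  have := Finset.prod_univ_sum (fun _ : Fin n => (Finset.univ : Finset Bool))
    (fun _ b => if b then p else q)
  rw [Fintype.piFinset_univ] at this
  rw [← this]
  simp

lemma sum_walsh {n : ℕ} (r : ℝ) (x : Fin n → Bool) :
    ∑ S : Finset (Fin n), r ^ S.card * walsh S x = qq (1 + r) (1 - r) x := by
  have h := Finset.prod_one_add (f := fun i : Fin n => r * (if x i then (1:ℝ) else -1)) univ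
  rw [Finset.powerset_univ] at h
  have h2 : qq (1 + r) (1 - r) x = ∏ i : Fin n, (1 + r * (if x i then (1:ℝ) else -1)) := by
    unfold qq
    refine Finset.prod_congr rfl fun i _ => ?_
    split_ifs <;> ring
  rw [h2, h]
  refine Finset.sum_congr rfl fun S _ => ?_
  rw [Finset.prod_mul_distrib, Finset.prod_const]
  rfl

lemma maj_ge {n : ℕ} (a : ℝ) (ha : 1 ≤ a) (x : Fin n → Bool) :
    1 - 2 * qq a⁻¹ a x ≤ maj x := by
  have h0 : 0 < a := by linarith
  have hpos : 0 ≤ qq a⁻¹ a x := by rw [qq_eq]; positivity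
  have key : tc x ≤ fc x → 1 ≤ qq a⁻¹ a x := by
    intro h
    rw [qq_eq, inv_pow, inv_mul_eq_div, le_div_iff₀ (by positivity), one_mul]
    exact pow_le_pow_right₀ ha h
  unfold maj
  split_ifs with h1 h2
  · linarith
  · linarith [key (by omega)]
  · linarith [key (by omega)]

lemma maj_le {n : ℕ} (a : ℝ) (ha : 1 ≤ a) (x : Fin n → Bool) :
    1 - 2 * qq a a⁻¹ x ≤ - maj x := by
  have h0 : 0 < a := by linarith
  have hpos : 0 ≤ qq a a⁻¹ x := by rw [qq_eq]; positivity
  have key : fc x ≤ tc x → 1 ≤ qq a a⁻¹ x := by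
    intro h
    rw [qq_eq, inv_pow, ← div_eq_mul_inv, le_div_iff₀ (by positivity), one_mul]
    exact pow_le_pow_right₀ ha h
  unfold maj
  split_ifs with h1 h2
  · linarith [key (by omega)]
  · linarith
  · linarith [key (by omega)]

lemma maj_abs {n : ℕ} (x : Fin n → Bool) : |maj x| ≤ 1 := by
  unfold maj; split_ifs <;> simp

lemma qq_mul {n : ℕ} (p q p' q' : ℝ) (x : Fin n → Bool) :
    qq p q x * qq p' q' x = qq (p * p') (q * q') x := by
  simp only [qq_eq, mul_pow]; ring

def HH (n : ℕ) (r : ℝ) : ℝ :=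
  cubeE fun x : Fin n → Bool => maj x * ((qq (1 + r) (1 - r) x - qq (1 - r) (1 + r) x) / 2)

lemma HH_nonneg (n : ℕ) (r : ℝ) (h0 : 0 ≤ r) (h1 : r ≤ 1) : 0 ≤ HH n r := by
  unfold HH cubeE
  refine div_nonneg (Finset.sum_nonneg fun x _ => ?_) (by positivity)
  have key : ∀ a b : ℕ, b ≤ a → (1 - r) ^ a * (1 + r) ^ b ≤ (1 + r) ^ a * (1 - r) ^ b := by
    intro a b hab
    obtain ⟨k, rfl⟩ := Nat.exists_eq_add_of_le hab
    have h3 : (1 - r) ^ k ≤ (1 + r) ^ k := pow_le_pow_left₀ (by linarith) (by linarith) _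
    have h4 : 0 ≤ (1 - r) ^ b * (1 + r) ^ b :=
      mul_nonneg (pow_nonneg (by linarith) _) (pow_nonneg (by linarith) _)
    calc _ = ((1 - r) ^ b * (1 + r) ^ b) * (1 - r) ^ k := by ring
      _ ≤ ((1 - r) ^ b * (1 + r) ^ b) * (1 + r) ^ k := mul_le_mul_of_nonneg_left h3 h4
      _ = _ := by ring
  simp only [qq_eq]
  unfold maj
  split_ifs with h1 h2
  · linarith [key _ _ h1.le]
  · linarith [key _ _ h2.le]
  · simp

lemma HH_ge (n : ℕ) (r a : ℝ) (h0 : 0 ≤ r) (h1 : r ≤ 1) (ha : 1 ≤ a) :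
    1 - 2 * (((1 + r) * a⁻¹ + (1 - r) * a) / 2) ^ n ≤ HH n r := by
  unfold HH cubeE
  rw [le_div_iff₀ (by positivity)]
  have hq : ∀ x : Fin n → Bool, 0 ≤ qq (1 + r) (1 - r) x := fun x => by
    rw [qq_eq]; exact mul_nonneg (pow_nonneg (by linarith) _) (pow_nonneg (by linarith) _)
  have hq' : ∀ x : Fin n → Bool, 0 ≤ qq (1 - r) (1 + r) x := fun x => by
    rw [qq_eq]; exact mul_nonneg (pow_nonneg (by linarith) _) (pow_nonneg (by linarith) _)
  have hb : ∀ x ∈ (univ : Finset (Fin n → Bool)),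
      (qq (1 + r) (1 - r) x + qq (1 - r) (1 + r) x) / 2
        - qq ((1 + r) * a⁻¹) ((1 - r) * a) x - qq ((1 - r) * a) ((1 + r) * a⁻¹) x
      ≤ maj x * ((qq (1 + r) (1 - r) x - qq (1 - r) (1 + r) x) / 2) := by
    intro x _
    rw [← qq_mul, ← qq_mul]
    have e1 := mul_le_mul_of_nonneg_left (maj_ge a ha x) (hq x)
    have e2 := mul_le_mul_of_nonneg_left (maj_le a ha x) (hq' x)
    linarith
  refine le_trans (le_of_eq ?_) (Finset.sum_le_sum hb)
  rw [Finset.sum_sub_distrib, Finset.sum_sub_distrib, ← Finset.sum_div, Finset.sum_add_distrib]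
  simp only [sum_qq]
  rw [div_pow, add_comm ((1 - r) * a)]
  have : (1 + r + (1 - r)) = 2 := by ring
  rw [this]
  have : (1 - r + (1 + r)) = 2 := by ring
  rw [this]
  field_simp
  ring

def ff (n : ℕ) (x : Fin n → Bool) : ℝ :=
  2 ^ n / 2 * ((if x = (fun _ => true) then 1 else 0) - (if x = (fun _ => false) then 1 else 0))

lemma cubeE_ff (n : ℕ) (h : (Fin n → Bool) → ℝ) :
    cubeE (fun x => ff n x * h x) = (h (fun _ => true) - h (fun _ => false)) / 2 := by
  unfold cubeE ff
  have : ∀ x : Fin n → Bool, 2 ^ n / 2 * ((if x = (fun _ => true) then (1:ℝ) else 0) -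
      (if x = (fun _ => false) then 1 else 0)) * h x
      = 2 ^ n / 2 * ((if x = (fun _ => true) then h x else 0) -
      (if x = (fun _ => false) then h x else 0)) := by
    intro x; split_ifs <;> ring
  simp only [this]
  rw [← Finset.mul_sum, Finset.sum_sub_distrib]
  simp only [Finset.sum_ite_eq', Finset.sum_ite_eq, Finset.mem_univ, if_true]
  field_simp

lemma cubeE_ff0 (n : ℕ) : cubeE (ff n) = 0 := by
  have := cubeE_ff n (fun _ => 1)
  simpa using this

lemma fourier_ff (n : ℕ) (S : Finset (Fin n)) :
    cubeFourier (ff n) S = (1 - (-1) ^ S.card) / 2 := by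
  unfold cubeFourier
  rw [cubeE_ff]
  simp [walsh]

lemma norm_ff (n : ℕ) : pNorm 1 (ff n) ≤ 1 := by
  unfold pNorm
  simp only [Real.rpow_one, div_one]
  unfold cubeE
  rw [div_le_one (by positivity)]
  have : ∀ x ∈ (univ : Finset (Fin n → Bool)), |ff n x| ≤
      2 ^ n / 2 * ((if x = (fun _ => true) then 1 else 0) + (if x = (fun _ => false) then 1 else 0)) := by
    intro x _
    unfold ff
    rw [abs_mul, abs_of_nonneg (by positivity : (0:ℝ) ≤ 2 ^ n / 2)]
    refine mul_le_mul_of_nonneg_left ?_ (by positivity)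
    split_ifs <;> norm_num
  refine (Finset.sum_le_sum this).trans (le_of_eq ?_)
  rw [← Finset.mul_sum, Finset.sum_add_distrib]
  simp only [Finset.sum_ite_eq', Finset.sum_ite_eq, Finset.mem_univ, if_true]
  ring

def bb (n : ℕ) (S : Finset (Fin n)) : ℝ := cubeFourier (ff n) S * cubeFourier maj S

lemma bb_empty (n : ℕ) (S : Finset (Fin n)) (h : S.card = 0) : bb n S = 0 := by
  unfold bb; rw [fourier_ff, h]; simp

lemma pair_mult (n : ℕ) (w : Finset (Fin n) → ℝ) :
    cubeE (fun x => maj x * ∑ S : Finset (Fin n), w S * cubeFourier (ff n) S * walsh S x)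
      = ∑ S, bb n S * w S := by
  unfold bb
  conv_rhs => simp only [cubeFourier]
  unfold cubeE
  simp only [Finset.mul_sum]
  rw [Finset.sum_comm, Finset.sum_div]
  refine Finset.sum_congr rfl fun S _ => ?_
  have : cubeFourier (ff n) S = (∑ x, ff n x * walsh S x) / 2 ^ n := rfl
  rw [← this, mul_div_assoc', Finset.mul_sum, div_mul_eq_mul_div, Finset.sum_mul]
  congr 1
  refine Finset.sum_congr rfl fun x _ => ?_
  ring

lemma HH_eq (n : ℕ) (r : ℝ) : HH n r = ∑ S : Finset (Fin n), bb n S * r ^ S.card := by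
  rw [← pair_mult n (fun S => r ^ S.card)]
  unfold HH
  congr 1
  funext x
  congr 1
  have h1 := sum_walsh r x
  have h2 := sum_walsh (-r) x
  rw [← sub_eq_add_neg, sub_neg_eq_add] at h2
  rw [← h1, ← h2, ← Finset.sum_sub_distrib, Finset.sum_div]
  refine Finset.sum_congr rfl fun S _ => ?_
  rw [fourier_ff, neg_pow]
  ring

lemma pair_le (n : ℕ) (h : (Fin n → Bool) → ℝ) : cubeE (fun x => maj x * h x) ≤ pNorm 1 h := by
  unfold pNorm
  simp only [Real.rpow_one, div_one]
  unfold cubeE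
  gcongr with x
  calc maj x * h x ≤ |maj x * h x| := le_abs_self _
    _ = |maj x| * |h x| := abs_mul _ _
    _ ≤ 1 * |h x| := by gcongr; exact maj_abs x
    _ = _ := one_mul _

lemma step_t (γ c : ℝ) (hγ : 0 < γ) (hc : 0 < c) (n : ℕ)
    (H : ∀ t : ℝ, 0 ≤ t → ∑ S : Finset (Fin n), bb n S * Real.exp (-t * (S.card : ℝ) ^ γ)
      ≤ Real.exp (-c * t)) :
    ∑ S : Finset (Fin n), bb n S * (1 / (S.card : ℝ)) ^ γ ≤ 1 / c := by
  have base : ∀ k : ℝ, 0 < k → IntegrableOn (fun t => Real.exp (-k * t)) (Set.Ioi 0) ∧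
      ∫ t in Set.Ioi (0:ℝ), Real.exp (-k * t) = 1 / k := by
    intro k hk
    refine ⟨integrableOn_exp_mul_Ioi (by linarith) 0, ?_⟩
    rw [integral_exp_mul_Ioi (by linarith)]
    simp
  have term : ∀ S : Finset (Fin n),
      IntegrableOn (fun t => bb n S * Real.exp (-t * (S.card : ℝ) ^ γ)) (Set.Ioi 0) ∧
      ∫ t in Set.Ioi (0:ℝ), bb n S * Real.exp (-t * (S.card : ℝ) ^ γ)
        = bb n S * (1 / (S.card : ℝ)) ^ γ := by
    intro S
    rcases Nat.eq_zero_or_pos S.card with h | h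
    · rw [bb_empty n S h]; simp
    · have hk : (0:ℝ) < S.card := by exact_mod_cast h
      obtain ⟨i, e⟩ := base ((S.card : ℝ) ^ γ) (by positivity)
      have : ∀ t : ℝ, -t * (S.card : ℝ) ^ γ = -((S.card : ℝ) ^ γ) * t := fun t => by ring
      simp only [this]
      refine ⟨i.const_mul _, ?_⟩
      rw [integral_const_mul, e, Real.div_rpow (by norm_num) hk.le, Real.one_rpow]
  rw [← (base c hc).2, ← Finset.sum_congr rfl fun S _ => (term S).2,
    ← integral_finsetSum _ fun S _ => (term S).1]
  refine setIntegral_mono_on (integrable_finsetSum _ fun S _ => (term S).1) (base c hc).1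
    measurableSet_Ioi fun t ht => H t (le_of_lt ht)

lemma step_s (γ R : ℝ) (hγ : 0 < γ) (hR : 0 < R) (n : ℕ)
    (H : ∀ r : ℝ, Real.exp (-R) ≤ r → r ≤ 1 → 1 / 2 ≤ HH n r) :
    R ^ γ / (2 * γ) ≤ (∑ S : Finset (Fin n), bb n S * (1 / (S.card : ℝ)) ^ γ) * Real.Gamma γ := by
  have term : ∀ S : Finset (Fin n),
      IntegrableOn (fun s => bb n S * (s ^ (γ - 1) * Real.exp (-((S.card : ℝ) * s)))) (Set.Ioi 0) ∧
      ∫ s in Set.Ioi (0:ℝ), bb n S * (s ^ (γ - 1) * Real.exp (-((S.card : ℝ) * s)))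
        = bb n S * (1 / (S.card : ℝ)) ^ γ * Real.Gamma γ := by
    intro S
    rcases Nat.eq_zero_or_pos S.card with h | h
    · rw [bb_empty n S h]; simp
    · have hk : (0:ℝ) < S.card := by exact_mod_cast h
      have e := Real.integral_rpow_mul_exp_neg_mul_Ioi hγ hk
      constructor
      · refine Integrable.const_mul ?_ _
        by_contra hn
        rw [integral_undef hn] at e
        have : 0 < (1 / (S.card : ℝ)) ^ γ * Real.Gamma γ :=
          mul_pos (by positivity) (Real.Gamma_pos_of_pos hγ)
        linarith
      · rw [integral_const_mul, e]; ring
  have hsum : ∀ s : ℝ, ∑ S : Finset (Fin n), bb n S * (s ^ (γ - 1) * Real.exp (-((S.card : ℝ) * s)))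
      = s ^ (γ - 1) * HH n (Real.exp (-s)) := by
    intro s
    rw [HH_eq, Finset.mul_sum]
    refine Finset.sum_congr rfl fun S _ => ?_
    rw [← Real.exp_nat_mul, mul_neg]
    ring
  have hint := integrable_finsetSum (μ := volume.restrict (Set.Ioi (0:ℝ))) univ
    fun S _ => (term S).1
  simp only [hsum] at hint
  rw [Finset.sum_mul, ← Finset.sum_congr rfl fun S _ => (term S).2,
    ← integral_finsetSum _ fun S _ => (term S).1]
  simp only [hsum]
  have hpow : ∫ s in Set.Ioc (0:ℝ) R, s ^ (γ - 1) * (1 / 2) = R ^ γ / (2 * γ) := by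
    rw [integral_mul_const, ← intervalIntegral.integral_of_le hR.le,
      integral_rpow (Or.inl (by linarith))]
    simp only [sub_add_cancel]
    rw [Real.zero_rpow hγ.ne']
    field_simp
    ring
  rw [← hpow]
  have hI : IntegrableOn (fun s : ℝ => s ^ (γ - 1) * (1 / 2)) (Set.Ioc 0 R) := by
    have := (intervalIntegral.intervalIntegrable_rpow' (a := 0) (b := R) (r := γ - 1) (by linarith))
    rw [intervalIntegrable_iff_integrableOn_Ioc_of_le hR.le] at this
    exact Integrable.mul_const this _
  have hsub : Set.Ioc (0:ℝ) R ⊆ Set.Ioi 0 := fun s hs => hs.1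
  calc ∫ s in Set.Ioc (0:ℝ) R, s ^ (γ - 1) * (1 / 2)
      ≤ ∫ s in Set.Ioc (0:ℝ) R, s ^ (γ - 1) * HH n (Real.exp (-s)) := by
        refine setIntegral_mono_on hI (IntegrableOn.mono_set hint hsub) measurableSet_Ioc ?_
        intro s hs
        refine mul_le_mul_of_nonneg_left (H _ ?_ ?_) (Real.rpow_nonneg hs.1.le _)
        · exact Real.exp_le_exp.2 (by linarith [hs.2])
        · exact Real.exp_le_one_iff.2 (by linarith [hs.1])
    _ ≤ _ := by
        refine setIntegral_mono_set hint ?_ hsub.eventuallyLE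
        refine (ae_restrict_iff' measurableSet_Ioi).2 (Filter.Eventually.of_forall fun s hs => ?_)
        have hs' : 0 < s := hs
        exact mul_nonneg (Real.rpow_nonneg hs'.le _) (HH_nonneg n _ (Real.exp_pos _).le
          (Real.exp_le_one_iff.2 (by linarith)))

lemma exists_n (r₀ : ℝ) (h0 : 0 < r₀) (h1 : r₀ < 1) :
    ∃ n : ℕ, ∀ r : ℝ, r₀ ≤ r → r ≤ 1 → 1 / 2 ≤ HH n r := by
  -- a = 1 + r₀ / 2 is enough
  set a : ℝ := 1 + r₀ / 2 with ha
  set ρ : ℝ := ((1 + r₀) * a⁻¹ + (1 - r₀) * a) / 2 with hρ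
  have hapos : 0 < a := by positivity
  have hρ0 : 0 ≤ ρ := by
    have : 0 ≤ (1 - r₀) * a := mul_nonneg (by linarith) hapos.le
    positivity
  have hρ1 : ρ < 1 := by
    have : ρ = ((1 + r₀) + (1 - r₀) * a ^ 2) / (2 * a) := by rw [hρ]; field_simp
    rw [this, div_lt_one (by positivity), ha]
    nlinarith [mul_pos h0 h0, mul_pos (mul_pos h0 h0) h0]
  obtain ⟨n, hn⟩ := exists_pow_lt_of_lt_one (show (0:ℝ) < 1 / 4 by norm_num) hρ1
  refine ⟨n, fun r hr hr1 => ?_⟩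
  have hA : 1 ≤ a := by rw [ha]; linarith
  have h := HH_ge n r a (by linarith) hr1 hA
  have hle : ((1 + r) * a⁻¹ + (1 - r) * a) / 2 ≤ ρ := by
    rw [hρ]
    have : a⁻¹ ≤ a := (inv_le_one_of_one_le₀ hA).trans hA
    nlinarith [mul_nonneg (sub_nonneg.2 hr) (sub_nonneg.2 this)]
  have hnn : 0 ≤ ((1 + r) * a⁻¹ + (1 - r) * a) / 2 := by
    have : 0 ≤ (1 - r) * a := mul_nonneg (by linarith) hapos.le
    have : 0 ≤ (1 + r) * a⁻¹ := mul_nonneg (by linarith) (by positivity)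
    linarith
  have := pow_le_pow_left₀ hnn hle n
  linarith

/-- There is no uniform (dimension-free) `L¹` spectral gap for the fractional
heat semigroup, `0 < γ < 1`: no `c > 0` satisfies
`‖e^{tΔ_γ} f‖₁ ≤ e^{-ct} ‖f‖₁` for every `n`, every `f : C_n → ℝ` with
`E f = 0`, and every `t ≥ 0`. -/
theorem stmt18 (γ : ℝ) (hγ0 : 0 < γ) (hγ1 : γ < 1) :
    ¬ ∃ c : ℝ, 0 < c ∧
        ∀ (n : ℕ) (f : (Fin n → Bool) → ℝ), cubeE f = 0 →
          ∀ t : ℝ, 0 ≤ t → pNorm 1 (heatFrac γ t f) ≤ Real.exp (-c * t) * pNorm 1 f := by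
  rintro ⟨c, hc, H⟩
  have hG := Real.Gamma_pos_of_pos hγ0
  set M : ℝ := (2 * γ) * (Real.Gamma γ / c + 1) with hM
  have hMpos : 0 < M := by positivity
  set R : ℝ := M ^ (1 / γ) with hR
  have hRpos : 0 < R := by positivity
  have hRγ : R ^ γ = M := by
    rw [hR, ← Real.rpow_mul hMpos.le, one_div_mul_cancel hγ0.ne', Real.rpow_one]
  obtain ⟨n, hn⟩ := exists_n (Real.exp (-R)) (Real.exp_pos _)
    (Real.exp_lt_one_iff.2 (by linarith))
  have h1 := step_s γ R hγ0 hRpos n hn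
  have h2 := step_t γ c hγ0 hc n (fun t ht => by
    have e := H n (ff n) (cubeE_ff0 n) t ht
    have e2 := pair_le n (heatFrac γ t (ff n))
    have e3 := pair_mult n (fun S => Real.exp (-t * (S.card : ℝ) ^ γ))
    have e4 : cubeE (fun x => maj x * heatFrac γ t (ff n) x)
      = ∑ S : Finset (Fin n), bb n S * Real.exp (-t * (S.card : ℝ) ^ γ) := e3
    rw [← e4]
    have e5 := mul_le_mul_of_nonneg_left (norm_ff n) (Real.exp_pos (-c * t)).le
    linarith)
  have h3 := mul_le_mul_of_nonneg_right h2 hG.le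
  rw [hRγ, hM, mul_div_cancel_left₀ _ (by positivity)] at h1
  have : 1 / c * Real.Gamma γ = Real.Gamma γ / c := by ring
  linarith
end
end
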